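/- arXiv:1812.08742 — 3 statements merged into one kernel-verified Lean document; each statement's English description precedes it below -/
import Mathlib

section
/- Let F be a field other than the two-element field (i.e. F contains an element x with x ≠ 0 and x ≠ 1). For every n ≥ 1, the stabilization map Sp_{2n}(F) → Sp_{2n+2}(F), extending an automorphism by the identity on an added hyperbolic plane, induces an isomorphism H_d(Sp_{2n}(F); ℤ) → H_d(Sp_{2n+2}(F); ℤ) for all d ≤ n − 1, and a surjection for d = n. -/
/-! # Group homology via the inhomogeneous bar complex (trivial coefficients) -/

namespace GroupHomologyBar

variable (G : Type) [Group G] (A : Type) [AddCommGroup A]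

/-- Inhomogeneous `n`-chains of `G` with coefficients in `A`. -/
abbrev chains (n : ℕ) : Type := (Fin n → G) →₀ A

/-- The differential of the inhomogeneous bar complex with trivial `G`-action on the
coefficients, sending `[g₁|…|g_{n+1}] ⊗ a` to
`[g₂|…|g_{n+1}] ⊗ a + ∑ⱼ (-1)^{j+1} [g₁|…|gⱼg_{j+1}|…|g_{n+1}] ⊗ a`
(the last summand of the sum being `(-1)^{n+1} [g₁|…|g_n] ⊗ a`). -/
noncomputable def d (n : ℕ) : chains G A (n + 1) →ₗ[ℤ] chains G A n :=
  Finsupp.lsum ℤ fun g =>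
    (Finsupp.lsingle (Fin.tail g) : A →ₗ[ℤ] chains G A n)
      + ∑ j : Fin (n + 1),
          ((-1 : ℤ) ^ ((j : ℕ) + 1)) • Finsupp.lsingle (Fin.contractNth j (· * ·) g)

/-- The `n`-cycles. -/
noncomputable def cycles : (n : ℕ) → Submodule ℤ (chains G A n)
  | 0 => ⊤
  | (n + 1) => LinearMap.ker (d G A n)

/-- The `n`-boundaries, viewed as a submodule of the `n`-cycles. -/
noncomputable def boundaries (n : ℕ) : Submodule ℤ (cycles G A n) :=
  Submodule.comap (cycles G A n).subtype (LinearMap.range (d G A n))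

/-- The group homology `H_n(G; A)` of `G` with trivial coefficients in `A`. -/
abbrev Homology (n : ℕ) : Type := cycles G A n ⧸ boundaries G A n

variable {G}
variable {G' : Type} [Group G']

/-- The map on chains induced by a group homomorphism. -/
noncomputable def chainsMap (φ : G →* G') (n : ℕ) : chains G A n →ₗ[ℤ] chains G' A n :=
  Finsupp.lmapDomain A ℤ fun v => φ ∘ v

lemma chainsMap_single (φ : G →* G') {n : ℕ} (v : Fin n → G) (a : A) :
    chainsMap A φ n (Finsupp.single v a) = Finsupp.single (φ ∘ v) a := by
  simp [chainsMap, Finsupp.mapDomain_single]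

lemma d_single {n : ℕ} (g : Fin (n + 1) → G) (a : A) :
    d G A n (Finsupp.single g a)
      = Finsupp.single (Fin.tail g) a
        + ∑ j : Fin (n + 1),
            ((-1 : ℤ) ^ ((j : ℕ) + 1)) • Finsupp.single (Fin.contractNth j (· * ·) g) a := by
  simp [d, Finsupp.lsum_single]

lemma d_chainsMap (φ : G →* G') (n : ℕ) :
    (d G' A n).comp (chainsMap A φ (n + 1)) = (chainsMap A φ n).comp (d G A n) := by
  apply Finsupp.lhom_ext
  intro g a
  have hc : ∀ j : Fin (n + 1),
      φ ∘ Fin.contractNth j (· * ·) g = Fin.contractNth j (· * ·) (φ ∘ g) := by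
    intro j
    funext k
    simp only [Function.comp_apply, Fin.contractNth]
    split_ifs <;> simp
  simp only [LinearMap.comp_apply, chainsMap_single, d_single, map_add, map_sum, map_smul,
    chainsMap_single, Fin.comp_tail, hc]

lemma chainsMap_mem_cycles (φ : G →* G') (n : ℕ) :
    ∀ x ∈ cycles G A n, chainsMap A φ n x ∈ cycles G' A n := by
  intro x hx
  cases n with
  | zero => trivial
  | succ n =>
    simp only [cycles, LinearMap.mem_ker] at hx ⊢
    have := congrArg (fun L : chains G A (n + 1) →ₗ[ℤ] chains G' A n => L x) (d_chainsMap A φ n)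
    simp only [LinearMap.comp_apply] at this
    rw [this, hx, map_zero]

/-- The map on cycles induced by a group homomorphism. -/
noncomputable def cyclesMap (φ : G →* G') (n : ℕ) : cycles G A n →ₗ[ℤ] cycles G' A n :=
  (chainsMap A φ n).restrict (chainsMap_mem_cycles A φ n)

/-- The map `H_n(G; A) → H_n(G'; A)` on group homology induced by a group
homomorphism `φ : G →* G'`. -/
noncomputable def inducedMap (φ : G →* G') (n : ℕ) :
    Homology G A n →ₗ[ℤ] Homology G' A n :=
  Submodule.mapQ _ _ (cyclesMap A φ n) (by
    rintro ⟨x, hx⟩ hmem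
    simp only [boundaries, Submodule.mem_comap, Submodule.subtype_apply,
      LinearMap.mem_range] at hmem ⊢
    obtain ⟨y, hy⟩ := hmem
    refine ⟨chainsMap A φ (n + 1) y, ?_⟩
    have := congrArg (fun L : chains G A (n + 1) →ₗ[ℤ] chains G' A n => L y) (d_chainsMap A φ n)
    simp only [LinearMap.comp_apply] at this
    rw [this, hy]
    rfl)

end GroupHomologyBar

section Isometries

variable (F : Type) [Field F] {W : Type} [AddCommGroup W] [Module F W]

/-- The group of linear automorphisms of a vector space `V` preserving a
function `Q : V → F` (e.g. a quadratic form). -/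
def quadIsoms {V : Type} [AddCommGroup V] [Module F V] (Q : V → F) :
    Subgroup (V ≃ₗ[F] V) where
  carrier := {g | ∀ v, Q (g v) = Q v}
  one_mem' := fun _ => rfl
  mul_mem' := fun {a b} ha hb v => by
    rw [show (a * b) v = a (b v) from rfl, ha, hb]
  inv_mem' := fun {a} ha v => by
    rw [show (a⁻¹ : V ≃ₗ[F] V) v = a.symm v from rfl, ← ha (a.symm v), a.apply_symm_apply]

/-- The group of linear automorphisms of a vector space `V` preserving a
pairing `ω : V → V → F` (e.g. a bilinear or sesquilinear form). -/
def bilinIsoms {V : Type} [AddCommGroup V] [Module F V] (ω : V → V → F) :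
    Subgroup (V ≃ₗ[F] V) where
  carrier := {g | ∀ v w, ω (g v) (g w) = ω v w}
  one_mem' := fun _ _ => rfl
  mul_mem' := fun {a b} ha hb v w => by
    rw [show (a * b) v = a (b v) from rfl, show (a * b) w = a (b w) from rfl, ha, hb]
  inv_mem' := fun {a} ha v w => by
    rw [show (a⁻¹ : V ≃ₗ[F] V) v = a.symm v from rfl,
      show (a⁻¹ : V ≃ₗ[F] V) w = a.symm w from rfl,
      ← ha (a.symm v) (a.symm w), a.apply_symm_apply, a.apply_symm_apply]

/-- The "orthogonal sum" form `x ↦ ∑ i, q (x i)` on `W^n`. -/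
def sumForm (q : W → F) (n : ℕ) (x : Fin n → W) : F := ∑ i, q (x i)

/-- The "orthogonal sum" pairing `(x, y) ↦ ∑ i, β (x i) (y i)` on `W^n`. -/
def pairForm (β : W → W → F) (n : ℕ) (x y : Fin n → W) : F := ∑ i, β (x i) (y i)

/-- The linear equivalence `W^{n+1} ≃ W^n × W` splitting off the last coordinate. -/
def lastSplit (n : ℕ) : (Fin (n + 1) → W) ≃ₗ[F] (Fin n → W) × W where
  toLinearMap := (LinearMap.funLeft F W Fin.castSucc).prod (LinearMap.proj (Fin.last n))
  invFun p := Fin.snoc p.1 p.2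
  left_inv x := Fin.snoc_init_self x
  right_inv p := by
    refine Prod.ext (funext fun i => ?_) ?_
    · exact @Fin.snoc_castSucc n (fun _ => W) p.2 p.1 i
    · exact @Fin.snoc_last n (fun _ => W) p.2 p.1

lemma lastSplit_symm_apply (n : ℕ) (p : Fin n → W) (w : W) :
    (lastSplit F n).symm (p, w) = Fin.snoc p w := rfl

/-- Extension of an automorphism of `W^n` to `W^{n+1}` by the identity on the
added last coordinate. -/
def stabAut (n : ℕ) (g : (Fin n → W) ≃ₗ[F] (Fin n → W)) :
    (Fin (n + 1) → W) ≃ₗ[F] (Fin (n + 1) → W) :=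
  (lastSplit F n).trans ((g.prodCongr (LinearEquiv.refl F W)).trans (lastSplit F n).symm)

lemma stabAut_symm_apply (n : ℕ) (g : (Fin n → W) ≃ₗ[F] (Fin n → W))
    (p : Fin n → W) (w : W) :
    stabAut F n g ((lastSplit F n).symm (p, w)) = (lastSplit F n).symm (g p, w) := by
  simp [stabAut, LinearEquiv.trans_apply, LinearEquiv.apply_symm_apply, LinearEquiv.prodCongr_apply]

lemma sumForm_snoc (q : W → F) (n : ℕ) (p : Fin n → W) (w : W) :
    sumForm F q (n + 1) ((lastSplit F n).symm (p, w)) = sumForm F q n p + q w := by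
  simp [sumForm, lastSplit_symm_apply, Fin.sum_univ_castSucc, Fin.snoc_castSucc, Fin.snoc_last]

lemma pairForm_snoc (β : W → W → F) (n : ℕ) (p p' : Fin n → W) (w w' : W) :
    pairForm F β (n + 1) ((lastSplit F n).symm (p, w)) ((lastSplit F n).symm (p', w'))
      = pairForm F β n p p' + β w w' := by
  simp [pairForm, lastSplit_symm_apply, Fin.sum_univ_castSucc, Fin.snoc_castSucc, Fin.snoc_last]

/-- The stabilization homomorphism on the isometry group of the form `sumForm q n`,
extending an isometry by the identity on the added summand. -/
def quadStab (q : W → F) (n : ℕ) :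
    quadIsoms F (sumForm F q n) →* quadIsoms F (sumForm F q (n + 1)) where
  toFun g := ⟨stabAut F n g.1, by
    intro v
    obtain ⟨⟨p, w⟩, rfl⟩ : ∃ x, (lastSplit F n).symm x = v :=
      ⟨lastSplit F n v, (lastSplit F n).symm_apply_apply v⟩
    rw [stabAut_symm_apply, sumForm_snoc, sumForm_snoc, g.2 p]⟩
  map_one' := by
    refine Subtype.ext (LinearEquiv.ext fun v => ?_)
    show stabAut F n 1 v = v
    obtain ⟨⟨p, w⟩, rfl⟩ : ∃ x, (lastSplit F n).symm x = v :=
      ⟨lastSplit F n v, (lastSplit F n).symm_apply_apply v⟩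
    rw [stabAut_symm_apply]
    rfl
  map_mul' g h := by
    refine Subtype.ext (LinearEquiv.ext fun v => ?_)
    show stabAut F n (g.1 * h.1) v = stabAut F n g.1 (stabAut F n h.1 v)
    obtain ⟨⟨p, w⟩, rfl⟩ : ∃ x, (lastSplit F n).symm x = v :=
      ⟨lastSplit F n v, (lastSplit F n).symm_apply_apply v⟩
    rw [stabAut_symm_apply, stabAut_symm_apply, stabAut_symm_apply]
    rfl

/-- The stabilization homomorphism on the isometry group of the pairing `pairForm β n`,
extending an isometry by the identity on the added summand. -/
def bilinStab (β : W → W → F) (n : ℕ) :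
    bilinIsoms F (pairForm F β n) →* bilinIsoms F (pairForm F β (n + 1)) where
  toFun g := ⟨stabAut F n g.1, by
    intro v v'
    obtain ⟨⟨p, w⟩, rfl⟩ : ∃ x, (lastSplit F n).symm x = v :=
      ⟨lastSplit F n v, (lastSplit F n).symm_apply_apply v⟩
    obtain ⟨⟨p', w'⟩, rfl⟩ : ∃ x, (lastSplit F n).symm x = v' :=
      ⟨lastSplit F n v', (lastSplit F n).symm_apply_apply v'⟩
    rw [stabAut_symm_apply, stabAut_symm_apply, pairForm_snoc, pairForm_snoc, g.2 p p']⟩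
  map_one' := by
    refine Subtype.ext (LinearEquiv.ext fun v => ?_)
    show stabAut F n 1 v = v
    obtain ⟨⟨p, w⟩, rfl⟩ : ∃ x, (lastSplit F n).symm x = v :=
      ⟨lastSplit F n v, (lastSplit F n).symm_apply_apply v⟩
    rw [stabAut_symm_apply]
    rfl
  map_mul' g h := by
    refine Subtype.ext (LinearEquiv.ext fun v => ?_)
    show stabAut F n (g.1 * h.1) v = stabAut F n g.1 (stabAut F n h.1 v)
    obtain ⟨⟨p, w⟩, rfl⟩ : ∃ x, (lastSplit F n).symm x = v :=
      ⟨lastSplit F n v, (lastSplit F n).symm_apply_apply v⟩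
    rw [stabAut_symm_apply, stabAut_symm_apply, stabAut_symm_apply]
    rfl

end Isometries

/-- The standard alternating pairing on the hyperbolic plane `F² = F × F`. -/
def sympPair (F : Type) [Field F] (s t : F × F) : F := s.1 * t.2 - s.2 * t.1


namespace SpStab

/-! ## A list model of the bar construction of a group action -/

section Bar

variable {Γ X : Type} [Group Γ] [MulAction Γ X]

/-- Chains: free abelian group on pairs (list of group elements, terminal point). -/
abbrev Ch (Γ X : Type) : Type := (List Γ × X) →₀ ℤ

/-- basis element -/
noncomputable abbrev bs (l : List Γ) (x : X) : Ch Γ X := Finsupp.single (l, x) 1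

lemma lhom_eq {M : Type} [AddCommGroup M] (f g : Ch Γ X →ₗ[ℤ] M)
    (h : ∀ l x, f (bs l x) = g (bs l x)) : f = g := by
  apply Finsupp.lhom_ext
  intro p a
  obtain ⟨l, x⟩ := p
  have : (Finsupp.single (l, x) a : Ch Γ X) = a • bs l x := by simp [bs]
  rw [this, map_smul, map_smul, h]

lemma lin_mem {M : Type} [AddCommGroup M] (f : Ch Γ X →ₗ[ℤ] M) (N : Submodule ℤ M)
    (s : Set (List Γ × X)) (h : ∀ l x, (l, x) ∈ s → f (bs l x) ∈ N)
    {z : Ch Γ X} (hz : z ∈ Finsupp.supported ℤ ℤ s) : f z ∈ N := by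
  rw [Finsupp.supported_eq_span_single] at hz
  induction hz using Submodule.span_induction with
  | mem y hy =>
    obtain ⟨⟨l, x⟩, hp, rfl⟩ := hy
    exact h l x hp
  | zero => simp
  | add a b _ _ ha hb => rw [map_add]; exact N.add_mem ha hb
  | smul a b _ hb => rw [map_smul]; exact N.smul_mem _ hb

lemma lin_eq {M : Type} [AddCommGroup M] (f g : Ch Γ X →ₗ[ℤ] M)
    (s : Set (List Γ × X)) (h : ∀ l x, (l, x) ∈ s → f (bs l x) = g (bs l x))
    {z : Ch Γ X} (hz : z ∈ Finsupp.supported ℤ ℤ s) : f z = g z := by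
  have := lin_mem (f - g) ⊥ s (by
    intro l x hx
    simp [h l x hx, sub_eq_zero]) hz
  simpa [sub_eq_zero] using this

lemma bs_mem {s : Set (List Γ × X)} {l : List Γ} {x : X} (h : (l, x) ∈ s) :
    bs l x ∈ Finsupp.supported ℤ ℤ s := Finsupp.single_mem_supported ℤ _ h

/-- put in front a group element -/
noncomputable def pre (g : Γ) : Ch Γ X →ₗ[ℤ] Ch Γ X :=
  Finsupp.lmapDomain ℤ ℤ (fun p => (g :: p.1, p.2))

@[simp] lemma pre_bs (g : Γ) (l : List Γ) (x : X) : pre g (bs l x) = bs (g :: l) x := by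
  simp [pre, bs, Finsupp.mapDomain_single]

/-- the alternating sum of the non-initial faces -/
noncomputable def E : Γ → List Γ → X → Ch Γ X
  | g, [], x => bs [] (g • x)
  | g, h :: l, x => bs ((g * h) :: l) x - pre g (E h l x)

noncomputable def e (g : Γ) : Ch Γ X →ₗ[ℤ] Ch Γ X :=
  Finsupp.linearCombination ℤ (fun p => E g p.1 p.2)

@[simp] lemma e_bs (g : Γ) (l : List Γ) (x : X) : e g (bs l x) = E g l x := by
  simp [e, bs]

noncomputable def D0 : List Γ → X → Ch Γ X
  | [], _ => 0
  | g :: l, x => bs l x - E g l x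

/-- the bar differential -/
noncomputable def D : Ch Γ X →ₗ[ℤ] Ch Γ X :=
  Finsupp.linearCombination ℤ (fun p => D0 p.1 p.2)

@[simp] lemma D_bs (l : List Γ) (x : X) : D (bs l x) = D0 l x := by
  simp [D, bs]

lemma D_pre (g : Γ) (z : Ch Γ X) : D (pre g z) = z - e g z := by
  have : D ∘ₗ pre g = LinearMap.id - e (X := X) g := by
    apply lhom_eq
    intro l x
    simp only [LinearMap.comp_apply, pre_bs, D_bs, D0, LinearMap.sub_apply, LinearMap.id_apply,
      e_bs]
  exact congrArg (fun f => f z) this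

lemma e_pre (g h : Γ) (z : Ch Γ X) : e g (pre h z) = pre (g * h) z - pre g (e h z) := by
  have : e g ∘ₗ pre h = pre (g * h) - pre g ∘ₗ e (X := X) h := by
    apply lhom_eq
    intro l x
    simp only [LinearMap.comp_apply, pre_bs, LinearMap.sub_apply, e_bs, E]
  exact congrArg (fun f => f z) this

lemma e_E (g h : Γ) (l : List Γ) (x : X) : e g (E h l x) = E (g * h) l x := by
  induction l generalizing g h with
  | nil => simp [E, mul_smul]
  | cons k l ih =>
    simp only [E, map_sub, e_bs, e_pre, ih, mul_assoc]
    abel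

lemma e_e (g h : Γ) (z : Ch Γ X) : e g (e h z) = e (g * h) z := by
  have : e g ∘ₗ e h = e (X := X) (g * h) := by
    apply lhom_eq
    intro l x
    simp only [LinearMap.comp_apply, e_bs, e_E]
  exact congrArg (fun f => f z) this

lemma D_E (g : Γ) (l : List Γ) (x : X) : D (E g l x) = D0 l x := by
  cases l with
  | nil => simp [E, D0]
  | cons h l =>
    simp only [E, map_sub, D_bs, D0, D_pre, e_E]
    abel

lemma D_D (z : Ch Γ X) : D (D z) = 0 := by
  have : D ∘ₗ D = (0 : Ch Γ X →ₗ[ℤ] Ch Γ X) := by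
    apply lhom_eq
    intro l x
    cases l with
    | nil => simp [D0]
    | cons h l =>
      simp only [LinearMap.comp_apply, D_bs, D0, map_sub, D_E, sub_self, LinearMap.zero_apply]
  exact congrArg (fun f => f z) this

/-- initial point of a simplex -/
def base (l : List Γ) (x : X) : X := l.prod • x

@[simp] lemma base_nil (x : X) : base ([] : List Γ) x = x := by simp [base]
@[simp] lemma base_cons (g : Γ) (l : List Γ) (x : X) : base (g :: l) x = g • base l x := by
  simp [base, mul_smul]

lemma E_base (g : Γ) (l : List Γ) (x : X) :
    E g l x ∈ Finsupp.supported ℤ ℤ {p : List Γ × X | base p.1 p.2 = g • base l x} := by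
  induction l generalizing g with
  | nil => exact bs_mem (by simp)
  | cons h l ih =>
    refine Submodule.sub_mem _ (bs_mem (by simp [mul_smul])) ?_
    refine lin_mem (pre g) _ _ ?_ (ih h)
    intro l' x' hx
    rw [pre_bs]
    apply bs_mem
    simp only [Set.mem_setOf_eq, base_cons] at hx ⊢
    rw [hx]

/-- conjugated simplex -/
def phi0 (c : X → Γ) : List Γ → X → List Γ
  | [], _ => []
  | h :: l, x => (c (h • base l x) * h * (c (base l x))⁻¹) :: phi0 c l x

noncomputable def phi (c : X → Γ) : Ch Γ X →ₗ[ℤ] Ch Γ X :=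
  Finsupp.lmapDomain ℤ ℤ (fun p => (phi0 c p.1 p.2, c p.2 • p.2))

@[simp] lemma phi_bs (c : X → Γ) (l : List Γ) (x : X) :
    phi c (bs l x) = bs (phi0 c l x) (c x • x) := by
  simp [phi, bs, Finsupp.mapDomain_single]

noncomputable def H0 (c : X → Γ) : List Γ → X → Ch Γ X
  | [], x => bs [c x] x
  | h :: l, x => bs (c (h • base l x) :: h :: l) x
      - pre (c (h • base l x) * h * (c (base l x))⁻¹) (H0 c l x)

noncomputable def H (c : X → Γ) : Ch Γ X →ₗ[ℤ] Ch Γ X :=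
  Finsupp.linearCombination ℤ (fun p => H0 c p.1 p.2)

@[simp] lemma H_bs (c : X → Γ) (l : List Γ) (x : X) : H c (bs l x) = H0 c l x := by
  simp [H, bs]

lemma H_pre (c : X → Γ) (h : Γ) (b : X) {z : Ch Γ X}
    (hz : z ∈ Finsupp.supported ℤ ℤ {p : List Γ × X | base p.1 p.2 = b}) :
    H c (pre h z) = pre (c (h • b)) (pre h z) - pre (c (h • b) * h * (c b)⁻¹) (H c z) := by
  refine lin_eq (H c ∘ₗ pre h)
    (pre (c (h • b)) ∘ₗ pre h - pre (c (h • b) * h * (c b)⁻¹) ∘ₗ H c) _ ?_ hz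
  intro l x hx
  simp only [Set.mem_setOf_eq] at hx
  simp only [LinearMap.comp_apply, LinearMap.sub_apply, pre_bs, H_bs, H0, hx]

lemma key_htpy (c : X → Γ) (h : Γ) (l : List Γ) (x : X) :
    e (c (h • base l x) * h * (c (base l x))⁻¹) (H0 c l x) - H c (E h l x)
      = bs ((c (h • base l x) * h) :: l) x - pre (c (h • base l x)) (E h l x)
        - bs ((c (h • base l x) * h * (c (base l x))⁻¹) :: phi0 c l x) (c x • x) := by
  induction l generalizing h with
  | nil =>
    simp [H0, E, phi0, base, mul_smul]
    abel
  | cons k l ih =>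
    have hb := E_base k l x
    have h1 := H_pre c h _ hb
    have ih' := ih k
    simp only [E, H0, map_sub, h1, base_cons, e_pre, e_bs, pre_bs, phi0, H_bs] at ih' ⊢
    have h2 : ∀ a b : Ch Γ X, a - b = (a - b) := fun _ _ => rfl
    generalize hck : c (k • base l x) = ck at *
    generalize hcb : c (base l x) = cb at *
    generalize hch : c (h • k • base l x) = ch at *
    have hh : c ((h * k) • base l x) = ch := by rw [mul_smul, hch]
    simp only [hh]
    have e1 : ch * h * ck⁻¹ * ck = ch * h := by group
    have e2 : ch * h * ck⁻¹ * (ck * k * cb⁻¹) = ch * (h * k) * cb⁻¹ := by group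
    rw [e1, e2]
    have := congrArg (pre (ch * h * ck⁻¹)) ih'
    simp only [map_sub, pre_bs] at this
    rw [sub_eq_iff_eq_add] at this
    rw [this]
    simp only [mul_assoc]
    abel

lemma htpy (c : X → Γ) (z : Ch Γ X) : D (H c z) + H c (D z) = z - phi c z := by
  have : D ∘ₗ H c + H c ∘ₗ D = LinearMap.id - phi c := by
    apply lhom_eq
    intro l x
    cases l with
    | nil =>
      simp [H0, D0, E, phi0]
    | cons h l =>
      have := key_htpy c h l x
      simp only [LinearMap.add_apply, LinearMap.comp_apply, LinearMap.sub_apply,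
        LinearMap.id_apply, H_bs, D_bs, D0, H0, map_sub, phi_bs, phi0, D_pre, E]
      rw [sub_eq_iff_eq_add] at this
      rw [this]
      abel
  exact congrArg (fun f => f z) this

lemma D_phi (c : X → Γ) (z : Ch Γ X) : D (phi c z) = phi c (D z) := by
  have h1 : phi c z = z - (D (H c z) + H c (D z)) := by rw [htpy]; abel
  have h2 : phi c (D z) = D z - (D (H c (D z)) + H c (D (D z))) := by rw [htpy]; abel
  rw [h1, h2, map_sub, map_add, D_D, D_D, map_zero]; abel

/-- chains supported in a subgroup and a set of points -/
def U (K : Subgroup Γ) (Y : Set X) : Submodule ℤ (Ch Γ X) :=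
  Finsupp.supported ℤ ℤ {p | (∀ g ∈ p.1, g ∈ K) ∧ p.2 ∈ Y}

/-- same, with fixed degree -/
def A (K : Subgroup Γ) (Y : Set X) (q : ℕ) : Submodule ℤ (Ch Γ X) :=
  Finsupp.supported ℤ ℤ {p | p.1.length = q ∧ (∀ g ∈ p.1, g ∈ K) ∧ p.2 ∈ Y}

lemma A_le_U (K : Subgroup Γ) (Y : Set X) (q : ℕ) : A K Y q ≤ U K Y :=
  Finsupp.supported_mono (fun _ hp => hp.2)

lemma A_mono {K K' : Subgroup Γ} {Y Y' : Set X} (hK : K ≤ K') (hY : Y ⊆ Y') (q : ℕ) :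
    A K Y q ≤ A K' Y' q :=
  Finsupp.supported_mono (fun _ hp => ⟨hp.1, fun g hg => hK (hp.2.1 g hg), hY hp.2.2⟩)

lemma U_mono {K K' : Subgroup Γ} {Y Y' : Set X} (hK : K ≤ K') (hY : Y ⊆ Y') :
    U K Y ≤ U K' Y' :=
  Finsupp.supported_mono (fun _ hp => ⟨fun g hg => hK (hp.1 g hg), hY hp.2⟩)

lemma bs_mem_A {K : Subgroup Γ} {Y : Set X} {q : ℕ} {l : List Γ} {x : X}
    (h1 : l.length = q) (h2 : ∀ g ∈ l, g ∈ K) (h3 : x ∈ Y) : bs l x ∈ A K Y q :=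
  bs_mem ⟨h1, h2, h3⟩

lemma bs_mem_U {K : Subgroup Γ} {Y : Set X} {l : List Γ} {x : X}
    (h2 : ∀ g ∈ l, g ∈ K) (h3 : x ∈ Y) : bs l x ∈ U K Y :=
  bs_mem ⟨h2, h3⟩

lemma pre_mem_A {K : Subgroup Γ} {Y : Set X} {q : ℕ} {g : Γ} (hg : g ∈ K) {z : Ch Γ X}
    (hz : z ∈ A K Y q) : pre g z ∈ A K Y (q + 1) := by
  refine lin_mem (pre g) _ _ ?_ hz
  rintro l x ⟨h1, h2, h3⟩
  rw [pre_bs]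
  exact bs_mem_A (by simp_all) (by simpa using ⟨hg, h2⟩) h3

lemma pre_mem_U {K : Subgroup Γ} {Y : Set X} {g : Γ} (hg : g ∈ K) {z : Ch Γ X}
    (hz : z ∈ U K Y) : pre g z ∈ U K Y := by
  refine lin_mem (pre g) _ _ ?_ hz
  rintro l x ⟨h2, h3⟩
  rw [pre_bs]
  exact bs_mem_U (by simpa using ⟨hg, h2⟩) h3

/-- stability of a set under a subgroup -/
def Stable (K : Subgroup Γ) (Y : Set X) : Prop := ∀ g ∈ K, ∀ y ∈ Y, g • y ∈ Y

lemma E_mem_A {K : Subgroup Γ} {Y : Set X} (hs : Stable K Y) {g : Γ} (hg : g ∈ K)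
    (l : List Γ) (hl : ∀ g ∈ l, g ∈ K) {x : X} (hx : x ∈ Y) : E g l x ∈ A K Y l.length := by
  induction l generalizing g with
  | nil => exact bs_mem_A rfl (by simp) (hs g hg x hx)
  | cons h l ih =>
    have hh : h ∈ K := hl h (by simp)
    have hl' : ∀ g ∈ l, g ∈ K := fun g hg => hl g (by simp [hg])
    refine Submodule.sub_mem _ (bs_mem_A rfl ?_ hx) (pre_mem_A hg (ih hh hl'))
    intro k hk
    rcases List.mem_cons.1 hk with rfl | hk
    · exact K.mul_mem hg hh
    · exact hl' k hk

lemma D_mem_A {K : Subgroup Γ} {Y : Set X} (hs : Stable K Y) {q : ℕ} {z : Ch Γ X}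
    (hz : z ∈ A K Y (q + 1)) : D z ∈ A K Y q := by
  refine lin_mem D _ _ ?_ hz
  rintro l x ⟨h1, h2, h3⟩
  rw [D_bs]
  cases l with
  | nil => simp at h1
  | cons g l =>
    have hl' : ∀ g ∈ l, g ∈ K := fun g hg => h2 g (by simp [hg])
    have : l.length = q := by simpa using h1
    subst this
    exact Submodule.sub_mem _ (bs_mem_A rfl hl' h3) (E_mem_A hs (h2 g (by simp)) l hl' h3)

lemma D_mem_U {K : Subgroup Γ} {Y : Set X} (hs : Stable K Y) {z : Ch Γ X}
    (hz : z ∈ U K Y) : D z ∈ U K Y := by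
  refine lin_mem D _ _ ?_ hz
  rintro l x ⟨h2, h3⟩
  rw [D_bs]
  cases l with
  | nil => simp [D0]
  | cons g l =>
    have hl' : ∀ g ∈ l, g ∈ K := fun g hg => h2 g (by simp [hg])
    exact Submodule.sub_mem _ (bs_mem_U hl' h3)
      (A_le_U _ _ _ (E_mem_A hs (h2 g (by simp)) l hl' h3))

lemma D_zero {K : Subgroup Γ} {Y : Set X} {z : Ch Γ X} (hz : z ∈ A K Y 0) : D z = 0 := by
  have := lin_eq D 0 _ ?_ hz
  · simpa using this
  · rintro l x ⟨h1, -, -⟩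
    obtain rfl := List.length_eq_zero_iff.1 h1
    simp [D0]

lemma base_mem {K : Subgroup Γ} {Y : Set X} (hs : Stable K Y) (l : List Γ)
    (hl : ∀ g ∈ l, g ∈ K) {x : X} (hx : x ∈ Y) : base l x ∈ Y := by
  induction l with
  | nil => simpa
  | cons g l ih =>
    rw [base_cons]
    exact hs g (hl g (by simp)) _ (ih (fun g hg => hl g (by simp [hg])))

lemma H0_mem_A {K : Subgroup Γ} {Y : Set X} (hs : Stable K Y) {c : X → Γ}
    (hc : ∀ y ∈ Y, c y ∈ K) (l : List Γ) (hl : ∀ g ∈ l, g ∈ K) {x : X} (hx : x ∈ Y) :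
    H0 c l x ∈ A K Y (l.length + 1) := by
  induction l with
  | nil => exact bs_mem_A rfl (by simpa using hc x hx) hx
  | cons h l ih =>
    have hh : h ∈ K := hl h (by simp)
    have hl' : ∀ g ∈ l, g ∈ K := fun g hg => hl g (by simp [hg])
    have hb := base_mem hs l hl' hx
    have hb' := hs h hh _ hb
    refine Submodule.sub_mem _ (bs_mem_A rfl ?_ hx) (pre_mem_A ?_ (ih hl'))
    · intro k hk
      rcases List.mem_cons.1 hk with rfl | hk
      · exact hc _ hb'
      · exact hl k hk
    · exact K.mul_mem (K.mul_mem (hc _ hb') hh) (K.inv_mem (hc _ hb))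

lemma H_mem_A {K : Subgroup Γ} {Y : Set X} (hs : Stable K Y) {c : X → Γ}
    (hc : ∀ y ∈ Y, c y ∈ K) {q : ℕ} {z : Ch Γ X} (hz : z ∈ A K Y q) :
    H c z ∈ A K Y (q + 1) := by
  refine lin_mem (H c) _ _ ?_ hz
  rintro l x ⟨rfl, h2, h3⟩
  rw [H_bs]
  exact H0_mem_A hs hc l h2 h3

lemma H_mem_U {K : Subgroup Γ} {Y : Set X} (hs : Stable K Y) {c : X → Γ}
    (hc : ∀ y ∈ Y, c y ∈ K) {z : Ch Γ X} (hz : z ∈ U K Y) :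
    H c z ∈ U K Y := by
  refine lin_mem (H c) _ _ ?_ hz
  rintro l x ⟨h2, h3⟩
  rw [H_bs]
  exact A_le_U _ _ _ (H0_mem_A hs hc l h2 h3)

lemma phi0_length (c : X → Γ) (l : List Γ) (x : X) : (phi0 c l x).length = l.length := by
  induction l with
  | nil => rfl
  | cons h l ih => simp [phi0, ih]

lemma phi0_mem {K : Subgroup Γ} {Y : Set X} (hs : Stable K Y) {c : X → Γ}
    (hc : ∀ y ∈ Y, c y ∈ K) (l : List Γ) (hl : ∀ g ∈ l, g ∈ K) {x : X} (hx : x ∈ Y) :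
    ∀ g ∈ phi0 c l x, g ∈ K := by
  induction l with
  | nil => simp [phi0]
  | cons h l ih =>
    have hh : h ∈ K := hl h (by simp)
    have hl' : ∀ g ∈ l, g ∈ K := fun g hg => hl g (by simp [hg])
    have hb := base_mem hs l hl' hx
    have hb' := hs h hh _ hb
    intro g hg
    simp only [phi0, List.mem_cons] at hg
    rcases hg with rfl | hg
    · exact K.mul_mem (K.mul_mem (hc _ hb') hh) (K.inv_mem (hc _ hb))
    · exact ih hl' g hg

lemma phi_mem_U {K : Subgroup Γ} {Y : Set X} (hs : Stable K Y) {c : X → Γ}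
    (hc : ∀ y ∈ Y, c y ∈ K) {z : Ch Γ X} (hz : z ∈ U K Y) : phi c z ∈ U K Y := by
  refine lin_mem (phi c) _ _ ?_ hz
  rintro l x ⟨h2, h3⟩
  rw [phi_bs]
  exact bs_mem_U (phi0_mem hs hc l h2 h3) (hs _ (hc _ h3) _ h3)

/-- constant conjugation, on simplices commuting with the conjugating element -/
lemma phi0_const_comm (g : Γ) (l : List Γ) (hl : ∀ h ∈ l, g * h = h * g) (x : X) :
    phi0 (fun _ => g) l x = l := by
  induction l with
  | nil => rfl
  | cons h l ih =>
    simp only [phi0]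
    rw [ih (fun h hh => hl h (by simp [hh])), hl h (by simp)]
    simp

/-- constant conjugation -/
lemma phi0_const (g : Γ) (l : List Γ) (x : X) :
    phi0 (fun _ => g) l x = l.map (fun h => g * h * g⁻¹) := by
  induction l with
  | nil => rfl
  | cons h l ih => simp [phi0, ih]

end Bar
end SpStab

namespace SpStab

/-! ## Tuples as coefficients -/

section Tup
set_option linter.unusedSectionVars false

variable {Γ V : Type} [Group Γ] [MulAction Γ V]

/-- elementwise action on lists -/
instance listAct : MulAction Γ (List V) where
  smul g t := t.map (fun v => g • v)
  one_smul t := by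
    show t.map (fun v => (1 : Γ) • v) = t
    simp
  mul_smul g h t := by
    show t.map (fun v => (g * h) • v) = (t.map (fun v => h • v)).map (fun v => g • v)
    simp [mul_smul]

lemma smul_list_def (g : Γ) (t : List V) : g • t = t.map (fun v => g • v) := rfl
@[simp] lemma smul_list_nil (g : Γ) : g • ([] : List V) = [] := rfl
@[simp] lemma smul_list_cons (g : Γ) (y : V) (t : List V) : g • (y :: t) = g • y :: g • t := rfl
@[simp] lemma length_smul_list (g : Γ) (t : List V) : (g • t).length = t.length := by
  simp [smul_list_def]

/-- prepend a vector to the tuple -/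
noncomputable def consT (y : V) : Ch Γ (List V) →ₗ[ℤ] Ch Γ (List V) :=
  Finsupp.lmapDomain ℤ ℤ (fun p => (p.1, y :: p.2))

@[simp] lemma consT_bs (y : V) (l : List Γ) (t : List V) :
    consT y (bs l t) = bs l (y :: t) := by
  simp [consT, bs, Finsupp.mapDomain_single]

/-- alternating sum of the faces of a tuple, with a list of group elements attached -/
noncomputable def del : List Γ → List V → Ch Γ (List V)
  | _, [] => 0
  | l, y :: t => bs l t - consT y (del l t)

noncomputable def dl : Ch Γ (List V) →ₗ[ℤ] Ch Γ (List V) :=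
  Finsupp.linearCombination ℤ (fun p => del p.1 p.2)

@[simp] lemma dl_bs (l : List Γ) (t : List V) : dl (bs l t) = del l t := by
  simp [dl, bs]

lemma dl_consT (y : V) (z : Ch Γ (List V)) : dl (consT y z) = z - consT y (dl z) := by
  have : dl ∘ₗ consT y = LinearMap.id - consT (Γ := Γ) y ∘ₗ dl := by
    apply lhom_eq
    intro l t
    simp only [LinearMap.comp_apply, consT_bs, dl_bs, del, LinearMap.sub_apply, LinearMap.id_apply]
  exact congrArg (fun f => f z) this

lemma dl_del (l : List Γ) (t : List V) : dl (del l t) = 0 := by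
  induction t with
  | nil => simp [del]
  | cons y t ih => simp [del, dl_consT, ih]

lemma dl_dl (z : Ch Γ (List V)) : dl (dl z) = 0 := by
  have : dl ∘ₗ dl = (0 : Ch Γ (List V) →ₗ[ℤ] Ch Γ (List V)) := by
    apply lhom_eq
    intro l t
    simp [dl_del]
  exact congrArg (fun f => f z) this

lemma pre_consT (g : Γ) (y : V) (z : Ch Γ (List V)) : pre g (consT y z) = consT y (pre g z) := by
  have : pre g ∘ₗ consT y = consT y ∘ₗ pre (X := List V) g := by
    apply lhom_eq
    intro l t
    simp only [LinearMap.comp_apply, consT_bs, pre_bs]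
  exact congrArg (fun f => f z) this

lemma pre_del (g : Γ) (l : List Γ) (t : List V) : pre g (del l t) = del (g :: l) t := by
  induction t with
  | nil => simp [del]
  | cons y t ih => simp only [del, map_sub, pre_bs, pre_consT, ih]

lemma dl_pre (g : Γ) (z : Ch Γ (List V)) : dl (pre g z) = pre g (dl z) := by
  have : dl ∘ₗ pre g = pre g ∘ₗ dl (Γ := Γ) (V := V) := by
    apply lhom_eq
    intro l t
    simp only [LinearMap.comp_apply, pre_bs, dl_bs, pre_del]
  exact congrArg (fun f => f z) this

lemma del_supp (l : List Γ) (t : List V) :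
    del l t ∈ Finsupp.supported ℤ ℤ
      {p : List Γ × List V | p.1 = l ∧ p.2.length + 1 = t.length ∧ ∀ y ∈ p.2, y ∈ t} := by
  induction t with
  | nil => simp [del]
  | cons y t ih =>
    refine Submodule.sub_mem _ (bs_mem ⟨rfl, rfl, fun y hy => by simp [hy]⟩) ?_
    refine lin_mem (consT y) _ _ ?_ ih
    rintro l' t' ⟨rfl, h2, h3⟩
    rw [consT_bs]
    refine bs_mem ⟨rfl, by simpa using h2, ?_⟩
    intro w hw
    rcases List.mem_cons.1 hw with rfl | hw
    · simp
    · simp [h3 w hw]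

lemma e_del_nil (g : Γ) (t : List V) : e g (del [] t) = del [] (g • t) := by
  induction t with
  | nil => simp [del]
  | cons y t ih =>
    have : ∀ z ∈ Finsupp.supported ℤ ℤ {p : List Γ × List V | p.1 = []},
        e g (consT y z) = consT (g • y) (e g z) := by
      intro z hz
      refine lin_eq (e g ∘ₗ consT y) (consT (g • y) ∘ₗ e g) _ ?_ hz
      intro l t hl
      obtain rfl : l = [] := hl
      simp only [LinearMap.comp_apply, consT_bs, e_bs, E, smul_list_cons]
    simp only [del, map_sub, smul_list_cons, e_bs, E]
    rw [this, ih]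
    exact Finsupp.supported_mono (fun p hp => hp.1) (del_supp [] t)

lemma dl_E (g : Γ) (l : List Γ) (t : List V) : dl (E g l t) = e g (del l t) := by
  induction l generalizing g with
  | nil => simp only [E, dl_bs, e_del_nil]
  | cons h l ih =>
    simp only [E, map_sub, dl_bs, dl_pre, ih, ← pre_del, e_pre]

lemma dl_e (g : Γ) (z : Ch Γ (List V)) : dl (e g z) = e g (dl z) := by
  have : dl ∘ₗ e g = e g ∘ₗ dl (Γ := Γ) (V := V) := by
    apply lhom_eq
    intro l t
    simp only [LinearMap.comp_apply, e_bs, dl_bs, dl_E]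
  exact congrArg (fun f => f z) this

lemma D_supp_nil {z : Ch Γ (List V)}
    (hz : z ∈ Finsupp.supported ℤ ℤ {p : List Γ × List V | p.1 = []}) : D z = 0 := by
  have := lin_eq D 0 _ ?_ hz
  · simpa using this
  · rintro l x h1
    obtain rfl : l = [] := h1
    simp [D0]

lemma dl_D (z : Ch Γ (List V)) : dl (D z) = D (dl z) := by
  have : dl ∘ₗ D = D ∘ₗ dl (Γ := Γ) (V := V) := by
    apply lhom_eq
    intro l t
    cases l with
    | nil =>
      simp only [LinearMap.comp_apply, dl_bs, D_bs, D0, map_zero]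
      rw [D_supp_nil]
      exact Finsupp.supported_mono (fun p hp => hp.1) (del_supp [] t)
    | cons g l =>
      rw [LinearMap.comp_apply, LinearMap.comp_apply, ← pre_bs, D_pre, dl_pre, D_pre, map_sub, dl_e]
  exact congrArg (fun f => f z) this

/-- replace the tuple by a fixed one -/
noncomputable def iot (t : List V) : Ch Γ (List V) →ₗ[ℤ] Ch Γ (List V) :=
  Finsupp.lmapDomain ℤ ℤ (fun p => (p.1, t))

@[simp] lemma iot_bs (t : List V) (l : List Γ) (s : List V) :
    iot t (bs l s) = bs l t := by
  simp [iot, bs, Finsupp.mapDomain_single]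

lemma pre_iot (g : Γ) (t : List V) (z : Ch Γ (List V)) : pre g (iot t z) = iot t (pre g z) := by
  have : pre g ∘ₗ iot t = iot t ∘ₗ pre (X := List V) g := by
    apply lhom_eq
    intro l t
    simp only [LinearMap.comp_apply, iot_bs, pre_bs]
  exact congrArg (fun f => f z) this

lemma iot_E (t : List V) (g : Γ) (hg : g • t = t) (l : List Γ) (hl : ∀ h ∈ l, h • t = t)
    (s : List V) : iot t (E g l s) = E g l t := by
  induction l generalizing g with
  | nil => simp [E, hg]
  | cons h l ih =>
    simp only [E, map_sub, iot_bs, ← pre_iot]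
    rw [ih h (hl h (by simp)) (fun h hh => hl h (by simp [hh]))]

lemma D_iot (t : List V) {K : Subgroup Γ} (hK : ∀ h ∈ K, h • t = t) {Y : Set (List V)}
    {z : Ch Γ (List V)} (hz : z ∈ U K Y) : D (iot t z) = iot t (D z) := by
  refine lin_eq (D ∘ₗ iot t) (iot t ∘ₗ D) _ ?_ hz
  rintro l s ⟨h1, h2⟩
  cases l with
  | nil => simp [D0]
  | cons g l =>
    simp only [LinearMap.comp_apply, iot_bs, D_bs, D0, map_sub]
    rw [iot_E t g (hK _ (h1 _ (by simp))) l (fun h hh => hK _ (h1 _ (by simp [hh])))]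

lemma iot_mem_U (t : List V) {K : Subgroup Γ} {Y Y' : Set (List V)} (ht : t ∈ Y')
    {z : Ch Γ (List V)} (hz : z ∈ U K Y) : iot t z ∈ U K Y' := by
  refine lin_mem (iot t) _ _ ?_ hz
  rintro l s ⟨h1, h2⟩
  rw [iot_bs]
  exact bs_mem_U h1 ht

lemma iot_mem_A (t : List V) {K : Subgroup Γ} {Y Y' : Set (List V)} (ht : t ∈ Y') {q : ℕ}
    {z : Ch Γ (List V)} (hz : z ∈ A K Y q) : iot t z ∈ A K Y' q := by
  refine lin_mem (iot t) _ _ ?_ hz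
  rintro l s ⟨h0, h1, h2⟩
  rw [iot_bs]
  exact bs_mem_A h0 h1 ht

/-- tuples of length k with entries in Y -/
def Tup (Y : Set V) (k : ℕ) : Set (List V) := {t | t.length = k ∧ ∀ y ∈ t, y ∈ Y}

/-- all tuples with entries in Y -/
def All (Y : Set V) : Set (List V) := {t | ∀ y ∈ t, y ∈ Y}

lemma Tup_sub_All (Y : Set V) (k : ℕ) : Tup Y k ⊆ All Y := fun _ h => h.2

lemma All_mono {Y Y' : Set V} (h : Y ⊆ Y') : All Y ⊆ All Y' := fun _ ht y hy => h (ht y hy)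

lemma nil_mem_All (Y : Set V) : [] ∈ All Y := by intro y hy; simp at hy

lemma smul_all {Y : Set V} {K : Subgroup Γ} (h : ∀ g ∈ K, ∀ y ∈ Y, g • y ∈ Y) :
    Stable K (All Y) := by
  intro g hg t ht y hy
  rw [smul_list_def, List.mem_map] at hy
  obtain ⟨v, hv, rfl⟩ := hy
  exact h g hg v (ht v hv)

lemma smul_tup {Y : Set V} {K : Subgroup Γ} (h : ∀ g ∈ K, ∀ y ∈ Y, g • y ∈ Y) (k : ℕ) :
    Stable K (Tup Y k) := by
  intro g hg t ht
  exact ⟨by simp [ht.1], smul_all h g hg t ht.2⟩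

lemma stable_nil (K : Subgroup Γ) : Stable K ({[]} : Set (List V)) := by
  rintro g - t rfl
  rfl

lemma stable_univ {X : Type} [MulAction Γ X] (K : Subgroup Γ) : Stable K (Set.univ : Set X) := by
  intro g _ t _
  trivial

lemma smul_list_eq_self {g : Γ} {t : List V} (h : ∀ y ∈ t, g • y = y) : g • t = t := by
  rw [smul_list_def]
  conv_rhs => rw [← List.map_id t]
  exact List.map_congr_left (by simpa using h)

lemma smul_list_eq_self_iff {g : Γ} {t : List V} : g • t = t ↔ ∀ y ∈ t, g • y = y := by
  constructor
  · intro h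
    induction t with
    | nil => simp
    | cons a t ih =>
      rw [smul_list_cons, List.cons_eq_cons] at h
      intro y hy
      rcases List.mem_cons.1 hy with rfl | hy
      · exact h.1
      · exact ih h.2 y hy
  · exact smul_list_eq_self

lemma consT_mem_A {Y : Set V} {k : ℕ} {K : Subgroup Γ} {q : ℕ} {y : V} (hy : y ∈ Y)
    {z : Ch Γ (List V)} (hz : z ∈ A K (Tup Y k) q) : consT y z ∈ A K (Tup Y (k + 1)) q := by
  refine lin_mem (consT y) _ _ ?_ hz
  rintro l s ⟨h0, h1, h2⟩
  rw [consT_bs]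
  refine bs_mem_A h0 h1 ⟨by simp [h2.1], ?_⟩
  intro w hw
  rcases List.mem_cons.1 hw with rfl | hw
  · exact hy
  · exact h2.2 w hw

lemma consT_mem_U {Y : Set V} {K : Subgroup Γ} {y : V} (hy : y ∈ Y)
    {z : Ch Γ (List V)} (hz : z ∈ U K (All Y)) : consT y z ∈ U K (All Y) := by
  refine lin_mem (consT y) _ _ ?_ hz
  rintro l s ⟨h1, h2⟩
  rw [consT_bs]
  refine bs_mem_U h1 ?_
  intro w hw
  rcases List.mem_cons.1 hw with rfl | hw
  · exact hy
  · exact h2 w hw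

lemma dl_mem_A {Y : Set V} {k : ℕ} {K : Subgroup Γ} {q : ℕ}
    {z : Ch Γ (List V)} (hz : z ∈ A K (Tup Y (k + 1)) q) : dl z ∈ A K (Tup Y k) q := by
  refine lin_mem dl _ _ ?_ hz
  rintro l s ⟨h0, h1, h2⟩
  rw [dl_bs]
  refine Finsupp.supported_mono ?_ (del_supp l s)
  rintro p ⟨hp1, hp2, hp3⟩
  have hl : s.length = k + 1 := h2.1
  refine ⟨by rw [hp1]; exact h0, by rw [hp1]; exact h1, ?_, fun y hy => h2.2 y (hp3 y hy)⟩
  show p.2.length = k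
  omega

lemma dl_mem_U {Y : Set V} {K : Subgroup Γ}
    {z : Ch Γ (List V)} (hz : z ∈ U K (All Y)) : dl z ∈ U K (All Y) := by
  refine lin_mem dl _ _ ?_ hz
  rintro l s ⟨h1, h2⟩
  rw [dl_bs]
  refine Finsupp.supported_mono ?_ (del_supp l s)
  rintro p ⟨hp1, hp2, hp3⟩
  exact ⟨by rw [hp1]; exact h1, fun y hy => h2 y (hp3 y hy)⟩

lemma Tup_zero (Y : Set V) : Tup Y 0 = {[]} := by
  ext t
  constructor
  · rintro ⟨h, -⟩
    exact List.length_eq_zero_iff.1 h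
  · rintro rfl
    exact ⟨rfl, by simp⟩

lemma dl_nil {K : Subgroup Γ} {z : Ch Γ (List V)} (hz : z ∈ U K ({[]} : Set (List V))) :
    dl z = 0 := by
  have := lin_eq dl 0 _ ?_ hz
  · simpa using this
  · rintro l x ⟨-, h1⟩
    obtain rfl : x = [] := h1
    simp [del]

lemma dl_iot_single (y : V) {K : Subgroup Γ} {z : Ch Γ (List V)}
    (hz : z ∈ U K ({[]} : Set (List V))) : dl (iot [y] z) = z := by
  refine lin_eq (dl ∘ₗ iot [y]) LinearMap.id _ ?_ hz
  rintro l x ⟨-, h1⟩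
  obtain rfl : x = [] := h1
  simp [del]

lemma iot_nil {K : Subgroup Γ} {z : Ch Γ (List V)}
    (hz : z ∈ U K ({[]} : Set (List V))) : iot [] z = z := by
  refine lin_eq (iot []) LinearMap.id _ ?_ hz
  rintro l x ⟨-, h1⟩
  obtain rfl : x = [] := h1
  simp

lemma iot_iot (s t : List V) (z : Ch Γ (List V)) : iot s (iot t z) = iot s z := by
  have : iot s ∘ₗ iot t = iot (Γ := Γ) s := by
    apply lhom_eq
    intro l t
    simp
  exact congrArg (fun f => f z) this

/-- the four-term face formula; the last term is a combination of `iot (a :: b :: c :: s) z` -/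
lemma dl_iot3 (a b c : V) (t : List V) (z : Ch Γ (List V)) (N : Submodule ℤ (Ch Γ (List V)))
    (hN : ∀ s : List V, s.length + 1 = t.length → (∀ y ∈ s, y ∈ t) →
      iot (a :: b :: c :: s) z ∈ N)
    (hd : dl (iot (a :: b :: c :: t) z) ∈ N) :
    iot (b :: c :: t) z - iot (a :: c :: t) z + iot (a :: b :: t) z ∈ N := by
  -- consT of del
  have key : consT a (consT b (consT c (dl (iot t z)))) ∈ N := by
    have : ∀ t : List V, ∀ f : List V → List V, 
       (∀ s : List V, s.length + 1 = t.length → (∀ y ∈ s, y ∈ t) → iot (f s) z ∈ N) →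
       ∀ θ : Ch Γ (List V) →ₗ[ℤ] Ch Γ (List V), (∀ l s, θ (bs l s) = bs l (f s)) →
       θ (dl (iot t z)) ∈ N := by
      intro t
      induction t with
      | nil =>
        intro f hf θ hθ
        have : θ ∘ₗ dl ∘ₗ iot (Γ := Γ) (V := V) [] = 0 := by
          apply lhom_eq
          intro l s
          simp [del]
        have h0 : θ (dl (iot [] z)) = 0 := congrArg (fun f => f z) this
        rw [h0]; exact N.zero_mem
      | cons y t ih =>
        intro f hf θ hθ
        have h1 : θ ∘ₗ dl ∘ₗ iot (Γ := Γ) (y :: t)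
            = iot (f t) - (θ ∘ₗ consT y) ∘ₗ dl ∘ₗ iot t := by
          apply lhom_eq
          intro l s
          simp [del, hθ]
        have h2 : θ (dl (iot (y :: t) z)) = iot (f t) z - (θ ∘ₗ consT y) (dl (iot t z)) :=
          congrArg (fun f => f z) h1
        rw [h2]
        refine N.sub_mem (hf t rfl (fun y hy => by simp [hy])) ?_
        refine ih (fun s => f (y :: s)) ?_ _ ?_
        · intro s hs1 hs2
          refine hf (y :: s) (by simpa using hs1) ?_
          intro w hw
          rcases List.mem_cons.1 hw with rfl | hw
          · simp
          · simp [hs2 w hw]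
        · intro l s
          simp [hθ]
    exact this t (fun s => a :: b :: c :: s) hN (consT a ∘ₗ consT b ∘ₗ consT c) (by simp)
  have h1 : dl ∘ₗ iot (a :: b :: c :: t) = iot (b :: c :: t) - iot (a :: c :: t)
      + iot (a :: b :: t) - consT a ∘ₗ consT b ∘ₗ consT c ∘ₗ dl ∘ₗ iot (Γ := Γ) t := by
    apply lhom_eq
    intro l s
    simp [del]
    abel
  have h2 : dl (iot (a :: b :: c :: t) z) = iot (b :: c :: t) z - iot (a :: c :: t) z
      + iot (a :: b :: t) z - consT a (consT b (consT c (dl (iot t z)))) :=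
    congrArg (fun f => f z) h1
  rw [h2] at hd
  have := N.add_mem hd key
  simpa using this

lemma U_inter {X : Type} [MulAction Γ X] {K L : Subgroup Γ} {Y Y' : Set X} {z : Ch Γ X}
    (h1 : z ∈ U K Y) (h2 : z ∈ U L Y') : z ∈ U (K ⊓ L) (Y ∩ Y') := by
  intro p hp
  have a1 := h1 hp
  have a2 := h2 hp
  exact ⟨fun g hg => ⟨a1.1 g hg, a2.1 g hg⟩, a1.2, a2.2⟩

end Tup
end SpStab

namespace SpStab

/-! ## Symplectic linear algebra -/

/-- a symplectic space with its isometry group and a hyperbolic pair -/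
structure SD (F V : Type) [Field F] [AddCommGroup V] [Module F V] where
  ω : LinearMap.BilinForm F V
  alt : ω.IsAlt
  nd : ω.Nondegenerate
  G : Subgroup (V ≃ₗ[F] V)
  hG : ∀ g, g ∈ G ↔ ∀ v w, ω (g v) (g w) = ω v w
  e0 : V
  f0 : V
  hef : ω e0 f0 = 1

namespace SD

section LA
set_option linter.unusedSectionVars false

variable {F V : Type} [Field F] [AddCommGroup V] [Module F V] [FiniteDimensional F V]
variable (M : SD F V)

lemma skew (v w : V) : M.ω v w = - M.ω w v := by
  have := M.alt.neg_eq v w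
  rw [← this, neg_neg] 

@[simp] lemma self (v : V) : M.ω v v = 0 := M.alt v

lemma skew0 {v w : V} (h : M.ω v w = 0) : M.ω w v = 0 := by rw [skew, h, neg_zero]

def perp (T : Submodule F V) : Submodule F V := M.ω.orthogonal T

lemma mem_perp {T : Submodule F V} {v : V} : v ∈ M.perp T ↔ ∀ t ∈ T, M.ω t v = 0 := Iff.rfl

lemma perp_perp (T : Submodule F V) : M.perp (M.perp T) = T :=
  LinearMap.BilinForm.orthogonal_orthogonal M.nd M.alt.isRefl T

lemma finrank_perp (T : Submodule F V) :
    Module.finrank F (M.perp T) + Module.finrank F T = Module.finrank F V := by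
  have h1 := LinearMap.BilinForm.finrank_orthogonal M.nd T
  have h2 := Submodule.finrank_le T
  unfold perp
  omega

/-- separation -/
lemma sep {T : Submodule F V} {d : V} (hd : d ∉ T) : ∃ f ∈ M.perp T, M.ω d f = 1 := by
  rw [← M.perp_perp T, mem_perp] at hd
  push Not at hd
  obtain ⟨f, hf, h⟩ := hd
  have h' : M.ω d f ≠ 0 := fun h0 => h (M.skew0 h0)
  refine ⟨(M.ω d f)⁻¹ • f, Submodule.smul_mem _ _ hf, ?_⟩
  simp [h']

abbrev ln (y : V) : Submodule F V := Submodule.span F {y}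

def Big (T : Submodule F V) (j : ℕ) : Prop :=
  Module.finrank F ↥(T ⊓ M.perp T) + 2 * j ≤ Module.finrank F (M.perp T)

variable {M} in
lemma Big.mono {T : Submodule F V} {i j : ℕ} (h : M.Big T j) (hij : i ≤ j) : M.Big T i := by
  unfold Big at *
  omega

lemma big_bot {j : ℕ} (h : 2 * j ≤ Module.finrank F V) : M.Big ⊥ j := by
  have := M.finrank_perp ⊥
  unfold Big
  have h2 : (⊥ : Submodule F V) ⊓ M.perp ⊥ = ⊥ := bot_inf_eq _
  rw [h2]
  simp only [finrank_bot] at *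
  omega

lemma finrank_sup_ln (T : Submodule F V) (y : V) :
    Module.finrank F ↥(T ⊔ ln (F := F) y) ≤ Module.finrank F T + 1 := by
  have h1 := Submodule.finrank_add_le_finrank_add_finrank T (ln (F := F) y)
  have h2 : Module.finrank F (ln (F := F) y) ≤ 1 := by
    have := finrank_span_le_card (R := F) ({y} : Set V)
    simpa using this
  omega

lemma perp_anti {T T' : Submodule F V} (h : T ≤ T') : M.perp T' ≤ M.perp T :=
  LinearMap.BilinForm.orthogonal_le h

lemma L1 {T : Submodule F V} {j : ℕ} (h : M.Big T (j + 1)) (y : V) :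
    M.Big (T ⊔ ln y) j := by
  unfold Big at *
  have h1 := finrank_sup_ln T y
  have h2 := M.finrank_perp T
  have h3 := M.finrank_perp (T ⊔ ln y)
  set R := (T ⊔ ln y) ⊓ M.perp (T ⊔ ln y) with hR
  have h4 := Submodule.finrank_sup_add_finrank_inf_eq R T
  have h5 : Module.finrank F ↥(R ⊔ T) ≤ Module.finrank F ↥(T ⊔ ln (F := F) y) :=
    Submodule.finrank_mono (sup_le inf_le_left le_sup_left)
  have h6 : Module.finrank F ↥(R ⊓ T) ≤ Module.finrank F ↥(T ⊓ M.perp T) := by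
    refine Submodule.finrank_mono (le_inf inf_le_right ?_)
    exact le_trans (le_trans inf_le_left inf_le_right) (M.perp_anti le_sup_left)
  omega

lemma L2 {T : Submodule F V} {j : ℕ} (h : M.Big T j) {r y : V} (hr : r ∈ T)
    (hr' : r ∈ M.perp T) (hy : M.ω r y ≠ 0) : M.Big (T ⊔ ln y) j := by
  unfold Big at *
  have h1 := finrank_sup_ln T y
  have h2 := M.finrank_perp T
  have h3 := M.finrank_perp (T ⊔ ln y)
  have h4 : Module.finrank F ↥((T ⊔ ln y) ⊓ M.perp (T ⊔ ln y))
      < Module.finrank F ↥(T ⊓ M.perp T) := by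
    apply Submodule.finrank_lt_finrank_of_lt
    refine lt_of_le_of_ne ?_ ?_
    · rintro x ⟨hx1, hx2⟩
      refine ⟨?_, M.perp_anti le_sup_left hx2⟩
      obtain ⟨t, ht, z, hz, rfl⟩ := Submodule.mem_sup.1 hx1
      obtain ⟨c, rfl⟩ := Submodule.mem_span_singleton.1 hz
      have := hx2 r (Submodule.mem_sup_left hr)
      have h0 : M.ω r t = 0 := M.skew0 (hr' t ht)
      change M.ω r (t + c • y) = 0 at this
      simp only [map_add, h0, map_smul, smul_eq_mul, zero_add, mul_eq_zero, hy, or_false] at this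
      simpa [this] using ht
    · intro heq
      have : r ∈ (T ⊔ ln y) ⊓ M.perp (T ⊔ ln y) := heq ▸ ⟨hr, hr'⟩
      exact hy (M.skew0 (this.2 y (Submodule.mem_sup_right (Submodule.mem_span_singleton_self y))))
  omega

def spn (S : Submodule F V) (t : List V) : Submodule F V := S ⊔ Submodule.span F {y | y ∈ t}

lemma le_spn (S : Submodule F V) (t : List V) : S ≤ spn S t := le_sup_left

lemma mem_spn {S : Submodule F V} {t : List V} {y : V} (hy : y ∈ t) : y ∈ spn S t :=
  Submodule.mem_sup_right (Submodule.subset_span hy)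

lemma spn_le {S T : Submodule F V} {t : List V} (h1 : S ≤ T) (h2 : ∀ y ∈ t, y ∈ T) :
    spn S t ≤ T := sup_le h1 (Submodule.span_le.2 h2)

lemma ln_mem (y : V) : y ∈ ln (F := F) y := Submodule.mem_span_singleton_self y

lemma ln_le {T : Submodule F V} {y : V} (h : y ∈ T) : ln y ≤ T := by
  simpa [Submodule.span_le] using h

lemma spn_cons (S : Submodule F V) (y : V) (t : List V) : spn S (y :: t) = spn (S ⊔ ln y) t := by
  apply le_antisymm
  · refine spn_le (le_trans le_sup_left (le_spn _ _)) ?_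
    intro w hw
    rcases List.mem_cons.1 hw with rfl | hw
    · exact le_spn _ _ (Submodule.mem_sup_right (ln_mem _))
    · exact mem_spn hw
  · refine spn_le (sup_le (le_spn _ _) (ln_le (mem_spn (by simp)))) ?_
    intro w hw
    exact mem_spn (by simp [hw])

lemma spn_nil (S : Submodule F V) : spn S [] = S :=
  le_antisymm (spn_le le_rfl (by simp)) (le_spn _ _)

lemma L1' {T : Submodule F V} {j : ℕ} (t : List V) (h : M.Big T (j + t.length)) :
    M.Big (spn T t) j := by
  induction t generalizing T with
  | nil => simpa [spn_nil] using h
  | cons y t ih =>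
    rw [spn_cons]
    exact ih (M.L1 (by simpa [add_assoc] using h) y)

lemma big_of {T T' : Submodule F V} {j m : ℕ} (h : M.Big T m) (t : List V)
    (ht : j + t.length ≤ m) (h1 : T ≤ T') (h2 : ∀ y ∈ t, y ∈ T') (h3 : T' ≤ spn T t) :
    M.Big T' j := by
  have : T' = spn T t := le_antisymm h3 (spn_le h1 h2)
  rw [this]
  exact M.L1' t (h.mono ht)

lemma L3 {T : Submodule F V} (h : M.Big T 1) :
    ∃ e ∈ M.perp T, ∃ f ∈ M.perp T, M.ω e f = 1 := by
  have : ¬ M.perp T ≤ T := by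
    intro hle
    unfold Big at h
    rw [inf_eq_right.2 hle] at h
    omega
  obtain ⟨e, he, heT⟩ := Set.not_subset.1 this
  obtain ⟨f, hf, hef⟩ := M.sep heT
  exact ⟨e, he, f, hf, hef⟩

/-! ### Isometries -/

lemma inj_of_isom (φ : V →ₗ[F] V) (h : ∀ v w, M.ω (φ v) (φ w) = M.ω v w) :
    Function.Injective φ := by
  rw [← LinearMap.ker_eq_bot, LinearMap.ker_eq_bot']
  intro v hv
  by_contra hne
  have : v ∉ (⊥ : Submodule F V) := by simpa using hne
  obtain ⟨f, -, hf⟩ := M.sep this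
  rw [← h, hv] at hf
  simp at hf

noncomputable def mkG (φ : V →ₗ[F] V) (h : ∀ v w, M.ω (φ v) (φ w) = M.ω v w) : M.G :=
  ⟨LinearEquiv.ofInjectiveEndo φ (M.inj_of_isom φ h), (M.hG _).2 (by simpa using h)⟩

@[simp] lemma mkG_smul (φ : V →ₗ[F] V) (h : ∀ v w, M.ω (φ v) (φ w) = M.ω v w) (v : V) :
    M.mkG φ h • v = φ v := rfl

lemma smul_def (g : M.G) (v : V) : g • v = (g : V ≃ₗ[F] V) v := rfl

@[simp] lemma isom (g : M.G) (v w : V) : M.ω (g • v) (g • w) = M.ω v w := (M.hG _).1 g.2 v w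

lemma gext {g h : M.G} (H : ∀ v : V, g • v = h • v) : g = h :=
  Subtype.ext (LinearEquiv.ext H)

lemma gsmul_add (g : M.G) (v w : V) : g • (v + w) = g • v + g • w := smul_add g v w
lemma gsmul_smul (g : M.G) (c : F) (v : V) : g • (c • v) = c • (g • v) :=
  map_smul (g : V ≃ₗ[F] V) c v

def Fix (T : Submodule F V) : Subgroup M.G where
  carrier := {g | ∀ v ∈ T, g • v = v}
  one_mem' := fun v _ => one_smul _ v
  mul_mem' := fun {a b} ha hb v hv => by rw [mul_smul, hb v hv, ha v hv]
  inv_mem' := fun {a} ha v hv => by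
    rw [inv_smul_eq_iff]; exact (ha v hv).symm

lemma mem_Fix {T : Submodule F V} {g : M.G} : g ∈ M.Fix T ↔ ∀ v ∈ T, g • v = v := Iff.rfl

lemma Fix_anti {T T' : Submodule F V} (h : T ≤ T') : M.Fix T' ≤ M.Fix T :=
  fun _ hg v hv => hg v (h hv)

lemma mem_Fix_sup {T T' : Submodule F V} {g : M.G} (h : g ∈ M.Fix T) (h' : g ∈ M.Fix T') :
    g ∈ M.Fix (T ⊔ T') := by
  intro v hv
  obtain ⟨t, ht, t', ht', rfl⟩ := Submodule.mem_sup.1 hv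
  rw [gsmul_add, h t ht, h' t' ht']

lemma mem_Fix_span {s : Set V} {g : M.G} (h : ∀ v ∈ s, g • v = v) :
    g ∈ M.Fix (Submodule.span F s) := by
  intro v hv
  induction hv using Submodule.span_induction with
  | mem y hy => exact h y hy
  | zero => exact smul_zero g
  | add a b _ _ ha hb => rw [gsmul_add, ha, hb]
  | smul a b _ hb => rw [gsmul_smul, hb]

lemma mem_Fix_ln {y : V} {g : M.G} (h : g • y = y) : g ∈ M.Fix (ln y) :=
  M.mem_Fix_span (by simpa using h)

lemma mem_Fix_spn {S : Submodule F V} {t : List V} {g : M.G} (hg : g ∈ M.Fix S)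
    (h : g • t = t) : g ∈ M.Fix (spn S t) :=
  M.mem_Fix_sup hg (M.mem_Fix_span (smul_list_eq_self_iff.1 h))

noncomputable def transv (u : V) (c : F) : M.G :=
  M.mkG (LinearMap.id + c • (M.ω.flip u).smulRight u) (by
    intro v w
    have := M.skew u w
    simp [this]
    ring)

lemma transv_smul (u : V) (c : F) (v : V) : M.transv u c • v = v + c • (M.ω v u • u) := by
  simp [transv]

lemma witt0 {T : Submodule F V} {y y' : V} (h : y' - y ∈ M.perp T) (hne : M.ω y y' ≠ 0) :
    ∃ g ∈ M.Fix T, g • y = y' := by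
  refine ⟨M.transv (y' - y) (M.ω y y')⁻¹, ?_, ?_⟩
  · intro t ht
    rw [transv_smul, M.mem_perp.1 h t ht]
    simp
  · rw [transv_smul]
    simp [smul_smul, hne]

lemma witt {T : Submodule F V} {y y' : V} (hy : y ∉ T) (hy' : y' ∉ T)
    (h : y' - y ∈ M.perp T) : ∃ g ∈ M.Fix T, g • y = y' := by
  by_cases hne : M.ω y y' = 0
  swap
  · exact M.witt0 h hne
  have : ∃ a ∈ M.perp T, M.ω y a ≠ 0 ∧ M.ω y' a ≠ 0 := by
    obtain ⟨a1, h1, h1'⟩ := M.sep hy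
    obtain ⟨a2, h2, h2'⟩ := M.sep hy'
    by_cases c1 : M.ω y' a1 = 0
    · by_cases c2 : M.ω y a2 = 0
      · refine ⟨a1 + a2, Submodule.add_mem _ h1 h2, ?_, ?_⟩ <;> simp [*]
      · exact ⟨a2, h2, c2, by simp [h2']⟩
    · exact ⟨a1, h1, by simp [h1'], c1⟩
  obtain ⟨a, ha, h1, h2⟩ := this
  obtain ⟨g, hg, hg'⟩ := M.witt0 (T := T) (y := y) (y' := y + a) (by simpa using ha)
    (by simpa using h1)
  obtain ⟨k, hk, hk'⟩ := M.witt0 (T := T) (y := y + a) (y' := y')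
    (by
      have : y' - (y + a) = (y' - y) - a := by abel
      rw [this]
      exact Submodule.sub_mem _ h ha)
    (by
      have : M.ω a y' ≠ 0 := fun h0 => h2 (M.skew0 h0)
      simpa [hne] using this)
  exact ⟨k * g, (M.Fix T).mul_mem hk hg, by rw [mul_smul, hg', hk']⟩

lemma mem_perp_sup {T T' : Submodule F V} {v : V} (h : v ∈ M.perp T) (h' : v ∈ M.perp T') :
    v ∈ M.perp (T ⊔ T') := by
  intro x hx
  obtain ⟨t, ht, t', ht', rfl⟩ := Submodule.mem_sup.1 hx
  have h1 := M.mem_perp.1 h t ht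
  have h2 := M.mem_perp.1 h' t' ht'
  change M.ω (t + t') v = 0
  simp [h1, h2]

lemma mem_perp_span {s : Set V} {v : V} (h : ∀ y ∈ s, M.ω y v = 0) :
    v ∈ M.perp (Submodule.span F s) := by
  intro x hx
  change M.ω x v = 0
  induction hx using Submodule.span_induction with
  | mem y hy => exact h y hy
  | zero => simp
  | add a b _ _ ha hb => simp [ha, hb]
  | smul a b _ hb => simp [hb]

lemma mem_perp_ln {y v : V} (h : M.ω y v = 0) : v ∈ M.perp (ln y) :=
  M.mem_perp_span (by simpa using h)

lemma mem_perp_spn {S : Submodule F V} {t : List V} {v : V} (hv : v ∈ M.perp S)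
    (h : ∀ y ∈ t, M.ω y v = 0) : v ∈ M.perp (spn S t) :=
  M.mem_perp_sup hv (M.mem_perp_span h)

lemma smul_perp {T : Submodule F V} {g : M.G} (hg : g ∈ M.Fix T) {v : V} (hv : v ∈ M.perp T) :
    g • v ∈ M.perp T := by
  intro t ht
  have := M.isom g t v
  rw [hg t ht] at this
  exact this.trans (hv t ht)

lemma hypMove {T : Submodule F V} {e f e' f' : V} (he : e ∈ M.perp T) (hf : f ∈ M.perp T)
    (he' : e' ∈ M.perp T) (hf' : f' ∈ M.perp T) (h : M.ω e f = 1) (h' : M.ω e' f' = 1) :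
    ∃ g ∈ M.Fix T, g • e = e' ∧ g • f = f' := by
  have n1 : e ∉ T := fun hT => by
    have := M.mem_perp.1 hf e hT
    rw [h] at this; exact one_ne_zero this
  have n2 : e' ∉ T := fun hT => by
    have := M.mem_perp.1 hf' e' hT
    rw [h'] at this; exact one_ne_zero this
  obtain ⟨g, hg, hge⟩ := M.witt n1 n2 (Submodule.sub_mem _ he' he)
  have hgf : M.ω e' (g • f) = 1 := by rw [← hge, isom, h]
  have aux : ∀ x, M.ω e' x = 1 → x ∉ T ⊔ ln e' := by
    intro x hx hxT
    obtain ⟨t, ht, z, hz, rfl⟩ := Submodule.mem_sup.1 hxT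
    obtain ⟨c, rfl⟩ := Submodule.mem_span_singleton.1 hz
    have h0 := M.skew0 (M.mem_perp.1 he' t ht)
    simp [h0] at hx
  obtain ⟨k, hk, hke⟩ := M.witt (T := T ⊔ ln e') (aux _ hgf) (aux _ h')
    (M.mem_perp_sup (Submodule.sub_mem _ hf' (M.smul_perp hg hf)) (M.mem_perp_ln (by
      simp [h', hgf])))
  refine ⟨k * g, (M.Fix T).mul_mem (M.Fix_anti le_sup_left hk) hg, ?_, ?_⟩
  · rw [mul_smul, hge]
    exact hk _ (Submodule.mem_sup_right (ln_mem _))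
  · rw [mul_smul, hke]

/-- the fixed hyperbolic plane -/
def Hp : Submodule F V := Submodule.span F {M.e0, M.f0}

lemma e0_mem : M.e0 ∈ M.Hp := Submodule.subset_span (by simp)
lemma f0_mem : M.f0 ∈ M.Hp := Submodule.subset_span (by simp)

lemma mem_perp_Hp {v : V} : v ∈ M.perp M.Hp ↔ M.ω M.e0 v = 0 ∧ M.ω M.f0 v = 0 :=
  ⟨fun h => ⟨h _ M.e0_mem, h _ M.f0_mem⟩, fun h => M.mem_perp_span (by
    rintro y (rfl | rfl)
    · exact h.1
    · exact h.2)⟩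

lemma mem_Fix_Hp {g : M.G} (h1 : g • M.e0 = M.e0) (h2 : g • M.f0 = M.f0) : g ∈ M.Fix M.Hp :=
  M.mem_Fix_span (by
    rintro y (rfl | rfl)
    · exact h1
    · exact h2)

lemma perp_swap {S T : Submodule F V} (h : S ≤ M.perp T) : T ≤ M.perp S := by
  intro t ht s hs
  exact M.skew0 (h hs t ht)

lemma Hp_disj {v : V} (h : v ∈ M.Hp) (h' : v ∈ M.perp M.Hp) : v = 0 := by
  obtain ⟨a, b, rfl⟩ := Submodule.mem_span_pair.1 h
  have h1 := (M.mem_perp_Hp.1 h').1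
  have h2 := (M.mem_perp_Hp.1 h').2
  have h3 := M.skew M.f0 M.e0
  simp [M.hef, h3] at h1 h2
  simp [h1, h2]

lemma W1 {S : Submodule F V} (hS : S ≤ M.perp M.Hp) (t : List V) (h : M.Big (spn S t) 1) :
    ∃ g ∈ M.Fix S, ∀ y ∈ g • t, y ∈ M.perp M.Hp := by
  obtain ⟨e', he', f', hf', h1⟩ := M.L3 h
  have hle : M.perp (spn S t) ≤ M.perp S := M.perp_anti (le_spn _ _)
  have hH := M.perp_swap hS
  obtain ⟨g, hg, hge, hgf⟩ := M.hypMove (hle he') (hle hf') (hH M.e0_mem) (hH M.f0_mem) h1 M.hef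
  refine ⟨g, hg, ?_⟩
  intro y hy
  rw [smul_list_def, List.mem_map] at hy
  obtain ⟨v, hv, rfl⟩ := hy
  rw [mem_perp_Hp, ← hge, ← hgf, isom, isom]
  exact ⟨M.skew0 (he' v (mem_spn hv)), M.skew0 (hf' v (mem_spn hv))⟩

lemma W2 {S : Submodule F V} (hS : S ≤ M.perp M.Hp) {t t' : List V}
    (ht : ∀ y ∈ t, y ∈ M.perp M.Hp) (ht' : ∀ y ∈ t', y ∈ M.perp M.Hp) {g : M.G}
    (hg : g ∈ M.Fix S) (hgt : g • t = t') : ∃ h ∈ M.Fix (S ⊔ M.Hp), h • t = t' := by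
  have hH := M.perp_swap hS
  have hH' : ∀ x ∈ M.Hp, x ∈ M.perp (spn S t') := fun x hx =>
    M.mem_perp_spn (hH hx) (fun y hy => M.skew0 (M.mem_perp.1 (ht' y hy) x hx))
  have hH2 : ∀ x ∈ M.Hp, g • x ∈ M.perp (spn S t') := fun x hx =>
    M.mem_perp_spn (M.smul_perp hg (hH hx)) (fun y hy => by
      rw [← hgt, smul_list_def, List.mem_map] at hy
      obtain ⟨v, hv, rfl⟩ := hy
      rw [isom]
      exact M.skew0 (M.mem_perp.1 (ht v hv) x hx))
  obtain ⟨h, hh, h1, h2⟩ := M.hypMove (hH2 _ M.e0_mem) (hH2 _ M.f0_mem) (hH' _ M.e0_mem)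
    (hH' _ M.f0_mem) (by rw [isom, M.hef]) M.hef
  refine ⟨h * g, M.mem_Fix_sup ?_ (M.mem_Fix_Hp ?_ ?_), ?_⟩
  · exact (M.Fix S).mul_mem (M.Fix_anti (le_spn _ _) hh) hg
  · rw [mul_smul, h1]
  · rw [mul_smul, h2]
  · rw [mul_smul, hgt]
    exact smul_list_eq_self (fun y hy => hh y (mem_spn hy))

noncomputable def scale (d f : V) (hdf : M.ω d f = 1) (κ : F) (hκ : κ ≠ 0) : M.G :=
  M.mkG (LinearMap.id + (κ - 1) • (M.ω.flip f).smulRight d + (κ⁻¹ - 1) • (M.ω d).smulRight f) (by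
    intro v w
    have h1 := M.skew f w
    have h2 := M.skew v d
    have h3 := M.skew f d
    simp [h1, h2, h3, hdf]
    field_simp
    ring)

lemma scale_smul (d f : V) (hdf : M.ω d f = 1) (κ : F) (hκ : κ ≠ 0) (v : V) :
    M.scale d f hdf κ hκ • v = v + (κ - 1) • (M.ω v f • d) + (κ⁻¹ - 1) • (M.ω d v • f) := by
  simp [scale]

lemma scale_fix (d f : V) (hdf : M.ω d f = 1) (κ : F) (hκ : κ ≠ 0) {v : V} (h1 : M.ω d v = 0)
    (h2 : M.ω v f = 0) : M.scale d f hdf κ hκ • v = v := by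
  simp [scale_smul, h1, h2]

lemma scale_d (d f : V) (hdf : M.ω d f = 1) (κ : F) (hκ : κ ≠ 0) :
    M.scale d f hdf κ hκ • d = κ • d := by
  simp [scale_smul, hdf, sub_smul]

lemma scale_comm (d f : V) (hdf : M.ω d f = 1) (κ : F) (hκ : κ ≠ 0) {h : M.G} (h1 : h • d = d)
    (h2 : h • f = f) : M.scale d f hdf κ hκ * h = h * M.scale d f hdf κ hκ := by
  apply M.gext
  intro v
  have a1 : M.ω (h • v) f = M.ω v f := by conv_lhs => rw [← h2, isom]
  have a2 : M.ω d (h • v) = M.ω d v := by conv_lhs => rw [← h1, isom]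
  simp only [mul_smul, scale_smul, gsmul_add, gsmul_smul, h1, h2, a1, a2]

noncomputable def eic (a b : V) (hab : M.ω a b = 0) (c : F) : M.G :=
  M.mkG (LinearMap.id + c • (M.ω.flip b).smulRight a + c • (M.ω.flip a).smulRight b) (by
    intro v w
    have h1 := M.skew a w
    have h2 := M.skew b w
    have h3 := M.skew b a
    simp [h1, h2, h3, hab]
    ring)

lemma eic_smul (a b : V) (hab : M.ω a b = 0) (c : F) (v : V) :
    M.eic a b hab c • v = v + c • (M.ω v b • a) + c • (M.ω v a • b) := by
  simp [eic]

lemma eic_comm (a b : V) (hab : M.ω a b = 0) (c : F) {h : M.G} (h1 : h • a = a)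
    (h2 : h • b = b) : M.eic a b hab c * h = h * M.eic a b hab c := by
  apply M.gext
  intro v
  have a1 : M.ω (h • v) b = M.ω v b := by conv_lhs => rw [← h2, isom]
  have a2 : M.ω (h • v) a = M.ω v a := by conv_lhs => rw [← h1, isom]
  simp only [mul_smul, eic_smul, gsmul_add, gsmul_smul, h1, h2, a1, a2]

lemma eic_fix (a b : V) (hab : M.ω a b = 0) (c : F) {v : V} (h1 : M.ω v a = 0)
    (h2 : M.ω v b = 0) : M.eic a b hab c • v = v := by
  simp [eic_smul, h1, h2]

/-- `eic` as a commutator -/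
lemma eic_commutator (a b f : V) (hab : M.ω a b = 0) (haf : M.ω a f = 1) (hbf : M.ω b f = 0)
    (κ : F) (hκ : κ ≠ 0) (c : F) :
    M.scale a f haf κ hκ * M.eic a b hab c = 
      M.eic a b hab ((κ - 1) * c) * M.eic a b hab c * M.scale a f haf κ hκ := by
  apply M.gext
  intro v
  have h1 := M.skew b a
  have h2 := M.skew f a
  have h3 := M.skew f b
  simp only [mul_smul, scale_smul, eic_smul, map_add, map_smul, LinearMap.add_apply,
    LinearMap.smul_apply, smul_eq_mul, M.self, h1, h2, h3, hab, haf, hbf]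
  have h4 := M.skew v a
  simp only [h4]
  match_scalars <;> field_simp <;> ring

end LA
end SD
end SpStab

namespace SpStab
namespace SD

section Mach
set_option linter.unusedSectionVars false

variable {F V : Type} [Field F] [AddCommGroup V] [Module F V] [FiniteDimensional F V]
variable (M : SD F V)

/-- relative vanishing statement in degree q -/
def PP (q : ℕ) : Prop := ∀ S : Submodule F V, S ≤ M.perp M.Hp → M.Big S (q + 1) →
  ∀ z ∈ A (M.Fix S) ({[]} : Set (List V)) q, D z ∈ U (M.Fix M.Hp) (Set.univ : Set (List V)) →
  ∃ w ∈ A (M.Fix S) ({[]} : Set (List V)) (q + 1),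
    z - D w ∈ U (M.Fix M.Hp) (Set.univ : Set (List V))

/-- reduction statement in degree q -/
def QQ (q : ℕ) : Prop := ∀ S : Submodule F V, S ≤ M.perp M.Hp → M.Big S q →
  ∀ ε ∈ S, ε ∈ M.perp S → ∀ f ∈ M.perp M.Hp, M.ω ε f = 1 →
  ∀ z ∈ A (M.Fix S) ({[]} : Set (List V)) q, D z ∈ U (M.Fix M.Hp) (Set.univ : Set (List V)) →
  ∃ z1 ∈ A (M.Fix (S ⊔ ln f)) ({[]} : Set (List V)) q,
  ∃ v ∈ A (M.Fix S) ({[]} : Set (List V)) (q + 1),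
    z - z1 - D v ∈ U (M.Fix M.Hp) (Set.univ : Set (List V))

lemma U_Fix_sup {S T : Submodule F V} {X : Type} [MulAction M.G X] {Y Y' : Set X}
    {z : Ch M.G X} (h1 : z ∈ U (M.Fix S) Y) (h2 : z ∈ U (M.Fix T) Y') :
    z ∈ U (M.Fix (S ⊔ T)) Y := by
  refine U_mono ?_ Set.inter_subset_left (U_inter h1 h2)
  intro g hg
  exact M.mem_Fix_sup hg.1 hg.2

def YS (S : Submodule F V) (ys : V) : Set V := {y | y ∉ S ∧ y - ys ∈ M.perp S}
def YP (S : Submodule F V) (ys : V) : Set V := {y | y ∈ M.YS S ys ∧ y ∈ M.perp M.Hp}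

noncomputable def BB (S : Submodule F V) (ys : V) : Submodule ℤ (Ch M.G (List V)) :=
  U (M.Fix (S ⊔ M.Hp)) (All (M.YP S ys))

noncomputable def T0 (S : Submodule F V) (ys : V) (k q : ℕ) : Submodule ℤ (Ch M.G (List V)) :=
  (A (M.Fix S) (Tup (M.YS S ys) k) (q + 1)).map D ⊔ M.BB S ys

noncomputable def T1 (S : Submodule F V) (ys : V) (k q : ℕ) : Submodule ℤ (Ch M.G (List V)) :=
  M.T0 S ys k q ⊔ (A (M.Fix S) (Tup (M.YS S ys) (k + 1)) q).map dl

structure Mach (S : Submodule F V) (ys : V) (N : ℕ) : Prop where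
  hS : S ≤ M.perp M.Hp
  ysH : ys ∈ M.perp M.Hp
  ysS : ys ∉ S
  big : ∀ y ∈ M.YS S ys, M.Big (S ⊔ ln y) N
  hd : ∀ y0 ∈ M.YS S ys, ∀ y1 ∈ M.YS S ys,
    (∃ d ∈ M.perp (S ⊔ ln y0), d - (y1 - y0) ∈ S) ∨ M.Big (S ⊔ ln y0 ⊔ ln y1) N

variable {M}

lemma YS_stable (S : Submodule F V) (ys : V) : ∀ g ∈ M.Fix S, ∀ y ∈ M.YS S ys, g • y ∈ M.YS S ys := by
  intro g hg y hy
  refine ⟨?_, ?_⟩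
  · intro h
    apply hy.1
    have := (M.Fix S).inv_mem hg _ h
    rw [inv_smul_smul] at this
    rwa [this]
  · intro s hs
    have h1 : M.ω s (y - ys) = 0 := hy.2 s hs
    have h2 := M.isom g s y
    rw [hg s hs] at h2
    change M.ω s (g • y - ys) = 0
    rw [map_sub] at *
    rw [h2, h1]

lemma YP_stable (S : Submodule F V) (ys : V) :
    ∀ g ∈ M.Fix (S ⊔ M.Hp), ∀ y ∈ M.YP S ys, g • y ∈ M.YP S ys := fun g hg y hy =>
  ⟨YS_stable S ys g (M.Fix_anti le_sup_left hg) y hy.1,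
    M.smul_perp (M.Fix_anti le_sup_right hg) hy.2⟩

lemma A_zero_any {Γ X : Type} [Group Γ] [MulAction Γ X] {K K' : Subgroup Γ} {Y : Set X}
    {z : Ch Γ X} (hz : z ∈ A K Y 0) : z ∈ A K' Y 0 := by
  refine Finsupp.supported_mono ?_ hz
  rintro ⟨l, x⟩ ⟨h1, h2, h3⟩
  obtain rfl : l = [] := List.length_eq_zero_iff.1 h1
  exact ⟨rfl, by simp, h3⟩

lemma deg0_move {S : Submodule F V} {ys : V} {k : ℕ} {s : List V} (hs : s ∈ Tup (M.YS S ys) k)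
    {K' : Subgroup M.G} {z : Ch M.G (List V)} (hz : z ∈ A K' ({[]} : Set (List V)) 0) {g : M.G}
    (hg : g ∈ M.Fix S) : iot s z - iot (g • s) z ∈ M.T0 S ys k 0 := by
  have hz' : z ∈ A (M.Fix S) ({[]} : Set (List V)) 0 := A_zero_any hz
  have h1 : D (pre g (iot s z)) = iot s z - iot (g • s) z := by
    rw [D_pre]
    congr 1
    refine lin_eq (e g ∘ₗ iot s) (iot (g • s)) _ ?_ hz
    rintro l x ⟨h1, -, -⟩
    obtain rfl : l = [] := List.length_eq_zero_iff.1 h1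
    simp [E]
  rw [← h1]
  exact Submodule.mem_sup_left (Submodule.mem_map_of_mem (pre_mem_A hg (iot_mem_A s hs hz')))

lemma fix_tuple {S : Submodule F V} {s : List V} : ∀ h ∈ M.Fix (spn S s), h • s = s :=
  fun _ hh => smul_list_eq_self (fun y hy => hh y (mem_spn hy))

/-- the noncritical case -/
lemma nc {S : Submodule F V} {ys : V} (hS : S ≤ M.perp M.Hp) {q k : ℕ} (hP : M.PP q) {s : List V}
    (hs : s ∈ Tup (M.YS S ys) k) {z : Ch M.G (List V)}
    (hz : z ∈ A (M.Fix (spn S s)) ({[]} : Set (List V)) q)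
    (hDz : D z ∈ U (M.Fix M.Hp) (Set.univ : Set (List V))) (hb : M.Big (spn S s) (q + 1))
    (hc : (∀ y ∈ s, y ∈ M.perp M.Hp) ∨ q = 0) : iot s z ∈ M.T0 S ys k q := by
  rcases hc with hc | rfl
  · obtain ⟨w, hw, hb⟩ := hP (spn S s) (spn_le hS hc) hb z hz hDz
    have e1 : iot s z = D (iot s w) + iot s (z - D w) := by
      rw [D_iot s fix_tuple (A_le_U _ _ _ hw), map_sub]; abel
    rw [e1]
    refine Submodule.add_mem _ (Submodule.mem_sup_left (Submodule.mem_map_of_mem ?_))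
      (Submodule.mem_sup_right ?_)
    · exact A_mono (M.Fix_anti (le_spn _ _)) subset_rfl _ (iot_mem_A s hs hw)
    · have h1 : z - D w ∈ U (M.Fix (spn S s)) ({[]} : Set (List V)) :=
        A_le_U _ _ _ (Submodule.sub_mem _ hz (D_mem_A (stable_nil _) hw))
      have h2 := M.U_Fix_sup h1 hb
      refine iot_mem_U s ?_ (U_mono (M.Fix_anti (sup_le_sup_right (le_spn _ _) _)) subset_rfl h2)
      exact fun y hy => ⟨hs.2 y hy, hc y hy⟩
  · obtain ⟨g, hg, hgs⟩ := M.W1 hS s (hb.mono (by omega))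
    have h1 := deg0_move hs hz hg
    have h2 : iot (g • s) z ∈ M.T0 S ys k 0 := by
      refine Submodule.mem_sup_right ?_
      have hgs' := (smul_tup (YS_stable S ys) k) g hg s hs
      exact iot_mem_U (Y := {[]}) _ (fun y hy => ⟨hgs'.2 y hy, hgs y hy⟩)
        (A_le_U _ _ _ (A_zero_any hz))
    have := Submodule.add_mem _ h1 h2
    simpa using this

lemma smul_cons_fix {g : M.G} {t : List V} (h : ∀ y ∈ t, g • y = y) : g • t = t :=
  smul_list_eq_self h

/-- constant conjugation by an element commuting with the chain -/
lemma phi_iot_comm {K' : Subgroup M.G} {g : M.G} (hg : ∀ h ∈ K', g * h = h * g) (s : List V)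
    {Y : Set (List V)} {z : Ch M.G (List V)} (hz : z ∈ U K' Y) :
    phi (fun _ => g) (iot s z) = iot (g • s) z := by
  refine lin_eq (phi (fun _ => g) ∘ₗ iot s) (iot (g • s)) _ ?_ hz
  rintro l x ⟨h1, -⟩
  simp only [LinearMap.comp_apply, iot_bs, phi_bs]
  rw [phi0_const_comm g l (fun h hh => hg h (h1 h hh))]

/-- the conjugation step of the critical case -/
lemma conj_step {S : Submodule F V} {ys : V} {q k : ℕ} (hQ : M.QQ q)
    {T : Submodule F V} (hST : S ≤ T) {s : List V}
    (hs : s ∈ Tup (M.YS S ys) k) (hsT : ∀ y ∈ s, y ∈ T) {z : Ch M.G (List V)}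
    (hz : z ∈ A (M.Fix T) ({[]} : Set (List V)) q)
    (hDz : D z ∈ U (M.Fix M.Hp) (Set.univ : Set (List V)))
    (hc : T ≤ M.perp M.Hp ∨ q = 0) (hbig : M.Big T q)
    {d : V} (hd : d ∈ T) (hd' : d ∈ M.perp T) {T' : Submodule F V} (hST' : S ≤ T')
    (hT' : T' ≤ T) (hdT' : d ∉ T') (κ : F) (hκ : κ ≠ 0)
    {s' : List V} (hs'T : ∀ y ∈ s', y ∈ T)
    (hss' : ∀ g : M.G, g ∈ M.Fix T' → g • d = κ • d → g • s = s') :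
    iot s z - iot s' z ∈ M.T0 S ys k q := by
  rcases hc with hc | rfl
  · have h1 : d ∉ T' ⊔ M.Hp := by
      intro h
      obtain ⟨t, ht, x, hx, hd2⟩ := Submodule.mem_sup.1 h
      have : x ∈ M.perp M.Hp := by
        have : x = d - t := by rw [← hd2]; abel
        rw [this]
        exact Submodule.sub_mem _ (hc hd) (hc (hT' ht))
      have := M.Hp_disj hx this
      rw [this, add_zero] at hd2
      exact hdT' (hd2 ▸ ht)
    obtain ⟨f, hf, hdf⟩ := M.sep h1
    obtain ⟨z1, hz1, v, hv, hb⟩ := hQ T hc hbig d hd hd' f (M.perp_anti le_sup_right hf) hdf z hz hDz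
    set g := M.scale d f hdf κ hκ with hg
    have hgT : g ∈ M.Fix (T' ⊔ M.Hp) := by
      intro x hx
      refine M.scale_fix d f hdf κ hκ ?_ (hf x hx)
      obtain ⟨a, ha, b, hb, rfl⟩ := Submodule.mem_sup.1 hx
      have e1 : M.ω a d = 0 := hd' a (hT' ha)
      have e2 : M.ω b d = 0 := hc hd b hb
      rw [map_add, M.skew0 e1, M.skew0 e2, add_zero]
    have hgs : g • s = s' := hss' g (M.Fix_anti le_sup_left hgT) (M.scale_d d f hdf κ hκ)
    have hgS : g ∈ M.Fix (S ⊔ M.Hp) := M.Fix_anti (sup_le_sup_right hST' _) hgT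
    have hs2 : s ∈ All (M.YP S ys) := fun y hy => ⟨hs.2 y hy, hc (hsT y hy)⟩
    have hs'2 : s' ∈ All (M.YP S ys) := by
      rw [← hgs]; exact smul_all (YP_stable S ys) g hgS s hs2
    have hs'1 : s' ∈ Tup (M.YS S ys) k := by
      rw [← hgs]; exact smul_tup (YS_stable S ys) k g (M.Fix_anti le_sup_left hgS) s hs
    -- the boundary of z1
    have fixs : ∀ h ∈ M.Fix T, h • s = s :=
      fun h hh => smul_list_eq_self (fun y hy => hh y (hsT y hy))
    have fixs' : ∀ h ∈ M.Fix T, h • s' = s' :=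
      fun h hh => smul_list_eq_self (fun y hy => hh y (hs'T y hy))
    have hz1T : z1 ∈ A (M.Fix T) ({[]} : Set (List V)) q :=
      A_mono (M.Fix_anti le_sup_left) subset_rfl _ hz1
    have hDz1 : D z1 ∈ U (M.Fix M.Hp) (Set.univ : Set (List V)) := by
      have : D z1 = D z - D (z - z1 - D v) := by
        simp only [map_sub, D_D]; abel
      rw [this]
      exact Submodule.sub_mem _ hDz (D_mem_U (stable_univ _) hb)
    have hDz1' : D z1 ∈ U (M.Fix (S ⊔ M.Hp)) ({[]} : Set (List V)) :=
      U_mono (M.Fix_anti (sup_le_sup_right hST _)) subset_rfl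
        (M.U_Fix_sup (D_mem_U (stable_nil _) (A_le_U _ _ _ hz1T)) hDz1)
    have hb' : z - z1 - D v ∈ U (M.Fix (S ⊔ M.Hp)) ({[]} : Set (List V)) :=
      U_mono (M.Fix_anti (sup_le_sup_right hST _)) subset_rfl
        (M.U_Fix_sup (A_le_U _ _ _ (Submodule.sub_mem _ (Submodule.sub_mem _ hz hz1T)
          (D_mem_A (stable_nil _) hv))) hb)
    have hcomm : phi (fun _ => g) (iot s z1) = iot s' z1 := by
      rw [← hgs]
      refine phi_iot_comm ?_ s (A_le_U _ _ _ hz1)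
      intro h hh
      exact M.scale_comm d f hdf κ hκ (hh d (Submodule.mem_sup_left hd))
        (hh f (Submodule.mem_sup_right (ln_mem f)))
    have key := htpy (fun _ => g) (iot s z1)
    rw [hcomm] at key
    have e1 : iot s z - iot s' z = D (H (fun _ => g) (iot s z1)) + H (fun _ => g) (D (iot s z1))
        + D (iot s v) - D (iot s' v) + iot s (z - z1 - D v) - iot s' (z - z1 - D v) := by
      rw [key, D_iot s fixs (A_le_U _ _ _ hv), D_iot s' fixs' (A_le_U _ _ _ hv)]
      simp only [map_sub]
      abel
    rw [e1]
    have memA : ∀ {n x}, x ∈ A (M.Fix T) ({[]} : Set (List V)) n → 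
        x ∈ A (M.Fix S) ({[]} : Set (List V)) n := fun hx => A_mono (M.Fix_anti hST) subset_rfl _ hx
    refine Submodule.sub_mem _ (Submodule.add_mem _ (Submodule.sub_mem _ (Submodule.add_mem _
      (Submodule.add_mem _ ?_ ?_) ?_) ?_) ?_) ?_
    · refine Submodule.mem_sup_left (Submodule.mem_map_of_mem ?_)
      exact H_mem_A (smul_tup (YS_stable S ys) k) (fun _ _ => M.Fix_anti le_sup_left hgS)
        (iot_mem_A s hs (memA hz1T))
    · refine Submodule.mem_sup_right ?_
      rw [D_iot s fixs (A_le_U _ _ _ hz1T)]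
      exact H_mem_U (smul_all (YP_stable S ys)) (fun _ _ => hgS) (iot_mem_U s hs2 hDz1')
    · exact Submodule.mem_sup_left (Submodule.mem_map_of_mem (iot_mem_A s hs (memA hv)))
    · exact Submodule.mem_sup_left (Submodule.mem_map_of_mem (iot_mem_A s' hs'1 (memA hv)))
    · exact Submodule.mem_sup_right (iot_mem_U s hs2 hb')
    · exact Submodule.mem_sup_right (iot_mem_U s' hs'2 hb')
  · obtain ⟨f, hf, hdf⟩ := M.sep hdT'
    set g := M.scale d f hdf κ hκ with hg
    have hgT : g ∈ M.Fix T' := by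
      intro x hx
      refine M.scale_fix d f hdf κ hκ ?_ (hf x hx)
      have e1 : M.ω x d = 0 := hd' x (hT' hx)
      exact M.skew0 e1
    have hgs : g • s = s' := hss' g hgT (M.scale_d d f hdf κ hκ)
    rw [← hgs]
    exact deg0_move hs hz (M.Fix_anti hST' hgT)

end Mach
end SD
end SpStab

namespace SpStab
namespace SD

section Mach2
set_option linter.unusedSectionVars false

variable {F V : Type} [Field F] [AddCommGroup V] [Module F V] [FiniteDimensional F V]
variable {M : SD F V}

lemma mem_sup_ln {S : Submodule F V} (y : V) : y ∈ S ⊔ ln y := Submodule.mem_sup_right (ln_mem y)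

lemma forall_cons {p : V → Prop} {a : V} {t : List V} (h1 : p a) (h2 : ∀ y ∈ t, p y) :
    ∀ y ∈ a :: t, p y := by
  intro y hy
  rcases List.mem_cons.1 hy with rfl | hy
  · exact h1
  · exact h2 y hy

/-- the key local computation -/
lemma local_crit {S : Submodule F V} {ys : V} {N q k : ℕ} (hF : ∃ x : F, x ≠ 0 ∧ x ≠ 1)
    (m : M.Mach S ys N) (hP : M.PP q)
    (hQ : M.QQ q) (hk : q + k + 1 ≤ N) {t : List V} (ht : t ∈ Tup (M.YS S ys) (k + 2))
    {z : Ch M.G (List V)} (hz : z ∈ A (M.Fix (spn S t)) ({[]} : Set (List V)) q)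
    (hDz : D z ∈ U (M.Fix M.Hp) (Set.univ : Set (List V)))
    (hc : (∀ y ∈ t, y ∈ M.perp M.Hp) ∨ q = 0) : iot t z ∈ M.T1 S ys (k + 2) q := by
  have hT01 : M.T0 S ys (k + 2) q ≤ M.T1 S ys (k + 2) q := le_sup_left
  by_cases hcr : M.Big (spn S t) (q + 1)
  · exact hT01 (nc m.hS hP ht hz hDz hcr hc)
  obtain ⟨b, hb0, hb1⟩ := hF
  obtain ⟨y0, t1, rfl⟩ : ∃ y0 t1, t = y0 :: t1 := by
    cases t with
    | nil => have := ht.1; simp at this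
    | cons a t => exact ⟨a, t, rfl⟩
  obtain ⟨y1, t', rfl⟩ : ∃ y1 t', t1 = y1 :: t' := by
    cases t1 with
    | nil => have := ht.1; simp at this
    | cons a t => exact ⟨a, t, rfl⟩
  have hlen : t'.length = k := by have := ht.1; simpa using this
  set T := spn S (y0 :: y1 :: t') with hT
  have hST : S ≤ T := le_spn _ _
  have hy0T : y0 ∈ T := mem_spn (by simp)
  have hy1T : y1 ∈ T := mem_spn (by simp)
  have ht'T : ∀ y ∈ t', y ∈ T := fun y hy => mem_spn (by simp [hy])
  have hy0 : y0 ∈ M.YS S ys := ht.2 _ (by simp)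
  have hy1 : y1 ∈ M.YS S ys := ht.2 _ (by simp)
  have ht' : ∀ y ∈ t', y ∈ M.YS S ys := fun y hy => ht.2 _ (by simp [hy])
  -- the vector d
  obtain ⟨d, hd, hds⟩ : ∃ d ∈ M.perp (S ⊔ ln y0), d - (y1 - y0) ∈ S := by
    rcases m.hd y0 hy0 y1 hy1 with h | h
    · exact h
    · exfalso
      refine hcr (M.big_of h t' (by omega) ?_ ht'T ?_)
      · exact sup_le (sup_le hST (ln_le hy0T)) (ln_le hy1T)
      · rw [hT, spn_cons, spn_cons]
  set u1 := y0 + d with hu1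
  set ub := y0 + b • d with hub
  have hdT : d ∈ T := by
    have : d = (d - (y1 - y0)) + (y1 - y0) := by abel
    rw [this]
    exact T.add_mem (hST hds) (T.sub_mem hy1T hy0T)
  have hu1T : u1 ∈ T := T.add_mem hy0T hdT
  have hubT : ub ∈ T := T.add_mem hy0T (T.smul_mem _ hdT)
  have hu1y1 : ∀ R : Submodule F V, S ≤ R → y1 ∈ R → u1 ∈ R := by
    intro R hR h
    have : u1 = (d - (y1 - y0)) + y1 := by rw [hu1]; abel
    rw [this]
    exact R.add_mem (hR hds) h
  have hy1R : ∀ R : Submodule F V, S ≤ R → y0 ∈ R → d ∈ R → y1 ∈ R := by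
    intro R hR h0 hd0
    have : y1 = y0 + d - (d - (y1 - y0)) := by abel
    rw [this]
    exact R.sub_mem (R.add_mem h0 hd0) (hR hds)
  have hTle : ∀ R : Submodule F V, S ≤ R → y0 ∈ R → y1 ∈ R → (∀ y ∈ t', y ∈ R) → T ≤ R := by
    intro R h1 h2 h3 h4
    exact spn_le h1 (forall_cons h2 (forall_cons h3 h4))
  have hdS : d ∈ M.perp S := M.perp_anti le_sup_left hd
  have hdy0 : M.ω y0 d = 0 := hd y0 (mem_sup_ln y0)
  -- d is not in S + y0
  have hdn0 : d ∉ S ⊔ ln y0 := by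
    intro h
    refine hcr (M.big_of (m.big y0 hy0) t' (by omega) (sup_le hST (ln_le hy0T)) ht'T ?_)
    have h1 : S ⊔ ln y0 ≤ spn (S ⊔ ln y0) t' := le_spn _ _
    refine hTle _ (le_sup_left.trans h1) (h1 (mem_sup_ln y0)) ?_ (fun y hy => mem_spn hy)
    exact h1 (hy1R _ le_sup_left (mem_sup_ln y0) h)
  have hYc : ∀ c : F, c ≠ 0 → y0 + c • d ∈ M.YS S ys := by
    intro c hc0
    refine ⟨?_, ?_⟩
    · intro h
      apply hdn0
      have : d = c⁻¹ • ((y0 + c • d) - y0) := by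
        rw [add_sub_cancel_left, smul_smul, inv_mul_cancel₀ hc0, one_smul]
      rw [this]
      exact Submodule.smul_mem _ _ (Submodule.sub_mem _ (Submodule.mem_sup_left h) (mem_sup_ln y0))
    · have : y0 + c • d - ys = (y0 - ys) + c • d := by abel
      rw [this]
      exact Submodule.add_mem _ hy0.2 (Submodule.smul_mem _ _ hdS)
  have hu1Y : u1 ∈ M.YS S ys := by simpa using hYc 1 one_ne_zero
  have hubY : ub ∈ M.YS S ys := hYc b hb0
  have hy0ub : ∀ R : Submodule F V, ub ∈ R → d ∈ R → y0 ∈ R := by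
    intro R h1 h2
    have : y0 = ub - b • d := by rw [hub]; abel
    rw [this]
    exact R.sub_mem h1 (R.smul_mem _ h2)
  -- d is not in S + ub + t'
  have hdT' : d ∉ spn (S ⊔ ln ub) t' := by
    intro h
    refine hcr (M.big_of (m.big ub hubY) t' (by omega) (sup_le hST (ln_le hubT)) ht'T ?_)
    have h1 : S ⊔ ln ub ≤ spn (S ⊔ ln ub) t' := le_spn _ _
    have h2 := hy0ub _ (h1 (mem_sup_ln ub)) h
    refine hTle _ (le_sup_left.trans h1) h2 (hy1R _ (le_sup_left.trans h1) h2 h) 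
      (fun y hy => mem_spn hy)
  -- d is orthogonal to t'
  have hdt' : ∀ y ∈ t', M.ω y d = 0 := by
    intro y hy
    by_contra hne
    have hne' : M.ω d y ≠ 0 := fun h0 => hne (M.skew0 h0)
    obtain ⟨l1, l2, rfl⟩ := List.append_of_mem hy
    simp at hlen
    obtain ⟨N', rfl⟩ : ∃ N', N = N' + 1 := ⟨N - 1, by omega⟩
    have h1 := M.L1 (m.big y0 hy0) d
    have h2 := M.L2 (r := d) (y := y) h1 (mem_sup_ln d) (M.mem_perp_sup hd (M.mem_perp_ln (by simp)))
      hne'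
    refine hcr (M.big_of h2 (l1 ++ l2) (by simp; omega) ?_ ?_ ?_)
    · exact sup_le (sup_le (sup_le hST (ln_le hy0T)) (ln_le hdT)) (ln_le (ht'T y hy))
    · intro w hw
      refine ht'T w ?_
      simp only [List.mem_append, List.mem_cons] at hw ⊢
      tauto
    · set R := spn (S ⊔ ln y0 ⊔ ln d ⊔ ln y) (l1 ++ l2) with hR
      have h3 : S ⊔ ln y0 ⊔ ln d ⊔ ln y ≤ R := le_spn _ _
      have hS3 : S ≤ R := le_trans (le_sup_left.trans (le_sup_left.trans le_sup_left)) h3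
      have hy03 : y0 ∈ R := h3 (Submodule.mem_sup_left (Submodule.mem_sup_left (mem_sup_ln y0)))
      have hd3 : d ∈ R := h3 (Submodule.mem_sup_left (mem_sup_ln d))
      refine hTle R hS3 hy03 (hy1R R hS3 hy03 hd3) ?_
      intro w hw
      simp only [List.mem_append, List.mem_cons] at hw
      have : w ∈ l1 ++ l2 ∨ w = y := by simp only [List.mem_append]; tauto
      rcases this with h | rfl
      · exact mem_spn h
      · exact h3 (mem_sup_ln w)
  have hdperp : d ∈ M.perp T := by
    refine M.mem_perp_spn hdS (forall_cons hdy0 (forall_cons ?_ hdt'))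
    have e1 : y1 = y0 + d - (d - (y1 - y0)) := by abel
    have e2 : M.ω (d - (y1 - y0)) d = 0 := hdS _ hds
    rw [e1, map_sub, map_add, LinearMap.sub_apply, LinearMap.add_apply, hdy0, e2]
    simp
  have hcT : T ≤ M.perp M.Hp ∨ q = 0 := hc.imp (fun h => spn_le m.hS h) id
  -- noncritical tuples vanish
  have ncc : ∀ s : List V, s ∈ Tup (M.YS S ys) (k + 2) → (∀ y ∈ s, y ∈ T) →
      M.Big (spn S s) (q + 1) → iot s z ∈ M.T1 S ys (k + 2) q := by
    intro s hs hsT hbs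
    refine hT01 (nc m.hS hP hs (A_mono (M.Fix_anti (spn_le hST hsT)) subset_rfl _ hz) hDz hbs ?_)
    exact hcT.imp (fun h y hy => h (hsT y hy)) id
  have ins : ∀ x : List V, x ∈ Tup (M.YS S ys) (k + 3) →
      dl (iot x z) ∈ M.T1 S ys (k + 2) q := by
    intro x hx
    exact Submodule.mem_sup_right (Submodule.mem_map_of_mem
      (iot_mem_A x hx (A_mono (M.Fix_anti hST) subset_rfl _ hz)))
  have hbigy0 : ∀ (w : V) (s : List V), w ∈ T → s.length + 1 = t'.length → (∀ y ∈ s, y ∈ t') →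
      ∀ R : Submodule F V, S ≤ R → y0 ∈ R → w ∈ R → (∀ y ∈ s, y ∈ R) →
      R ≤ spn (S ⊔ ln y0) (w :: s) → M.Big R (q + 1) := by
    intro w s _ hs1 _ R h1 h2 h3 h4 h5
    exact M.big_of (m.big y0 hy0) (w :: s) (by simp; omega) (sup_le h1 (ln_le h2))
      (forall_cons h3 h4) h5
  have step1 := dl_iot3 y0 y1 u1 t' z (M.T1 S ys (k + 2) q) (by
      intro s hs1 hs2
      refine ncc _ ⟨by simp; omega, forall_cons hy0 (forall_cons hy1 (forall_cons hu1Y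
        (fun y hy => ht' y (hs2 y hy))))⟩ (forall_cons hy0T (forall_cons hy1T (forall_cons hu1T
        (fun y hy => ht'T y (hs2 y hy))))) ?_
      refine hbigy0 y1 s hy1T hs1 hs2 _ (le_spn _ _) (mem_spn (by simp)) (mem_spn (by simp))
        (fun y hy => mem_spn (by simp [hy])) ?_
      have h1 : S ⊔ ln y0 ≤ spn (S ⊔ ln y0) (y1 :: s) := le_spn _ _
      have hy1' : y1 ∈ spn (S ⊔ ln y0) (y1 :: s) := mem_spn (by simp)
      exact spn_le (le_sup_left.trans h1) (forall_cons (h1 (mem_sup_ln y0)) (forall_cons hy1'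
        (forall_cons (hu1y1 _ (le_sup_left.trans h1) hy1') (fun y hy => mem_spn (by simp [hy]))))))
    (ins _ ⟨by simp; omega, forall_cons hy0 (forall_cons hy1 (forall_cons hu1Y ht'))⟩)
  have step2 := dl_iot3 y0 u1 ub t' z (M.T1 S ys (k + 2) q) (by
      intro s hs1 hs2
      refine ncc _ ⟨by simp; omega, forall_cons hy0 (forall_cons hu1Y (forall_cons hubY
        (fun y hy => ht' y (hs2 y hy))))⟩ (forall_cons hy0T (forall_cons hu1T (forall_cons hubT
        (fun y hy => ht'T y (hs2 y hy))))) ?_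
      refine hbigy0 d s hdT hs1 hs2 _ (le_spn _ _) (mem_spn (by simp)) ?_
        (fun y hy => mem_spn (by simp [hy])) ?_
      · have : d = u1 - y0 := by rw [hu1]; abel
        have h1 : u1 ∈ spn S (y0 :: u1 :: ub :: s) := mem_spn (by simp)
        have h2 : y0 ∈ spn S (y0 :: u1 :: ub :: s) := mem_spn (by simp)
        rw [this]
        exact Submodule.sub_mem _ h1 h2
      have h1 : S ⊔ ln y0 ≤ spn (S ⊔ ln y0) (d :: s) := le_spn _ _
      have hd1 : d ∈ spn (S ⊔ ln y0) (d :: s) := mem_spn (by simp)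
      have hy01 := h1 (mem_sup_ln y0)
      exact spn_le (le_sup_left.trans h1) (forall_cons hy01 (forall_cons
        (Submodule.add_mem _ hy01 hd1)
        (forall_cons (Submodule.add_mem _ hy01 (Submodule.smul_mem _ _ hd1))
          (fun y hy => mem_spn (by simp [hy]))))))
    (ins _ ⟨by simp; omega, forall_cons hy0 (forall_cons hu1Y (forall_cons hubY ht'))⟩)
  have step0 : iot (y1 :: u1 :: t') z ∈ M.T1 S ys (k + 2) q := by
    refine ncc _ ⟨by simp; omega, forall_cons hy1 (forall_cons hu1Y ht')⟩
      (forall_cons hy1T (forall_cons hu1T ht'T)) ?_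
    refine M.big_of (m.big y1 hy1) t' (by omega) (sup_le (le_spn _ _) (ln_le (mem_spn (by simp))))
      (fun y hy => mem_spn (by simp [hy])) ?_
    have h1 : S ⊔ ln y1 ≤ spn (S ⊔ ln y1) t' := le_spn _ _
    exact spn_le (le_sup_left.trans h1) (forall_cons (h1 (mem_sup_ln y1)) (forall_cons
        (hu1y1 _ (le_sup_left.trans h1) (h1 (mem_sup_ln y1))) (fun y hy => mem_spn hy)))
  have h1b : 1 - b ≠ 0 := sub_ne_zero.2 (Ne.symm hb1)
  have step3 : iot (u1 :: ub :: t') z - iot (y0 :: ub :: t') z ∈ M.T1 S ys (k + 2) q := by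
    refine hT01 (conj_step hQ hST ⟨by simp; omega, forall_cons hu1Y (forall_cons hubY ht')⟩
      (forall_cons hu1T (forall_cons hubT ht'T)) hz hDz hcT ?_ hdT hdperp
      (T' := spn (S ⊔ ln ub) t') (le_sup_left.trans (le_spn _ _))
      (spn_le (sup_le hST (ln_le hubT)) ht'T) hdT' (-b / (1 - b))
      (div_ne_zero (neg_ne_zero.2 hb0) h1b) (forall_cons hy0T (forall_cons hubT ht'T)) ?_)
    · refine M.big_of (m.big y0 hy0) (y1 :: t') (by simp; omega) (sup_le hST (ln_le hy0T))
        (forall_cons hy1T ht'T) ?_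
      rw [hT, spn_cons]
    · intro g hg hgd
      have g1 : g • ub = ub := hg ub (le_spn _ _ (mem_sup_ln ub))
      have g2 : g • t' = t' := smul_list_eq_self (fun y hy => hg y (mem_spn hy))
      have g3 : g • u1 = y0 := by
        have e1 : u1 = ub + (1 - b) • d := by rw [hu1, hub, sub_smul, one_smul]; abel
        rw [e1, M.gsmul_add, M.gsmul_smul, g1, hgd, smul_smul, mul_div_cancel₀ _ h1b, hub]
        simp
      rw [smul_list_cons, smul_list_cons, g1, g2, g3]
  have fin : iot (y0 :: y1 :: t') z =
      (iot (y1 :: u1 :: t') z - iot (y0 :: u1 :: t') z + iot (y0 :: y1 :: t') z)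
      - iot (y1 :: u1 :: t') z + ((iot (u1 :: ub :: t') z - iot (y0 :: ub :: t') z
        + iot (y0 :: u1 :: t') z) - (iot (u1 :: ub :: t') z - iot (y0 :: ub :: t') z)) := by abel
  rw [fin]
  exact Submodule.add_mem _ (Submodule.sub_mem _ step1 step0) (Submodule.sub_mem _ step2 step3)

end Mach2
end SD
end SpStab

namespace SpStab

section Comp
set_option linter.unusedSectionVars false
variable {Γ V : Type} [Group Γ] [MulAction Γ V]

open Classical in
/-- the component of a chain at a terminal tuple, moved to the empty tuple -/
noncomputable def zc (t : List V) : Ch Γ (List V) →ₗ[ℤ] Ch Γ (List V) :=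
  Finsupp.linearCombination ℤ (fun p => if p.2 = t then bs p.1 [] else 0)

lemma zc_bs_self (t : List V) (l : List Γ) : zc t (bs l t) = bs l [] := by
  simp [zc, bs]

lemma zc_bs_ne {t x : List V} (h : x ≠ t) (l : List Γ) : zc t (bs l x) = 0 := by
  simp [zc, bs, h]

lemma zc_pre (g : Γ) (t : List V) (z : Ch Γ (List V)) : zc t (pre g z) = pre g (zc t z) := by
  have : zc t ∘ₗ pre g = pre g ∘ₗ zc (Γ := Γ) t := by
    apply lhom_eq
    intro l x
    by_cases h : x = t
    · subst h
      simp only [LinearMap.comp_apply, pre_bs, zc_bs_self]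
    · simp only [LinearMap.comp_apply, pre_bs, zc_bs_ne h, map_zero]
  exact congrArg (fun f => f z) this

lemma zc_E_self (t : List V) (g : Γ) (hg : g • t = t) (l : List Γ) (hl : ∀ h ∈ l, h • t = t) :
    zc t (E g l t) = E g l [] := by
  induction l generalizing g with
  | nil => simp only [E, hg, zc_bs_self, smul_list_nil]
  | cons h l ih =>
    simp only [E, map_sub, zc_bs_self, zc_pre]
    rw [ih h (hl h (by simp)) (fun h hh => hl h (by simp [hh]))]

lemma zc_E_ne {t x : List V} (hx : x ≠ t) (g : Γ) (hg : g • x = x) (l : List Γ)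
    (hl : ∀ h ∈ l, h • x = x) : zc t (E g l x) = 0 := by
  induction l generalizing g with
  | nil => simp only [E, hg, zc_bs_ne hx]
  | cons h l ih =>
    simp only [E, map_sub, zc_bs_ne hx, zc_pre]
    rw [ih h (hl h (by simp)) (fun h hh => hl h (by simp [hh]))]
    simp

/-- support condition: all group elements fix the terminal tuple -/
def FixW (K : Subgroup Γ) (Y : Set (List V)) (q : ℕ) : Set (List Γ × List V) :=
  {p | p.1.length = q ∧ (∀ g ∈ p.1, g ∈ K ∧ g • p.2 = p.2) ∧ p.2 ∈ Y}

lemma D_zc (t : List V) {K : Subgroup Γ} {Y : Set (List V)} {q : ℕ} {u : Ch Γ (List V)}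
    (hu : u ∈ Finsupp.supported ℤ ℤ (FixW K Y q)) : D (zc t u) = zc t (D u) := by
  rw [← LinearMap.comp_apply, ← LinearMap.comp_apply]
  refine lin_eq _ _ (FixW K Y q) ?_ hu
  intro l x hlx
  have h2 : ∀ g ∈ l, g ∈ K ∧ g • x = x := hlx.2.1
  simp only [LinearMap.comp_apply, D_bs]
  cases l with
  | nil =>
    by_cases h : x = t
    · subst h; simp [zc_bs_self, D0]
    · simp [zc_bs_ne h, D0]
  | cons g l =>
    have hg : g • x = x := (h2 g (by simp)).2
    have hl : ∀ h ∈ l, h • x = x := fun h hh => (h2 h (by simp [hh])).2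
    by_cases h : x = t
    · subst h
      simp only [zc_bs_self, D0, map_sub, D_bs, zc_E_self x g hg l hl]
    · simp only [zc_bs_ne h, D0, map_sub, zc_E_ne h g hg l hl, map_zero, sub_zero]

lemma zc_mem_U (t : List V) {K : Subgroup Γ} {Y : Set (List V)} {u : Ch Γ (List V)}
    (hu : u ∈ U K Y) : zc t u ∈ U K ({[]} : Set (List V)) := by
  refine lin_mem (zc t) _ _ ?_ hu
  rintro l x ⟨h1, -⟩
  by_cases h : x = t
  · subst h
    rw [zc_bs_self]
    exact bs_mem_U h1 rfl
  · rw [zc_bs_ne h]; exact Submodule.zero_mem _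

lemma zc_eq_zero {t : List V} {s : Set (List Γ × List V)} (ht : ∀ l, (l, t) ∉ s)
    {u : Ch Γ (List V)} (hu : u ∈ Finsupp.supported ℤ ℤ s) : zc t u = 0 := by
  refine lin_eq (zc t) 0 _ ?_ hu
  intro l x hx
  by_cases h : x = t
  · subst h
    exact absurd hx (ht l)
  · rw [zc_bs_ne h]; rfl

lemma zc_decomp (u : Ch Γ (List V)) (N : Submodule ℤ (Ch Γ (List V)))
    (h : ∀ t, iot t (zc t u) ∈ N) : u ∈ N := by
  classical
  set T : Finset (List V) := u.support.image Prod.snd with hT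
  have hu : u ∈ Finsupp.supported ℤ ℤ {p : List Γ × List V | p.2 ∈ T} := by
    intro p hp
    exact Finset.mem_image_of_mem _ hp
  have h1 : (∑ t ∈ T, ((iot t).comp (zc t) : Ch Γ (List V) →ₗ[ℤ] Ch Γ (List V)) : Ch Γ (List V) →ₗ[ℤ] Ch Γ (List V)) u
      = (LinearMap.id : Ch Γ (List V) →ₗ[ℤ] Ch Γ (List V)) u := by
    refine lin_eq _ _ _ ?_ hu
    intro l x hx
    simp only [Set.mem_ofPred_eq] at hx
    rw [LinearMap.sum_apply, Finset.sum_eq_single x]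
    · simp only [LinearMap.comp_apply, zc_bs_self, iot_bs, LinearMap.id_apply]
    · intro t _ ht
      simp only [LinearMap.comp_apply, zc_bs_ne (Ne.symm ht), map_zero]
    · intro h; exact absurd hx h
  rw [LinearMap.id_apply, LinearMap.sum_apply] at h1
  rw [← h1]
  exact Submodule.sum_mem _ (fun t _ => h t)

lemma phi_FixW {K : Subgroup Γ} {Y Y' : Set (List V)} (hs : Stable K Y) {c : List V → Γ}
    (hc : ∀ y ∈ Y, c y ∈ K) (hcc : ∀ g ∈ K, ∀ y ∈ Y, c (g • y) • (g • y) = c y • y)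
    (hY' : ∀ y ∈ Y, c y • y ∈ Y') {q : ℕ} {u : Ch Γ (List V)} (hu : u ∈ A K Y q) :
    phi c u ∈ Finsupp.supported ℤ ℤ (FixW K Y' q) := by
  refine lin_mem (phi c) _ _ ?_ hu
  rintro l x ⟨h1, h2, h3⟩
  rw [phi_bs]
  refine bs_mem ⟨by rw [← h1]; exact phi0_length _ _ _, ?_, hY' _ h3⟩
  simp only at h2 h3
  have hbase : ∀ l : List Γ, (∀ g ∈ l, g ∈ K) → c (base l x) • base l x = c x • x := by
    intro l hl
    induction l with
    | nil => simp
    | cons g l ih =>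
      rw [base_cons, hcc g (hl g (by simp)) _ (base_mem hs l (fun g hg => hl g (by simp [hg])) h3)]
      exact ih (fun g hg => hl g (by simp [hg]))
  intro g hg
  refine ⟨phi0_mem hs hc l h2 h3 g hg, ?_⟩
  simp only at hg ⊢
  clear h1
  induction l with
  | nil => simp [phi0] at hg
  | cons h l ih =>
    have hl' : ∀ g ∈ l, g ∈ K := fun g hg => h2 g (by simp [hg])
    simp only [phi0, List.mem_cons] at hg
    rcases hg with rfl | hg
    · have e1 := hbase l hl'
      have e2 := hbase (h :: l) h2
      rw [base_cons] at e2
      conv_lhs => rw [← e1]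
      rw [← e2, smul_smul, smul_smul, inv_mul_cancel_right]
    · exact ih hl' hg

end Comp

namespace SD
section Mach3
set_option linter.unusedSectionVars false

variable {F V : Type} [Field F] [AddCommGroup V] [Module F V] [FiniteDimensional F V]
variable {M : SD F V}

/-- homotopy from a chain to its conjugate -/
lemma shapiro {S : Submodule F V} {ys : V} {q k : ℕ} {c : List V → M.G}
    (hc : ∀ t ∈ Tup (M.YS S ys) k, c t ∈ M.Fix S)
    (hc' : ∀ t ∈ Tup (M.YP S ys) k, c t ∈ M.Fix (S ⊔ M.Hp))
    {u : Ch M.G (List V)} (hu : u ∈ A (M.Fix S) (Tup (M.YS S ys) k) q)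
    (hDu : D u ∈ M.BB S ys) (hDu' : D u ∈ U (M.Fix S) (Tup (M.YS S ys) k)) :
    u - phi c u ∈ M.T0 S ys k q ∧ D (phi c u) ∈ M.BB S ys := by
  have h0 : D u ∈ U (M.Fix (S ⊔ M.Hp)) (Tup (M.YP S ys) k) := by
    refine U_mono inf_le_left ?_ (U_inter hDu hDu')
    rintro t ⟨h1, h2⟩
    exact ⟨h2.1, h1⟩
  have hs : Stable (M.Fix (S ⊔ M.Hp)) (Tup (M.YP S ys) k) := smul_tup (YP_stable S ys) k
  constructor
  · rw [← htpy]
    refine Submodule.add_mem _ (Submodule.mem_sup_left (Submodule.mem_map_of_mem ?_))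
      (Submodule.mem_sup_right ?_)
    · exact H_mem_A (smul_tup (YS_stable S ys) k) hc hu
    · exact U_mono le_rfl (Tup_sub_All _ _) (H_mem_U hs hc' h0)
  · rw [D_phi]
    exact U_mono le_rfl (Tup_sub_All _ _) (phi_mem_U hs hc' h0)

lemma D_mem_any {K : Subgroup M.G} {Y : Set (List V)} (hs : Stable K Y) {q : ℕ}
    {u : Ch M.G (List V)} (hu : u ∈ A K Y q) : D u ∈ U K Y := D_mem_U hs (A_le_U _ _ _ hu)

lemma exists_c {S : Submodule F V} (ys : V) (hS : S ≤ M.perp M.Hp) :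
    ∃ c : List V → M.G, (∀ t, c t ∈ M.Fix S) ∧
      (∀ g ∈ M.Fix S, ∀ t, c (g • t) • (g • t) = c t • t) ∧
      (∀ t ∈ All (M.YP S ys), c t ∈ M.Fix (S ⊔ M.Hp)) ∧
      (∀ t, (∃ g ∈ M.Fix S, g • t ∈ All (M.YP S ys)) → c t • t ∈ All (M.YP S ys)) := by
  classical
  let O : List V → Set (List V) := fun t => {s | ∃ g ∈ M.Fix S, g • t = s}
  have hO : ∀ g ∈ M.Fix S, ∀ t, O (g • t) = O t := by
    intro g hg t
    ext s
    constructor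
    · rintro ⟨h, hh, rfl⟩
      exact ⟨h * g, (M.Fix S).mul_mem hh hg, by rw [mul_smul]⟩
    · rintro ⟨h, hh, rfl⟩
      exact ⟨h * g⁻¹, (M.Fix S).mul_mem hh ((M.Fix S).inv_mem hg), by
        rw [mul_smul, inv_smul_smul]⟩
  let R : Set (List V) → List V := fun o =>
    if h : (o ∩ All (M.YP S ys)).Nonempty then h.some else if h : o.Nonempty then h.some else []
  have hne : ∀ t, (O t).Nonempty := fun t => ⟨t, 1, (M.Fix S).one_mem, one_smul _ _⟩
  have hR : ∀ t, R (O t) ∈ O t := by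
    intro t
    by_cases h : (O t ∩ All (M.YP S ys)).Nonempty
    · simp only [R, dif_pos h]; exact h.some_mem.1
    · simp only [R, dif_neg h, dif_pos (hne t)]; exact (hne t).some_mem
  have hR' : ∀ t, (∃ g ∈ M.Fix S, g • t ∈ All (M.YP S ys)) → R (O t) ∈ All (M.YP S ys) := by
    rintro t ⟨g, hg, hgt⟩
    have h : (O t ∩ All (M.YP S ys)).Nonempty := ⟨g • t, ⟨g, hg, rfl⟩, hgt⟩
    simp only [R, dif_pos h]; exact h.some_mem.2
  have key : ∀ t, ∃ g : M.G, g ∈ M.Fix S ∧ g • t = R (O t) ∧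
      (t ∈ All (M.YP S ys) → g ∈ M.Fix (S ⊔ M.Hp)) := by
    intro t
    obtain ⟨g, hg, hgt⟩ := hR t
    by_cases ht : t ∈ All (M.YP S ys)
    · have h2 := hR' t ⟨1, (M.Fix S).one_mem, by rwa [one_smul]⟩
      obtain ⟨h, hh, hht⟩ := M.W2 hS (fun y hy => (ht y hy).2) (fun y hy => (h2 y hy).2) hg hgt
      exact ⟨h, M.Fix_anti le_sup_left hh, hht, fun _ => hh⟩
    · exact ⟨g, hg, hgt, fun h => absurd h ht⟩
  choose c h1 h2 h3 using key
  refine ⟨c, h1, ?_, h3, ?_⟩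
  · intro g hg t
    rw [h2, h2, hO g hg]
  · intro t ht
    rw [h2]
    exact hR' t ht

/-- global critical lemma -/
lemma crit {S : Submodule F V} {ys : V} {N q k : ℕ} (hF : ∃ x : F, x ≠ 0 ∧ x ≠ 1)
    (m : M.Mach S ys N) (hP : M.PP q) (hQ : M.QQ q) (hk : q + k + 1 ≤ N)
    {u : Ch M.G (List V)} (hu : u ∈ A (M.Fix S) (Tup (M.YS S ys) (k + 2)) q)
    (hDu : D u ∈ M.BB S ys) : u ∈ M.T1 S ys (k + 2) q := by
  obtain ⟨c, c1, c2, c3, c4⟩ := M.exists_c ys m.hS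
  have hst := smul_tup (YS_stable (M := M) S ys) (k + 2)
  obtain ⟨s1, s2⟩ := shapiro (c := c) (fun t _ => c1 t) (fun t ht => c3 t ht.2) hu hDu
    (D_mem_any hst hu)
  have hu' : u = (u - phi c u) + phi c u := by abel
  rw [hu']
  refine Submodule.add_mem _ (Submodule.mem_sup_left s1) ?_
  let Y' : Set (List V) := {t | t ∈ Tup (M.YS S ys) (k + 2) ∧
    ((∃ g ∈ M.Fix S, g • t ∈ All (M.YP S ys)) → t ∈ All (M.YP S ys))}
  have hW : phi c u ∈ Finsupp.supported ℤ ℤ (FixW (M.Fix S) Y' q) := by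
    refine phi_FixW hst (fun t _ => c1 t) (fun g hg t _ => c2 g hg t) ?_ hu
    intro t ht
    refine ⟨hst _ (c1 t) _ ht, ?_⟩
    rintro ⟨g, hg, hgt⟩
    exact c4 t ⟨g * c t, (M.Fix S).mul_mem hg (c1 t), by rwa [mul_smul]⟩
  apply zc_decomp
  intro t
  by_cases ht : t ∈ Y'
  swap
  · rw [zc_eq_zero (fun l hl => ht hl.2.2) hW, map_zero]
    exact Submodule.zero_mem _
  have hDz : D (zc t (phi c u)) ∈ U (M.Fix M.Hp) (Set.univ : Set (List V)) := by
    rw [D_zc t hW]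
    exact U_mono (M.Fix_anti le_sup_right) (Set.subset_univ _) (zc_mem_U t s2)
  have hz : zc t (phi c u) ∈ A (M.Fix (spn S t)) ({[]} : Set (List V)) q := by
    refine lin_mem (zc t) _ _ ?_ hW
    rintro l x ⟨h1, h2, h3⟩
    simp only at h1 h2 h3
    by_cases h : x = t
    · subst h
      rw [zc_bs_self]
      exact bs_mem_A h1 (fun g hg => M.mem_Fix_spn (h2 g hg).1 (h2 g hg).2) rfl
    · rw [zc_bs_ne h]; exact Submodule.zero_mem _
  refine local_crit hF m hP hQ hk ht.1 hz hDz ?_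
  rcases Nat.eq_zero_or_pos q with hq | hq
  · exact Or.inr hq
  left
  obtain ⟨y0, t1, rfl⟩ : ∃ y0 t1, t = y0 :: t1 := by
    cases t with
    | nil => have := ht.1.1; simp at this
    | cons a t => exact ⟨a, t, rfl⟩
  have hlen : t1.length = k + 1 := by have := ht.1.1; simpa using this
  have hb := m.big y0 (ht.1.2 y0 (by simp))
  have hb1 : M.Big (spn S (y0 :: t1)) 1 := by
    rw [spn_cons]
    exact M.L1' t1 (hb.mono (by omega))
  obtain ⟨g, hg, hgt⟩ := M.W1 m.hS _ hb1
  have h1 := hst g hg _ ht.1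
  exact fun y hy => (ht.2 ⟨g, hg, fun y hy => ⟨h1.2 y hy, hgt y hy⟩⟩ y hy).2

/-- vanishing for cycles of tuples -/
def Zvan (M : SD F V) (S : Submodule F V) (ys : V) (q k : ℕ) : Prop :=
  ∀ z ∈ A (M.Fix S) (Tup (M.YS S ys) k) q, dl z = 0 → D z ∈ M.BB S ys →
  ∃ w ∈ A (M.Fix S) (Tup (M.YS S ys) k) (q + 1), dl w = 0 ∧ z - D w ∈ M.BB S ys

lemma ys_mem {S : Submodule F V} {ys : V} {N : ℕ} (m : M.Mach S ys N) : ys ∈ M.YP S ys :=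
  ⟨⟨m.ysS, by simp⟩, m.ysH⟩

lemma lift {S : Submodule F V} {ys : V} {N q k : ℕ} (m : M.Mach S ys N)
    (hZ : q = 0 ∨ M.Zvan S ys (q - 1) (k + 1))
    {z : Ch M.G (List V)} (hz : z ∈ A (M.Fix S) (Tup (M.YS S ys) k) q) (hdl : dl z = 0)
    (hDz : D z ∈ M.BB S ys) :
    ∃ u ∈ A (M.Fix S) (Tup (M.YS S ys) (k + 1)) q, dl u = z ∧ D u ∈ M.BB S ys := by
  have hst := smul_tup (YS_stable (M := M) S ys)
  have hy := ys_mem m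
  have hu := consT_mem_A hy.1 hz
  have hdu : dl (consT ys z) = z := by rw [dl_consT, hdl, map_zero, sub_zero]
  rcases hZ with rfl | hZ
  · refine ⟨consT ys z, hu, hdu, ?_⟩
    rw [D_zero hu]
    exact Submodule.zero_mem _
  obtain _ | q := q
  · refine ⟨consT ys z, hu, hdu, ?_⟩
    rw [D_zero hu]
    exact Submodule.zero_mem _
  simp only [Nat.add_sub_cancel] at hZ
  have hcB : consT ys (D z) ∈ M.BB S ys := consT_mem_U hy hDz
  obtain ⟨w, hw, hw1, hw2⟩ := hZ (D (consT ys z) - consT ys (D z))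
    (Submodule.sub_mem _ (D_mem_A (hst _) hu) (consT_mem_A hy.1 (D_mem_A (hst _) hz)))
    (by rw [map_sub, dl_D, hdu, dl_consT, dl_D, hdl, map_zero, map_zero]; abel)
    (by
      rw [map_sub, D_D, zero_sub]
      exact Submodule.neg_mem _ (D_mem_U (smul_all (YP_stable S ys)) hcB))
  refine ⟨consT ys z - w, Submodule.sub_mem _ hu hw, by rw [map_sub, hdu, hw1, sub_zero], ?_⟩
  have := Submodule.add_mem _ hw2 hcB
  rw [map_sub]
  convert this using 1
  abel

lemma zvan {S : Submodule F V} {ys : V} {N : ℕ} (hF : ∃ x : F, x ≠ 0 ∧ x ≠ 1)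
    (m : M.Mach S ys N) (q k : ℕ) (hPQ : ∀ j ≤ q, M.PP j ∧ M.QQ j) (hk : q + k + 1 ≤ N) :
    M.Zvan S ys q (k + 1) := by
  induction q generalizing k with
  | zero =>
    intro z hz hdl hDz
    obtain ⟨u, hu, hdu, hDu⟩ := lift m (Or.inl rfl) hz hdl hDz
    have := crit hF m (hPQ 0 le_rfl).1 (hPQ 0 le_rfl).2 hk hu hDu
    obtain ⟨a, ha, b, hb, hab⟩ := Submodule.mem_sup.1 this
    obtain ⟨a1, ha1, a2, ha2, rfl⟩ := Submodule.mem_sup.1 ha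
    obtain ⟨v, hv, rfl⟩ := ha1
    obtain ⟨x, hx, rfl⟩ := hb
    refine ⟨dl v, dl_mem_A hv, dl_dl v, ?_⟩
    have h2 : z - D (dl v) = dl a2 := by
      rw [← hdu, ← hab, map_add, map_add, dl_dl, dl_D]; abel
    rw [h2]
    exact dl_mem_U ha2
  | succ q ih =>
    intro z hz hdl hDz
    obtain ⟨u, hu, hdu, hDu⟩ := lift (q := q + 1) m
      (Or.inr (ih (k + 1) (fun j hj => hPQ j (by omega)) (by omega))) hz hdl hDz
    have := crit hF m (hPQ (q + 1) le_rfl).1 (hPQ (q + 1) le_rfl).2 hk hu hDu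
    obtain ⟨a, ha, b, hb, hab⟩ := Submodule.mem_sup.1 this
    obtain ⟨a1, ha1, a2, ha2, rfl⟩ := Submodule.mem_sup.1 ha
    obtain ⟨v, hv, rfl⟩ := ha1
    obtain ⟨x, hx, rfl⟩ := hb
    refine ⟨dl v, dl_mem_A hv, dl_dl v, ?_⟩
    have h2 : z - D (dl v) = dl a2 := by
      rw [← hdu, ← hab, map_add, map_add, dl_dl, dl_D]; abel
    rw [h2]
    exact dl_mem_U ha2

lemma machine_out {S : Submodule F V} {ys : V} {q : ℕ} (hF : ∃ x : F, x ≠ 0 ∧ x ≠ 1)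
    (m : M.Mach S ys (q + 1)) (hPQ : ∀ j ≤ q, M.PP j ∧ M.QQ j) {z : Ch M.G (List V)}
    (hz : z ∈ A (M.Fix S) ({[]} : Set (List V)) (q + 1))
    (hDz : D z ∈ U (M.Fix M.Hp) (Set.univ : Set (List V))) :
    ∃ z1 ∈ A (M.Fix (S ⊔ ln ys)) ({[]} : Set (List V)) (q + 1),
    ∃ v ∈ A (M.Fix S) ({[]} : Set (List V)) (q + 2),
      z - z1 - D v ∈ U (M.Fix M.Hp) (Set.univ : Set (List V)) := by
  have hst := smul_tup (YS_stable (M := M) S ys)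
  have hz0 : z ∈ A (M.Fix S) (Tup (M.YS S ys) 0) (q + 1) := by rwa [Tup_zero]
  have hDz0 : D z ∈ M.BB S ys := by
    have h1 : D z ∈ U (M.Fix S) (Tup (M.YS S ys) 0) := D_mem_any (hst 0) hz0
    refine U_mono le_rfl ?_ (M.U_Fix_sup h1 hDz)
    rw [Tup_zero]
    rintro t rfl
    exact nil_mem_All _
  obtain ⟨u, hu, hdu, hDu⟩ := lift (q := q + 1) (k := 0) m (Or.inr (zvan hF m q 0 hPQ (by omega))) hz0
    (dl_nil (A_le_U _ _ _ hz)) hDz0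
  have hyP := ys_mem m
  have key : ∀ t : List V, ∃ g : M.G, t ∈ Tup (M.YS S ys) 1 → (g ∈ M.Fix S ∧ g • t = [ys] ∧
      (t ∈ Tup (M.YP S ys) 1 → g ∈ M.Fix (S ⊔ M.Hp))) := by
    intro t
    by_cases ht : t ∈ Tup (M.YS S ys) 1
    swap
    · exact ⟨1, fun h => absurd h ht⟩
    obtain ⟨y, rfl⟩ := List.length_eq_one_iff.1 ht.1
    have hy : y ∈ M.YS S ys := ht.2 y (by simp)
    have hperp : ys - y ∈ M.perp S := by
      have := (M.perp S).neg_mem hy.2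
      rwa [neg_sub] at this
    by_cases hp : y ∈ M.perp M.Hp
    · have aux : ∀ v, v ∉ S → v ∈ M.perp M.Hp → v ∉ S ⊔ M.Hp := by
        intro v h1 h2 h3
        obtain ⟨a, ha, b, hb, rfl⟩ := Submodule.mem_sup.1 h3
        have : b ∈ M.perp M.Hp := by
          have := (M.perp M.Hp).sub_mem h2 (m.hS ha)
          simpa using this
        rw [M.Hp_disj hb this, add_zero] at h1
        exact h1 ha
      obtain ⟨g, hg, hgy⟩ := M.witt (aux y hy.1 hp) (aux ys m.ysS m.ysH)
        (M.mem_perp_sup hperp ((M.perp M.Hp).sub_mem m.ysH hp))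
      exact ⟨g, fun _ => ⟨M.Fix_anti le_sup_left hg, by simp [hgy], fun _ => hg⟩⟩
    · obtain ⟨g, hg, hgy⟩ := M.witt hy.1 m.ysS hperp
      exact ⟨g, fun _ => ⟨hg, by simp [hgy], fun h => absurd (h.2 y (by simp)).2 hp⟩⟩
  choose c hc using key
  have hPS : Tup (M.YP S ys) 1 ⊆ Tup (M.YS S ys) 1 := fun t ht => ⟨ht.1, fun y hy => (ht.2 y hy).1⟩
  obtain ⟨s1, s2⟩ := shapiro (c := c) (fun t ht => (hc t ht).1)
    (fun t ht => (hc t (hPS ht)).2.2 ht) hu hDu (D_mem_any (hst _) hu)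
  have hW : phi c u ∈ Finsupp.supported ℤ ℤ (FixW (M.Fix S) {[ys]} (q + 1)) := by
    refine phi_FixW (hst 1) (fun t ht => (hc t ht).1) ?_ ?_ hu
    · intro g hg y hy
      rw [(hc _ (hst 1 g hg y hy)).2.1, (hc _ hy).2.1]
    · intro y hy
      exact (hc _ hy).2.1
  obtain ⟨a1, ha1, a2, ha2, hab⟩ := Submodule.mem_sup.1 s1
  obtain ⟨v, hv, rfl⟩ := ha1
  have hz1 : iot [] (phi c u) ∈ A (M.Fix (S ⊔ ln ys)) ({[]} : Set (List V)) (q + 1) := by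
    refine lin_mem (iot []) _ _ ?_ hW
    rintro l x ⟨h1, h2, h3⟩
    simp only at h1 h2 h3
    obtain rfl : x = [ys] := h3
    rw [iot_bs]
    refine bs_mem_A h1 (fun g hg => ?_) rfl
    have := M.mem_Fix_spn (h2 g hg).1 (h2 g hg).2
    rwa [spn_cons, spn_nil] at this
  have hz1' : dl (phi c u) = iot [] (phi c u) := by
    have e1 : phi c u = iot [ys] (phi c u) := by
      refine lin_eq LinearMap.id (iot [ys]) _ ?_ hW
      rintro l x ⟨h1, h2, h3⟩
      obtain rfl : x = [ys] := h3
      simp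
    have e2 : iot [ys] (phi c u) = iot [ys] (iot [] (phi c u)) := by rw [iot_iot]
    conv_lhs => rw [e1, e2]
    exact dl_iot_single ys (A_le_U _ _ _ hz1)
  refine ⟨_, hz1, dl v, ?_, ?_⟩
  · have := dl_mem_A hv
    rwa [Tup_zero] at this
  · have h2 : z - iot [] (phi c u) - D (dl v) = dl a2 := by
      rw [← hz1', ← dl_D, ← hdu, ← map_sub, ← hab, map_add]; abel
    rw [h2]
    exact U_mono (M.Fix_anti le_sup_right) (Set.subset_univ _) (dl_mem_U ha2)

end Mach3
end SD
end SpStab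

namespace SpStab
namespace SD
section Final
set_option linter.unusedSectionVars false

variable {F V : Type} [Field F] [AddCommGroup V] [Module F V] [FiniteDimensional F V]
variable {M : SD F V}

lemma PP_zero : M.PP 0 := by
  intro S _ _ z hz _
  refine ⟨0, Submodule.zero_mem _, ?_⟩
  rw [map_zero, sub_zero]
  exact U_mono le_rfl (Set.subset_univ _) (A_le_U _ _ _ (A_zero_any hz))

lemma QQ_zero : M.QQ 0 := by
  intro S _ _ ε _ _ f _ _ z hz _
  refine ⟨0, Submodule.zero_mem _, 0, Submodule.zero_mem _, ?_⟩
  rw [map_zero, sub_zero, sub_zero]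
  exact U_mono le_rfl (Set.subset_univ _) (A_le_U _ _ _ (A_zero_any hz))

lemma QQ_succ (hF : ∃ x : F, x ≠ 0 ∧ x ≠ 1) {q : ℕ} (h : ∀ j ≤ q, M.PP j ∧ M.QQ j) :
    M.QQ (q + 1) := by
  intro S hS hb ε hε hε' f hf hεf z hz hDz
  have hY : ∀ y ∈ M.YS S f, M.ω ε y = 1 := by
    intro y hy
    have h1 : M.ω ε (y - f) = 0 := hy.2 ε hε
    rw [map_sub, hεf, sub_eq_zero] at h1
    exact h1
  have m : M.Mach S f (q + 1) := by
    refine ⟨hS, hf, ?_, ?_, ?_⟩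
    · intro hfS
      have := M.skew0 (M.mem_perp.1 hε' f hfS)
      rw [hεf] at this
      exact one_ne_zero this
    · intro y hy
      exact M.L2 hb hε hε' (by rw [hY y hy]; exact one_ne_zero)
    · intro y0 hy0 y1 hy1
      left
      refine ⟨(y1 - y0) + M.ω y0 y1 • ε, ?_, ?_⟩
      · have h01 : y1 - y0 ∈ M.perp S := by
          have := (M.perp S).sub_mem hy1.2 hy0.2
          simpa using this
        refine M.mem_perp_sup ((M.perp S).add_mem h01 ((M.perp S).smul_mem _ hε'))
          (M.mem_perp_ln ?_)
        have h2 := M.skew y0 ε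
        rw [hY y0 hy0] at h2
        simp [h2]
      · have : (y1 - y0) + M.ω y0 y1 • ε - (y1 - y0) = M.ω y0 y1 • ε := by abel
        rw [this]
        exact S.smul_mem _ hε
  exact machine_out hF m h hz hDz

/-- constant conjugations compose -/
lemma phi_const_mul (g h : M.G) {K : Subgroup M.G} {z : Ch M.G (List V)}
    (hz : z ∈ U K ({[]} : Set (List V))) :
    phi (fun _ => g * h) z = phi (fun _ => g) (phi (fun _ => h) z) := by
  rw [← LinearMap.comp_apply]
  refine lin_eq _ _ _ ?_ hz
  rintro l x ⟨-, h1⟩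
  obtain rfl : x = [] := h1
  simp only [LinearMap.comp_apply, phi_bs, phi0_const, smul_list_nil, List.map_map]
  congr 3

lemma phi_const_fix {g : M.G} {K : Subgroup M.G} (hg : ∀ h ∈ K, g * h = h * g)
    {z : Ch M.G (List V)} (hz : z ∈ U K ({[]} : Set (List V))) : phi (fun _ => g) z = z := by
  have h1 := phi_iot_comm hg [] hz
  rw [iot_nil hz, smul_list_nil, iot_nil hz] at h1
  exact h1

lemma phi_const_A {g : M.G} {K : Subgroup M.G} (hg : g ∈ K) {q : ℕ}
    {z : Ch M.G (List V)} (hz : z ∈ A K ({[]} : Set (List V)) q) :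
    phi (fun _ => g) z ∈ A K ({[]} : Set (List V)) q := by
  refine lin_mem (phi (fun _ => g)) _ _ ?_ hz
  rintro l x ⟨h1, h2, h3⟩
  simp only at h1 h2
  rw [phi_bs]
  exact bs_mem_A (by rw [phi0_length, h1]) (phi0_mem (stable_nil K) (fun _ _ => hg) l h2 h3)
    (stable_nil K _ hg _ h3)

section Comm
variable {K L : Subgroup M.G} {q : ℕ} {z : Ch M.G (List V)}

lemma chi_mul (hz : z ∈ A K ({[]} : Set (List V)) q) (hD : D z ∈ U L ({[]} : Set (List V)))
    {g h : M.G} (hg : g ∈ K) (hh : h ∈ K) (hhL : ∀ l ∈ L, h * l = l * h) :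
    (z - phi (fun _ => g * h) z) - ((z - phi (fun _ => g) z) + (z - phi (fun _ => h) z))
      ∈ (A K ({[]} : Set (List V)) (q + 1)).map D := by
  set y := z - phi (fun _ => h) z with hy
  have hyA : y ∈ A K ({[]} : Set (List V)) q := Submodule.sub_mem _ hz (phi_const_A hh hz)
  have hDy : D y = 0 := by
    rw [hy, map_sub, D_phi, phi_const_fix hhL hD, sub_self]
  have h1 : D (H (fun _ => g) y) = y - phi (fun _ => g) y := by
    have := htpy (fun _ => g) y
    rw [hDy, map_zero, add_zero] at this
    exact this
  have h2 : (z - phi (fun _ => g * h) z) - ((z - phi (fun _ => g) z) + y)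
      = - D (H (fun _ => g) y) := by
    rw [h1, phi_const_mul g h (A_le_U _ _ _ hz)]
    conv_lhs => rw [hy]
    rw [hy, map_sub]
    abel
  rw [h2]
  exact Submodule.neg_mem _ (Submodule.mem_map_of_mem
    (H_mem_A (stable_nil K) (fun _ _ => hg) hyA))

lemma chi_comm (hz : z ∈ A K ({[]} : Set (List V)) q) (hD : D z ∈ U L ({[]} : Set (List V)))
    {s e e' : M.G} (hs : s ∈ K) (he : e ∈ K) (he' : e' ∈ K) (hsL : ∀ l ∈ L, s * l = l * s)
    (heL : ∀ l ∈ L, e * l = l * e) (hc : s * e = e' * e * s) :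
    z - phi (fun _ => e') z ∈ (A K ({[]} : Set (List V)) (q + 1)).map D := by
  have h1 := chi_mul hz hD hs he heL
  have h2 := chi_mul hz hD (K.mul_mem he' he) hs hsL
  have h3 := chi_mul hz hD he' he heL
  rw [hc] at h1
  have := Submodule.sub_mem _ h1 (Submodule.add_mem _ h2 h3)
  convert this using 1
  abel

end Comm

/-- swap of two hyperbolic planes acts trivially -/
lemma swap_trick (hF : ∃ x : F, x ≠ 0 ∧ x ≠ 1) {S : Submodule F V} (hS : S ≤ M.perp M.Hp) {e1 f1 : V}
    (he : e1 ∈ M.perp S) (hf : f1 ∈ M.perp S) (heH : e1 ∈ M.perp M.Hp) (hfH : f1 ∈ M.perp M.Hp)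
    (h1 : M.ω e1 f1 = 1) {q : ℕ} {z : Ch M.G (List V)}
    (hz : z ∈ A (M.Fix (S ⊔ ln e1 ⊔ ln f1)) ({[]} : Set (List V)) q)
    (hDz : D z ∈ U (M.Fix M.Hp) (Set.univ : Set (List V))) :
    ∃ w ∈ A (M.Fix S) ({[]} : Set (List V)) (q + 1),
      z - D w ∈ U (M.Fix M.Hp) (Set.univ : Set (List V)) := by
  obtain ⟨a, ha0, ha1⟩ := hF
  have ha1' : a - 1 ≠ 0 := sub_ne_zero.2 ha1
  have hH := M.perp_swap hS
  have he0S : M.e0 ∈ M.perp S := hH M.e0_mem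
  have hf0S : M.f0 ∈ M.perp S := hH M.f0_mem
  have w1 : M.ω M.e0 e1 = 0 := heH _ M.e0_mem
  have w2 : M.ω M.f0 e1 = 0 := heH _ M.f0_mem
  have w3 : M.ω M.e0 f1 = 0 := hfH _ M.e0_mem
  have w4 : M.ω M.f0 f1 = 0 := hfH _ M.f0_mem
  have w1' := M.skew0 w1
  have w2' := M.skew0 w2
  have w3' := M.skew0 w3
  have w4' := M.skew0 w4
  have w5 := M.hef
  have w6 : M.ω M.f0 M.e0 = -1 := by rw [M.skew, w5]
  have w7 : M.ω f1 e1 = -1 := by rw [M.skew, h1]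
  set L := M.Fix (S ⊔ ln e1 ⊔ ln f1 ⊔ M.Hp) with hL
  have hLe1 : ∀ l ∈ L, l • e1 = e1 := fun l hl =>
    hl e1 (Submodule.mem_sup_left (Submodule.mem_sup_left (Submodule.mem_sup_right (ln_mem _))))
  have hLf1 : ∀ l ∈ L, l • f1 = f1 := fun l hl =>
    hl f1 (Submodule.mem_sup_left (Submodule.mem_sup_right (ln_mem _)))
  have hLe0 : ∀ l ∈ L, l • M.e0 = M.e0 := fun l hl => hl _ (Submodule.mem_sup_right M.e0_mem)
  have hLf0 : ∀ l ∈ L, l • M.f0 = M.f0 := fun l hl => hl _ (Submodule.mem_sup_right M.f0_mem)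
  have hzK : z ∈ A (M.Fix S) ({[]} : Set (List V)) q :=
    A_mono (M.Fix_anti (le_trans le_sup_left le_sup_left)) subset_rfl _ hz
  have hD : D z ∈ U L ({[]} : Set (List V)) :=
    M.U_Fix_sup (D_mem_any (stable_nil _) hz) hDz
  have eicFix : ∀ (a b : V) (hab : M.ω a b = 0) (c : F), a ∈ M.perp S → b ∈ M.perp S →
      M.eic a b hab c ∈ M.Fix S := by
    intro a b hab c ha hb v hv
    exact M.eic_fix a b hab c (ha v hv) (hb v hv)
  have scFix : ∀ (a b : V) (hab : M.ω a b = 1) (c : F) (hc : c ≠ 0), a ∈ M.perp S →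
      b ∈ M.perp S → M.scale a b hab c hc ∈ M.Fix S := by
    intro a b hab c hc ha hb v hv
    exact M.scale_fix a b hab c hc (M.skew0 (ha v hv)) (hb v hv)
  have hE : ∀ c : F, z - phi (fun _ => M.eic M.e0 f1 w3 c) z
      ∈ (A (M.Fix S) ({[]} : Set (List V)) (q + 1)).map D := by
    intro c
    have hc := M.eic_commutator M.e0 f1 M.f0 w3 w5 w4' a ha0 ((a - 1)⁻¹ * c)
    rw [mul_inv_cancel_left₀ ha1'] at hc
    exact chi_comm hzK hD (scFix _ _ _ _ _ he0S hf0S) (eicFix _ _ _ _ he0S hf)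
      (eicFix _ _ _ _ he0S hf) (fun l hl => M.scale_comm _ _ _ _ _ (hLe0 l hl) (hLf0 l hl))
      (fun l hl => M.eic_comm _ _ _ _ (hLe0 l hl) (hLf1 l hl)) hc
  have hE' : ∀ c : F, z - phi (fun _ => M.eic e1 M.f0 w2' c) z
      ∈ (A (M.Fix S) ({[]} : Set (List V)) (q + 1)).map D := by
    intro c
    have hc := M.eic_commutator e1 M.f0 f1 w2' h1 w4 a ha0 ((a - 1)⁻¹ * c)
    rw [mul_inv_cancel_left₀ ha1'] at hc
    exact chi_comm hzK hD (scFix _ _ _ _ _ he hf) (eicFix _ _ _ _ he hf0S)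
      (eicFix _ _ _ _ he hf0S) (fun l hl => M.scale_comm _ _ _ _ _ (hLe1 l hl) (hLf1 l hl))
      (fun l hl => M.eic_comm _ _ _ _ (hLe1 l hl) (hLf0 l hl)) hc
  set E1 := M.eic M.e0 f1 w3 1 with hE1
  set E2 := M.eic e1 M.f0 w2' (-1) with hE2
  have hE1K : E1 ∈ M.Fix S := eicFix _ _ _ _ he0S hf
  have hE2K : E2 ∈ M.Fix S := eicFix _ _ _ _ he hf0S
  have hE1L : ∀ l ∈ L, E1 * l = l * E1 := fun l hl => M.eic_comm _ _ _ _ (hLe0 l hl) (hLf1 l hl)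
  have hE2L : ∀ l ∈ L, E2 * l = l * E2 := fun l hl => M.eic_comm _ _ _ _ (hLe1 l hl) (hLf0 l hl)
  have c1 := chi_mul hzK hD hE1K hE2K hE2L
  have c2 := chi_mul hzK hD ((M.Fix S).mul_mem hE1K hE2K) hE1K hE1L
  have c3 := Submodule.add_mem _ (Submodule.add_mem _ c1 c2)
    (Submodule.add_mem _ (Submodule.add_mem _ (hE 1) (hE' (-1))) (hE 1))
  rw [← hE1, ← hE2] at c3
  set s := E1 * E2 * E1 with hs
  have hse : s • e1 = M.e0 := by
    rw [hs, mul_smul, mul_smul, hE1, hE2]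
    simp only [eic_smul]
    simp [*]
  have hsf : s • f1 = M.f0 := by
    rw [hs, mul_smul, mul_smul, hE1, hE2]
    simp only [eic_smul]
    simp [*]
  obtain ⟨w, hw, hDw⟩ : z - phi (fun _ => s) z
      ∈ (A (M.Fix S) ({[]} : Set (List V)) (q + 1)).map D := by
    convert c3 using 1
    abel
  refine ⟨w, hw, ?_⟩
  have : z - D w = phi (fun _ => s) z := by rw [hDw]; abel
  rw [this]
  refine lin_mem (phi (fun _ => s)) _ _ ?_ hz
  rintro l x ⟨-, h2, -⟩
  simp only at h2
  rw [phi_bs, phi0_const]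
  refine bs_mem_U ?_ trivial
  intro g hg
  obtain ⟨k, hk, rfl⟩ := List.mem_map.1 hg
  have hk1 : k • e1 = e1 := h2 k hk e1 (Submodule.mem_sup_left (Submodule.mem_sup_right (ln_mem _)))
  have hk2 : k • f1 = f1 := h2 k hk f1 (Submodule.mem_sup_right (ln_mem _))
  refine M.mem_Fix_Hp ?_ ?_
  · rw [← hse, mul_smul, mul_smul, inv_smul_smul, hk1]
  · rw [← hsf, mul_smul, mul_smul, inv_smul_smul, hk2]

lemma PP_succ (hF : ∃ x : F, x ≠ 0 ∧ x ≠ 1) {q : ℕ} (h : ∀ j ≤ q, M.PP j ∧ M.QQ j)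
    (hQ : M.QQ (q + 1)) : M.PP (q + 1) := by
  intro S hS hb z hz hDz
  have hH := M.perp_swap hS
  have b1 : M.Big (S ⊔ ln M.e0) 1 := M.L1 (hb.mono (by omega)) _
  have b2 : M.Big (S ⊔ ln M.e0 ⊔ ln M.f0) 1 := by
    refine M.L2 b1 (r := M.e0) (mem_sup_ln _) ?_ (by rw [M.hef]; exact one_ne_zero)
    exact M.mem_perp_sup (hH M.e0_mem) (M.mem_perp_ln (M.self _))
  obtain ⟨e1, he1, f1, hf1, hef⟩ := M.L3 b2
  have hp1 : ∀ v ∈ M.perp (S ⊔ ln M.e0 ⊔ ln M.f0), v ∈ M.perp S ∧ v ∈ M.perp M.Hp := by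
    intro v hv
    refine ⟨M.perp_anti (le_trans le_sup_left le_sup_left) hv, M.mem_perp_Hp.2 ⟨?_, ?_⟩⟩
    · exact hv _ (Submodule.mem_sup_left (mem_sup_ln _))
    · exact hv _ (mem_sup_ln _)
  obtain ⟨he, heH⟩ := hp1 e1 he1
  obtain ⟨hf, hfH⟩ := hp1 f1 hf1
  have hY : ∀ y ∈ M.YS S e1, y ∈ M.perp S := by
    intro y hy
    have := (M.perp S).add_mem hy.2 he
    simpa using this
  have m : M.Mach S e1 (q + 1) := by
    refine ⟨hS, heH, ?_, fun y _ => M.L1 hb y, ?_⟩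
    · intro heS
      have := M.mem_perp.1 hf e1 heS
      rw [hef] at this
      exact one_ne_zero this
    · intro y0 hy0 y1 hy1
      by_cases h0 : M.ω y0 y1 = 0
      · left
        refine ⟨y1 - y0, ?_, by simp⟩
        refine M.mem_perp_sup ((M.perp S).sub_mem (hY _ hy1) (hY _ hy0)) (M.mem_perp_ln ?_)
        simp [h0]
      · right
        exact M.L2 (M.L1 hb y0) (mem_sup_ln y0)
          (M.mem_perp_sup (hY _ hy0) (M.mem_perp_ln (M.self _))) h0
  have stepD : ∀ a b v : Ch M.G (List V), D a ∈ U (M.Fix M.Hp) (Set.univ : Set (List V)) →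
      a - b - D v ∈ U (M.Fix M.Hp) (Set.univ : Set (List V)) →
      D b ∈ U (M.Fix M.Hp) (Set.univ : Set (List V)) := by
    intro a b v h1 h2
    have h3 := D_mem_U (stable_univ _) h2
    rw [map_sub, map_sub, D_D, sub_zero] at h3
    have := Submodule.sub_mem _ h1 h3
    simpa using this
  obtain ⟨z1, hz1, v1, hv1, r1⟩ := machine_out hF m h hz hDz
  have hDz1 := stepD _ _ _ hDz r1
  obtain ⟨z2, hz2, v2, hv2, r2⟩ := hQ (S ⊔ ln e1) (sup_le hS (ln_le heH)) (M.L1 hb e1) e1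
    (mem_sup_ln _) (M.mem_perp_sup he (M.mem_perp_ln (M.self _))) f1 hfH hef z1 hz1 hDz1
  have hDz2 := stepD _ _ _ hDz1 r2
  obtain ⟨w, hw, r3⟩ := swap_trick hF hS he hf heH hfH hef hz2 hDz2
  refine ⟨v1 + v2 + w, Submodule.add_mem _ (Submodule.add_mem _ hv1
    (A_mono (M.Fix_anti le_sup_left) subset_rfl _ hv2)) hw, ?_⟩
  have := Submodule.add_mem _ (Submodule.add_mem _ r1 r2) r3
  convert this using 1
  simp only [map_add]
  abel

theorem PQ (hF : ∃ x : F, x ≠ 0 ∧ x ≠ 1) (q : ℕ) : ∀ j ≤ q, M.PP j ∧ M.QQ j := by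
  induction q with
  | zero =>
    intro j hj
    obtain rfl : j = 0 := by omega
    exact ⟨PP_zero, QQ_zero⟩
  | succ q ih =>
    intro j hj
    rcases Nat.lt_or_ge j (q + 1) with h | h
    · exact ih j (by omega)
    · obtain rfl : j = q + 1 := by omega
      have := QQ_succ hF ih
      exact ⟨PP_succ hF ih this, this⟩

end Final
end SD
end SpStab

namespace SpStab
section Trans
set_option linter.unusedSectionVars false
open GroupHomologyBar

variable {Γ V : Type} [Group Γ] [MulAction Γ V]

/-- comparison with the function model of the bar complex -/
noncomputable def TT (q : ℕ) : chains Γ ℤ q →ₗ[ℤ] Ch Γ (List V) :=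
  Finsupp.lmapDomain ℤ ℤ (fun v => (List.ofFn v, []))

lemma TT_single {q : ℕ} (v : Fin q → Γ) :
    TT (V := V) q (Finsupp.single v 1) = bs (List.ofFn v) [] := by
  simp [TT, bs, Finsupp.mapDomain_single]

lemma chains_hom {M : Type} [AddCommGroup M] {q : ℕ} (f g : chains Γ ℤ q →ₗ[ℤ] M)
    (h : ∀ v, f (Finsupp.single v 1) = g (Finsupp.single v 1)) : f = g := by
  apply Finsupp.lhom_ext
  intro v a
  have : (Finsupp.single v a : chains Γ ℤ q) = a • Finsupp.single v 1 := by simp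
  rw [this, map_smul, map_smul, h]

lemma TT_inj (q : ℕ) : Function.Injective (TT (Γ := Γ) (V := V) q) := by
  apply Finsupp.mapDomain_injective
  intro v w h
  exact List.ofFn_injective (Prod.ext_iff.1 h).1

lemma contract_zero {n : ℕ} (g : Fin (n + 2) → Γ) :
    List.ofFn (Fin.contractNth 0 (· * ·) g)
      = (g 0 * g 1) :: List.ofFn (Fin.tail (Fin.tail g)) := by
  rw [List.ofFn_succ]
  congr 1

lemma contract_succ {n : ℕ} (j : Fin (n + 1)) (g : Fin (n + 2) → Γ) :
    List.ofFn (Fin.contractNth j.succ (· * ·) g)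
      = g 0 :: List.ofFn (Fin.contractNth j (· * ·) (Fin.tail g)) := by
  rw [List.ofFn_succ]
  congr 1
  · congr 1
    funext k
    simp only [Fin.contractNth, Fin.val_succ, Fin.tail]
    split_ifs <;> first | rfl | omega

lemma E_ofFn {n : ℕ} (g : Fin (n + 1) → Γ) :
    E (g 0) (List.ofFn (Fin.tail g)) ([] : List V)
      = ∑ j : Fin (n + 1), ((-1 : ℤ) ^ (j : ℕ)) •
          bs (List.ofFn (Fin.contractNth j (· * ·) g)) ([] : List V) := by
  induction n with
  | zero => simp [E]
  | succ n ih =>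
    have ih' := ih (Fin.tail g)
    rw [List.ofFn_succ, E, Fin.sum_univ_succ]
    have e1 : Fin.tail g 0 = g 1 := rfl
    have e2 : (fun i => Fin.tail g (Fin.succ i)) = Fin.tail (Fin.tail g) := rfl
    rw [e2, ih', map_sum, contract_zero, e1, sub_eq_add_neg, ← Finset.sum_neg_distrib]
    simp only [contract_succ, map_smul, pre_bs, Fin.val_succ, pow_succ, Fin.val_zero, pow_zero,
      one_smul, mul_neg, mul_one, neg_smul]

lemma D_TT {q : ℕ} (x : chains Γ ℤ (q + 1)) :
    D (TT (V := V) (q + 1) x) = TT q (d Γ ℤ q x) := by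
  have : D ∘ₗ TT (V := V) (q + 1) = TT q ∘ₗ d Γ ℤ q := by
    apply chains_hom
    intro v
    simp only [LinearMap.comp_apply, TT_single, D_bs, d_single, map_add, map_sum, map_smul]
    rw [List.ofFn_succ, D0]
    have e2 : (fun i => v (Fin.succ i)) = Fin.tail v := rfl
    rw [e2, E_ofFn, sub_eq_add_neg, ← Finset.sum_neg_distrib]
    simp only [pow_succ, mul_neg, mul_one, neg_smul]
  exact congrArg (fun f => f x) this

lemma dd_zero {q : ℕ} (x : chains Γ ℤ (q + 2)) : d Γ ℤ q (d Γ ℤ (q + 1) x) = 0 := by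
  apply TT_inj (V := Γ)
  rw [← D_TT, ← D_TT, D_D, map_zero]

lemma TT_mem {q : ℕ} (K : Subgroup Γ) (hK : ∀ g, g ∈ K) (x : chains Γ ℤ q) :
    TT q x ∈ A K ({[]} : Set (List V)) q := by
  induction x using Finsupp.induction_linear with
  | zero => simp
  | add a b ha hb => rw [map_add]; exact Submodule.add_mem _ ha hb
  | single v a =>
    have : (Finsupp.single v a : chains Γ ℤ q) = a • Finsupp.single v 1 := by simp
    rw [this, map_smul, TT_single]
    exact Submodule.smul_mem _ _ (bs_mem_A (by simp) (fun g _ => hK g) rfl)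

lemma chainsMap_inj {G : Type} [Group G] (φ : G →* Γ) (hφ : Function.Injective φ) (q : ℕ) :
    Function.Injective (chainsMap ℤ φ q) := by
  apply Finsupp.mapDomain_injective
  intro v w h
  funext i
  exact hφ (congrFun h i)

lemma TT_chainsMap_mem {G : Type} [Group G] (φ : G →* Γ) {q : ℕ} (x : chains G ℤ q) :
    TT q (chainsMap ℤ φ q x) ∈ A φ.range ({[]} : Set (List V)) q := by
  induction x using Finsupp.induction_linear with
  | zero => simp
  | add a b ha hb => rw [map_add, map_add]; exact Submodule.add_mem _ ha hb
  | single v a =>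
    have : (Finsupp.single v a : chains G ℤ q) = a • Finsupp.single v 1 := by simp
    rw [this, map_smul, map_smul, chainsMap_single, TT_single]
    refine Submodule.smul_mem _ _ (bs_mem_A (by simp) (fun g hg => ?_) rfl)
    obtain ⟨i, rfl⟩ := List.mem_ofFn.1 hg
    exact ⟨v i, rfl⟩

lemma exists_TT {G : Type} [Group G] (φ : G →* Γ) {q : ℕ} {z : Ch Γ (List V)}
    (hz : z ∈ A φ.range ({[]} : Set (List V)) q) : ∃ x, TT q (chainsMap ℤ φ q x) = z := by
  have : z ∈ LinearMap.range ((TT (V := V) q) ∘ₗ chainsMap ℤ φ q) := by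
    refine lin_mem LinearMap.id _ _ ?_ hz
    rintro l x ⟨h1, h2, h3⟩
    simp only at h1 h2
    obtain rfl : x = [] := h3
    subst h1
    choose c hc using fun i : Fin l.length => h2 (l.get i) (List.get_mem l i)
    refine ⟨Finsupp.single c 1, ?_⟩
    simp only [LinearMap.comp_apply, chainsMap_single, TT_single, LinearMap.id_apply]
    congr 2
    have : φ ∘ c = l.get := funext hc
    rw [this, List.ofFn_get]
  obtain ⟨x, hx⟩ := this
  exact ⟨x, hx⟩

lemma A_inter {X : Type} [MulAction Γ X] {K L : Subgroup Γ} {Y Y' : Set X} {q : ℕ} {z : Ch Γ X}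
    (h1 : z ∈ A K Y q) (h2 : z ∈ U L Y') : z ∈ A L Y q := by
  intro p hp
  have a1 := h1 hp
  have a2 := h2 hp
  exact ⟨a1.1, a2.1, a1.2.2⟩

end Trans

section Stab
open GroupHomologyBar
variable {F V : Type} [Field F] [AddCommGroup V] [Module F V] [FiniteDimensional F V]

lemma exists_TT' {Γ : Type} [Group Γ] [MulAction Γ V] {K : Subgroup Γ} {q : ℕ}
    {z : Ch Γ (List V)} (hz : z ∈ A K ({[]} : Set (List V)) q) : ∃ x : chains Γ ℤ q, TT q x = z := by
  obtain ⟨x, hx⟩ := exists_TT (MonoidHom.id Γ)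
    (A_mono (K' := (MonoidHom.id Γ).range) (fun g _ => ⟨g, rfl⟩) subset_rfl q hz)
  exact ⟨_, hx⟩

lemma mem_Fix_bot (M : SD F V) (g : M.G) : g ∈ M.Fix ⊥ := by
  intro v hv
  rw [Submodule.mem_bot] at hv
  subst hv
  exact smul_zero g

/-- relative vanishing in the function model -/
lemma rel_van (hF : ∃ x : F, x ≠ 0 ∧ x ≠ 1) (M : SD F V) {G : Type} [Group G] (φ : G →* M.G)
    (hr : φ.range = M.Fix M.Hp) {q : ℕ} (hq : 2 * (q + 1) ≤ Module.finrank F V)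
    (x : chains M.G ℤ q)
    (hx : D (TT (V := V) q x) ∈ U (M.Fix M.Hp) (Set.univ : Set (List V))) :
    ∃ w y, x = d M.G ℤ q w + chainsMap ℤ φ q y := by
  have hP := (SD.PQ (M := M) hF q q le_rfl).1
  have hT := TT_mem (V := V) (M.Fix ⊥) (mem_Fix_bot M) x
  obtain ⟨w, hw, hb⟩ := hP ⊥ bot_le (M.big_bot hq) _ hT hx
  have hb' := A_inter (Submodule.sub_mem _ hT (D_mem_A (stable_nil _) hw)) hb
  rw [← hr] at hb'
  obtain ⟨y, hy⟩ := exists_TT φ hb'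
  obtain ⟨w', rfl⟩ := exists_TT' hw
  refine ⟨w', y, TT_inj (V := V) q ?_⟩
  rw [map_add, hy, ← D_TT]
  abel

lemma chainsMap_d {G G' : Type} [Group G] [Group G'] (φ : G →* G') {q : ℕ}
    (y : chains G ℤ (q + 1)) :
    d G' ℤ q (chainsMap ℤ φ (q + 1) y) = chainsMap ℤ φ q (d G ℤ q y) :=
  congrArg (fun f => f y) (d_chainsMap ℤ φ q)

lemma surj (hF : ∃ x : F, x ≠ 0 ∧ x ≠ 1) (M : SD F V) {G : Type} [Group G] (φ : G →* M.G)
    (hi : Function.Injective φ)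
    (hr : φ.range = M.Fix M.Hp) {q : ℕ} (hq : 2 * (q + 1) ≤ Module.finrank F V) :
    Function.Surjective (inducedMap ℤ φ q) := by
  intro a
  obtain ⟨⟨x, hx⟩, rfl⟩ := Submodule.Quotient.mk_surjective _ a
  have hD : D (TT (V := V) q x) = 0 := by
    cases q with
    | zero => exact D_zero (TT_mem ⊤ (fun _ => trivial) x)
    | succ q =>
      have hx' : d M.G ℤ q x = 0 := hx
      rw [D_TT, hx', map_zero]
  obtain ⟨w, y, hxy⟩ := rel_van hF M φ hr hq x (by rw [hD]; exact Submodule.zero_mem _)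
  have hy : y ∈ cycles G ℤ q := by
    cases q with
    | zero => trivial
    | succ q =>
      have hx' : d M.G ℤ q x = 0 := hx
      change d G ℤ q y = 0
      apply chainsMap_inj φ hi
      rw [hxy, map_add, dd_zero, zero_add, chainsMap_d] at hx'
      rw [hx', map_zero]
  refine ⟨Submodule.Quotient.mk ⟨y, hy⟩, ?_⟩
  change Submodule.Quotient.mk (cyclesMap ℤ φ q ⟨y, hy⟩) = _
  rw [Submodule.Quotient.eq]
  refine ⟨-w, ?_⟩
  change d M.G ℤ q (-w) = chainsMap ℤ φ q y - x
  rw [hxy, map_neg]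
  abel

lemma inj (hF : ∃ x : F, x ≠ 0 ∧ x ≠ 1) (M : SD F V) {G : Type} [Group G] (φ : G →* M.G)
    (hi : Function.Injective φ)
    (hr : φ.range = M.Fix M.Hp) {q : ℕ} (hq : 2 * (q + 2) ≤ Module.finrank F V) :
    Function.Injective (inducedMap ℤ φ q) := by
  rw [injective_iff_map_eq_zero]
  intro a ha
  obtain ⟨⟨x, hx⟩, rfl⟩ := Submodule.Quotient.mk_surjective _ a
  change Submodule.Quotient.mk (cyclesMap ℤ φ q ⟨x, hx⟩) = _ at ha
  rw [Submodule.Quotient.mk_eq_zero] at ha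
  obtain ⟨u, hu⟩ := ha
  change d M.G ℤ q u = chainsMap ℤ φ q x at hu
  obtain ⟨w, y, huy⟩ := rel_van hF M φ hr (q := q + 1) (by omega) u (by
    rw [D_TT, hu, ← hr]
    exact U_mono le_rfl (Set.subset_univ _) (A_le_U _ _ _ (TT_chainsMap_mem φ x)))
  rw [Submodule.Quotient.mk_eq_zero]
  refine ⟨y, ?_⟩
  change d G ℤ q y = x
  apply chainsMap_inj φ hi
  rw [← hu, huy, map_add, dd_zero, zero_add, chainsMap_d]

end Stab

section Concrete
variable (F : Type) [Field F]

lemma pairForm_add_left (n : ℕ) (x x' y : Fin n → F × F) :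
    pairForm F (sympPair F) n (x + x') y
      = pairForm F (sympPair F) n x y + pairForm F (sympPair F) n x' y := by
  simp only [pairForm, ← Finset.sum_add_distrib]
  refine Finset.sum_congr rfl (fun i _ => ?_)
  simp [sympPair]; ring

lemma pairForm_smul_left (n : ℕ) (c : F) (x y : Fin n → F × F) :
    pairForm F (sympPair F) n (c • x) y = c • pairForm F (sympPair F) n x y := by
  simp only [pairForm, Finset.smul_sum]
  refine Finset.sum_congr rfl (fun i _ => ?_)
  simp [sympPair]; ring

lemma pairForm_alt (n : ℕ) (x y : Fin n → F × F) :
    pairForm F (sympPair F) n x y = - pairForm F (sympPair F) n y x := by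
  simp only [pairForm, ← Finset.sum_neg_distrib]
  refine Finset.sum_congr rfl (fun i _ => ?_)
  simp [sympPair]; ring

noncomputable def formB (n : ℕ) : LinearMap.BilinForm F (Fin n → F × F) :=
  LinearMap.mk₂ F (pairForm F (sympPair F) n) (pairForm_add_left F n) (pairForm_smul_left F n)
    (by
      intro x y y'
      rw [pairForm_alt, pairForm_add_left, pairForm_alt F n y x, pairForm_alt F n y' x]; ring)
    (by
      intro c x y
      rw [pairForm_alt, pairForm_smul_left, pairForm_alt F n y x]; simp)

lemma formB_apply (n : ℕ) (x y : Fin n → F × F) :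
    formB F n x y = pairForm F (sympPair F) n x y := rfl

lemma pairForm_single (n : ℕ) (x : Fin n → F × F) (i : Fin n) (w : F × F) :
    pairForm F (sympPair F) n x (Pi.single i w) = sympPair F (x i) w := by
  rw [pairForm, Finset.sum_eq_single i]
  · simp
  · intro j _ hj
    simp [Pi.single_eq_of_ne hj, sympPair]
  · simp

lemma formB_alt (n : ℕ) : (formB F n).IsAlt := by
  intro x
  rw [formB_apply, pairForm]
  refine Finset.sum_eq_zero (fun i _ => ?_)
  simp [sympPair]; ring

lemma formB_nd (n : ℕ) : (formB F n).Nondegenerate := by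
  have h1 : ∀ x, (∀ y, formB F n x y = 0) → x = 0 := by
    intro x hx
    funext i
    have a1 := hx (Pi.single i (1, 0))
    have a2 := hx (Pi.single i (0, 1))
    rw [formB_apply, pairForm_single] at a1 a2
    simp [sympPair] at a1 a2
    exact Prod.ext a2 a1
  refine ⟨h1, ?_⟩
  intro y hy
  refine h1 y (fun x => ?_)
  have := hy x
  rw [formB_apply] at this ⊢
  rw [pairForm_alt, this, neg_zero]

/-- the concrete symplectic data -/
noncomputable def MM (n : ℕ) : SD F (Fin (n + 1) → F × F) where
  ω := formB F (n + 1)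
  alt := formB_alt F (n + 1)
  nd := formB_nd F (n + 1)
  G := bilinIsoms F (pairForm F (sympPair F) (n + 1))
  hG := fun _ => Iff.rfl
  e0 := Pi.single (Fin.last n) (1, 0)
  f0 := Pi.single (Fin.last n) (0, 1)
  hef := by
    rw [formB_apply, pairForm_single]
    simp [sympPair]

lemma stab_inj (n : ℕ) : Function.Injective (bilinStab F (sympPair F) n) := by
  intro g h hgh
  refine Subtype.ext (LinearEquiv.ext fun p => ?_)
  have h1 : stabAut F n g.1 = stabAut F n h.1 := congrArg Subtype.val hgh
  have h2 := congrArg (fun f => f ((lastSplit F n).symm (p, 0))) h1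
  simp only [stabAut_symm_apply] at h2
  exact (Prod.ext_iff.1 ((lastSplit F n).symm.injective h2)).1

lemma stab_last (n : ℕ) (w : F × F) :
    (lastSplit F n).symm ((0 : Fin n → F × F), w) = Pi.single (Fin.last n) w := by
  apply (lastSplit F n).injective
  rw [LinearEquiv.apply_symm_apply]
  refine Prod.ext (funext fun i => ?_) ?_
  · change 0 = (Pi.single (Fin.last n) w : Fin (n + 1) → F × F) i.castSucc
    rw [Pi.single_eq_of_ne (Fin.castSucc_lt_last i).ne]
  · change w = (Pi.single (Fin.last n) w : Fin (n + 1) → F × F) (Fin.last n)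
    simp

lemma stab_range (n : ℕ) :
    (bilinStab F (sympPair F) n : _ →* (MM F n).G).range = (MM F n).Fix (MM F n).Hp := by
  ext g
  constructor
  · rintro ⟨h, rfl⟩
    have key : ∀ w : F × F, stabAut F n h.1 (Pi.single (Fin.last n) w) = Pi.single (Fin.last n) w := by
      intro w
      rw [← stab_last, stabAut_symm_apply, map_zero]
    exact (MM F n).mem_Fix_Hp (key _) (key _)
  · intro hg
    have g1 : g.1 (Pi.single (Fin.last n) (1, 0)) = Pi.single (Fin.last n) (1, 0) :=
      hg _ (MM F n).e0_mem
    have g2 : g.1 (Pi.single (Fin.last n) (0, 1)) = Pi.single (Fin.last n) (0, 1) :=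
      hg _ (MM F n).f0_mem
    have hw : ∀ w : F × F, g.1 (Pi.single (Fin.last n) w) = Pi.single (Fin.last n) w := by
      intro w
      have : (Pi.single (Fin.last n) w : Fin (n + 1) → F × F)
          = w.1 • (Pi.single (Fin.last n) ((1 : F), (0 : F)) : Fin (n + 1) → F × F)
            + w.2 • (Pi.single (Fin.last n) ((0 : F), (1 : F)) : Fin (n + 1) → F × F) := by
        rw [← Pi.single_smul, ← Pi.single_smul, ← Pi.single_add]
        congr 1
        ext <;> simp
      rw [this, map_add, map_smul, map_smul, g1, g2]
    have hg' : ∀ v w, pairForm F (sympPair F) (n + 1) (g.1 v) (g.1 w)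
        = pairForm F (sympPair F) (n + 1) v w := g.2
    have hlast : ∀ v, (g.1 v) (Fin.last n) = v (Fin.last n) := by
      intro v
      have a1 := hg' v (Pi.single (Fin.last n) (1, 0))
      have a2 := hg' v (Pi.single (Fin.last n) (0, 1))
      rw [hw, pairForm_single, pairForm_single] at a1 a2
      simp [sympPair] at a1 a2
      exact Prod.ext a2 a1
    have hinv : ∀ v, (g.1.symm v) (Fin.last n) = v (Fin.last n) := by
      intro v
      have hthis := hlast (g.1.symm v)
      rw [g.1.apply_symm_apply] at hthis
      exact hthis.symm
    have hsp : ∀ v : Fin (n + 1) → F × F, (lastSplit F n v).2 = v (Fin.last n) := fun _ => rfl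
    let L1 : (Fin n → F × F) →ₗ[F] (Fin (n + 1) → F × F) :=
      (lastSplit F n).symm.toLinearMap ∘ₗ LinearMap.inl F _ _
    let R1 : (Fin (n + 1) → F × F) →ₗ[F] (Fin n → F × F) :=
      LinearMap.fst F _ _ ∘ₗ (lastSplit F n).toLinearMap
    have hRL : ∀ p, R1 (L1 p) = p := by
      intro p
      simp [R1, L1]
    have hL0 : ∀ p, (L1 p) (Fin.last n) = 0 := by
      intro p
      rw [← hsp (L1 p)]
      simp [L1]
    have hLR : ∀ v : Fin (n + 1) → F × F, v (Fin.last n) = 0 → L1 (R1 v) = v := by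
      intro v hv
      apply (lastSplit F n).injective
      refine Prod.ext ?_ ?_
      · simp [R1, L1]
      · rw [hsp, hsp, hL0, hv]
    let h : (Fin n → F × F) ≃ₗ[F] (Fin n → F × F) :=
      LinearEquiv.ofLinearMap (R1 ∘ₗ g.1.toLinearMap ∘ₗ L1) (R1 ∘ₗ g.1.symm.toLinearMap ∘ₗ L1)
        (by
          refine LinearMap.ext fun p => ?_
          change R1 (g.1 (L1 (R1 (g.1.symm (L1 p))))) = p
          rw [hLR _ (by rw [hinv, hL0]), g.1.apply_symm_apply, hRL])
        (by
          refine LinearMap.ext fun p => ?_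
          change R1 (g.1.symm (L1 (R1 (g.1 (L1 p))))) = p
          rw [hLR _ (by rw [hlast, hL0]), g.1.symm_apply_apply, hRL])
    have hh : ∀ p, L1 (h p) = g.1 (L1 p) := by
      intro p
      change L1 (R1 (g.1 (L1 p))) = _
      rw [hLR _ (by rw [hlast, hL0])]
    have hform : ∀ p p', pairForm F (sympPair F) (n + 1) (L1 p) (L1 p')
        = pairForm F (sympPair F) n p p' := by
      intro p p'
      change pairForm F (sympPair F) (n + 1) ((lastSplit F n).symm (p, 0))
        ((lastSplit F n).symm (p', 0)) = _
      rw [pairForm_snoc]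
      simp [sympPair]
    refine ⟨⟨h, ?_⟩, ?_⟩
    · intro p p'
      rw [← hform, hh, hh, hg', hform]
    · refine Subtype.ext (LinearEquiv.ext fun v => ?_)
      change stabAut F n h v = g.1 v
      obtain ⟨⟨p, w⟩, rfl⟩ : ∃ x, (lastSplit F n).symm x = v :=
        ⟨lastSplit F n v, (lastSplit F n).symm_apply_apply v⟩
      have split : ∀ (p : Fin n → F × F) (w : F × F), (lastSplit F n).symm (p, w)
          = L1 p + Pi.single (Fin.last n) w := by
        intro p w
        rw [← stab_last]
        change _ = (lastSplit F n).symm (p, 0) + _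
        rw [← map_add]
        simp
      rw [stabAut_symm_apply, split, split, map_add, hw, hh]

lemma finrank_V (n : ℕ) : Module.finrank F (Fin n → F × F) = 2 * n := by
  rw [Module.finrank_pi_fintype]
  simp [Module.finrank_prod]
  ring

end Concrete
end SpStab

open GroupHomologyBar in
/-- Homological stability for the symplectic groups over a field other than `𝔽₂`.
Here `Sp_{2n}(F)` is realized as the group `bilinIsoms F (pairForm F (sympPair F) n)` of
linear automorphisms of `F^{2n} = (F²)ⁿ` preserving the nondegenerate alternating form
`ω(v, w) = ∑ᵢ (vᵢ w_{n+i} - v_{n+i} wᵢ)`, where the `i`-th copy of `F²` carries the pair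
of coordinates `(vᵢ, v_{n+i})`.  The stabilization map `Sp_{2n}(F) → Sp_{2n+2}(F)`,
extending an automorphism by the identity on an added hyperbolic plane, induces an
isomorphism on integral group homology `H_d` for `d ≤ n - 1` and a surjection for `d = n`. -/
theorem Sp_homology_stability (F : Type) [Field F] (hF : ∃ x : F, x ≠ 0 ∧ x ≠ 1)
    (n : ℕ) (hn : 1 ≤ n) :
    (∀ d : ℕ, d ≤ n - 1 →
      Function.Bijective (inducedMap ℤ (bilinStab F (sympPair F) n) d)) ∧
    Function.Surjective (inducedMap ℤ (bilinStab F (sympPair F) n) n) := by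
  have hi := SpStab.stab_inj F n
  have hr := SpStab.stab_range F n
  have hfr := SpStab.finrank_V F (n + 1)
  have hs : ∀ d : ℕ, d ≤ n →
      Function.Surjective (inducedMap ℤ (bilinStab F (sympPair F) n) d) := fun d hd =>
    SpStab.surj hF (SpStab.MM F n) (bilinStab F (sympPair F) n) hi hr (by omega)
  refine ⟨fun d hd => ⟨?_, hs d (by omega)⟩, hs n le_rfl⟩
  exact SpStab.inj hF (SpStab.MM F n) (bilinStab F (sympPair F) n) hi hr (by omega)
end

section
/- Let F be a field and let Q be a nondegenerate quadratic form on a k-dimensional F-vector space V. (1) If there exists a ∈ F with a² = −1, then Q ⊕ Q is equivalent to the hyperbolic quadratic form q_H^k on F^{2k}. (2) If there exist a, b ∈ F with a² + b² = −1, then Q^{⊕4} (the orthogonal sum of four copies of Q, on V⁴) is equivalent to the hyperbolic quadratic form q_H^{2k} on F^{4k}. -/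
/-- The hyperbolic quadratic form `q_H^n` on `F^{2n}`, `v ↦ ∑_{i=1}^n vᵢ v_{n+i}`. -/
def hypQ (F : Type) [Field F] (n : ℕ) (v : Fin (2 * n) → F) : F :=
  ∑ i : Fin n, v ⟨i.1, by have := i.isLt; omega⟩ * v ⟨n + i.1, by have := i.isLt; omega⟩

theorem hyp_aux (F : Type) [Field F] (W : Type) [AddCommGroup W] [Module F W]
    [FiniteDimensional F W] (n : ℕ) (hn : Module.finrank F W = n) (q : QuadraticForm F W)
    (hq : ∀ v : W, (∀ w : W, QuadraticMap.polar q w v = 0) → v = 0)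
    (J : W →ₗ[F] W) (hJ : ∀ w, q (J w) = - q w) :
    ∃ e : (W × W) ≃ₗ[F] (Fin (2 * n) → F), ∀ x : W × W, hypQ F n (e x) = q x.1 + q x.2 := by
  obtain ⟨B, hB⟩ := LinearMap.BilinMap.toQuadraticMap_surjective q
  have hB' : ∀ w, B w w = q w := fun w => by rw [← hB]; rfl
  let b : Module.Basis (Fin n) F W := Module.finBasisOfFinrankEq F W hn
  let u : (W × W) →ₗ[F] W := LinearMap.snd F W W - J ∘ₗ LinearMap.fst F W W
  let f : (W × W) →ₗ[F] W →ₗ[F] F := q.polarBilin ∘ₗ J ∘ₗ LinearMap.fst F W W + B ∘ₗ u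
  let g : (W × W) →ₗ[F] (Fin (2 * n) → F) := LinearMap.pi fun j =>
    if h : j.1 < n then (LinearMap.applyₗ (b ⟨j.1, h⟩)) ∘ₗ f
    else (b.coord ⟨j.1 - n, by have := j.isLt; omega⟩) ∘ₗ u
  have g1 : ∀ x (i : Fin n), g x ⟨i.1, by have := i.isLt; omega⟩ = f x (b i) := by
    intro x i
    simp [g]
  have g2 : ∀ x (i : Fin n), g x ⟨n + i.1, by have := i.isLt; omega⟩ = b.repr (u x) i := by
    intro x i
    simp [g]
  have hinj : Function.Injective g := by
    rw [← LinearMap.ker_eq_bot, LinearMap.ker_eq_bot']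
    intro x hx
    have hu : u x = 0 := by
      apply b.repr.injective
      ext i
      rw [← g2, hx]; simp
    have hf : f x = 0 := by
      apply b.ext
      intro i
      rw [← g1, hx]; simp
    have hf' : ∀ w, QuadraticMap.polar q (J x.1) w = 0 := by
      intro w
      have := congrArg (fun l => l w) hf
      simpa [f, hu] using this
    have h1 : x.1 = 0 := by
      apply hq
      intro w
      have h := hf' (J w)
      rw [QuadraticMap.polar_comm]
      simp only [QuadraticMap.polar, ← map_add, hJ] at h ⊢
      linear_combination -h
    have h2 : x.2 = 0 := by
      simpa [u, h1] using hu
    exact Prod.ext h1 h2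
  have hd : Module.finrank F (W × W) = Module.finrank F (Fin (2 * n) → F) := by
    simp [hn]; ring
  refine ⟨LinearEquiv.ofInjectiveOfFinrankEq g hinj hd, fun x => ?_⟩
  have h0 : hypQ F n (g x) = f x (u x) := by
    unfold hypQ
    conv_rhs => rw [← b.sum_repr (u x), map_sum]
    refine Finset.sum_congr rfl fun i _ => ?_
    rw [g1, g2, map_smul, smul_eq_mul, mul_comm]
  change hypQ F n (g x) = _
  rw [h0]
  have h3 : x.2 = J x.1 + u x := by simp [u]
  have h4 : f x (u x) = QuadraticMap.polar q (J x.1) (u x) + q (u x) := by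
    simp [f, hB']
  rw [h4, QuadraticMap.polar, ← h3, hJ]
  ring

/-- Let `Q` be a nondegenerate quadratic form on a `k`-dimensional vector space `V` over
a field `F`.
(1) If `-1` is a square in `F`, then `Q ⊕ Q` is equivalent to the hyperbolic quadratic
form `q_H^k` on `F^{2k}`.
(2) If `-1` is a sum of two squares in `F`, then the orthogonal sum `Q^{⊕4}` of four
copies of `Q` (on `V⁴`) is equivalent to the hyperbolic quadratic form `q_H^{2k}` on
`F^{4k}`. -/
theorem quadratic_double_equiv_hyperbolic (F : Type) [Field F]
    (V : Type) [AddCommGroup V] [Module F V] [FiniteDimensional F V]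
    (k : ℕ) (hk : Module.finrank F V = k) (Q : QuadraticForm F V)
    (hQ : ∀ v : V, (∀ w : V, QuadraticMap.polar Q w v = 0) → v = 0) :
    ((∃ a : F, a ^ 2 = -1) →
      ∃ e : (V × V) ≃ₗ[F] (Fin (2 * k) → F),
        ∀ x : V × V, hypQ F k (e x) = Q x.1 + Q x.2) ∧
    ((∃ a b : F, a ^ 2 + b ^ 2 = -1) →
      ∃ e : (Fin 4 → V) ≃ₗ[F] (Fin (2 * (2 * k)) → F),
        ∀ x : Fin 4 → V, hypQ F (2 * k) (e x) = ∑ i : Fin 4, Q (x i)) := by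
  constructor
  · rintro ⟨a, ha⟩
    refine hyp_aux F V k hk Q hQ (a • LinearMap.id) fun w => ?_
    have : a * a = -1 := by rw [← ha]; ring
    simp [QuadraticMap.map_smul, this]
  · rintro ⟨a, b, hab⟩
    let q : QuadraticForm F (V × V) := QuadraticMap.prod Q Q
    have hqa : ∀ w, q w = Q w.1 + Q w.2 := fun w => rfl
    let J : (V × V) →ₗ[F] (V × V) :=
      (a • LinearMap.fst F V V + b • LinearMap.snd F V V).prod
        (b • LinearMap.fst F V V + (-a) • LinearMap.snd F V V)
    have hs : ∀ (c d : F) (v w : V), Q (c • v + d • w)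
        = c * c * Q v + d * d * Q w + c * d * QuadraticMap.polar Q v w := by
      intro c d v w
      rw [QuadraticMap.map_add Q, QuadraticMap.map_smul, QuadraticMap.map_smul,
        QuadraticMap.polar_smul_left, QuadraticMap.polar_smul_right]
      simp only [smul_eq_mul]; ring
    obtain ⟨e, he⟩ := hyp_aux F (V × V) (2 * k) (by simp [hk]; ring) q (by
      intro v hv
      refine Prod.ext (hQ _ fun w => ?_) (hQ _ fun w => ?_)
      · have h := hv (w, 0)
        simp [QuadraticMap.polar, hqa] at h ⊢
        linear_combination h
      · have h := hv (0, w)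
        simp [QuadraticMap.polar, hqa] at h ⊢
        linear_combination h) J (by
      intro w
      have : J w = (a • w.1 + b • w.2, b • w.1 + (-a) • w.2) := rfl
      rw [this, hqa, hqa, hs, hs]
      linear_combination (Q w.1 + Q w.2) * hab)
    let r : (Fin 4 → V) ≃ₗ[F] (V × V) × (V × V) :=
      { toFun := fun x => ((x 0, x 1), (x 2, x 3))
        invFun := fun y => ![y.1.1, y.1.2, y.2.1, y.2.2]
        map_add' := fun _ _ => rfl
        map_smul' := fun _ _ => rfl
        left_inv := fun x => by ext i; fin_cases i <;> rfl
        right_inv := fun y => rfl }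
    refine ⟨r.trans e, fun x => ?_⟩
    rw [LinearEquiv.trans_apply, he, Fin.sum_univ_four, hqa, hqa, ← add_assoc]
    rfl
end

section
/- Let F be a field, V a finite-dimensional F-vector space, and Q a quadratic form on V (possibly degenerate). If U and W are subspaces of V that are each maximal (with respect to inclusion) among totally isotropic subspaces of Q, then dim U = dim W. -/
theorem iso_dim_le_aux {F : Type} [Field F]
    {V : Type} [AddCommGroup V] [Module F V] [FiniteDimensional F V]
    (Q : QuadraticForm F V) (U W : Submodule F V)
    (hU : ∀ u ∈ U, Q u = 0) (hW : ∀ w ∈ W, Q w = 0)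
    (hUmax : ∀ U' : Submodule F V, U ≤ U' → (∀ u ∈ U', Q u = 0) → U' = U) :
    Module.finrank F ↥W ≤ Module.finrank F ↥U := by
  let φ : W →ₗ[F] Module.Dual F U := (Q.polarBilin).domRestrict₁₂ W U
  have hφ : ∀ (w : W) (u : U), φ w u = Q ((w : V) + u) - Q w - Q u := fun w u => rfl
  have hker : LinearMap.ker φ ≤ U.comap W.subtype := by
    intro w hw
    have hw0 : ∀ u ∈ U, Q ((w : V) + u) = 0 := by
      intro u hu
      have h1 := hφ w ⟨u, hu⟩
      rw [LinearMap.mem_ker.1 hw] at h1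
      simpa [hU u hu, hW w w.2] using h1.symm
    have h2 := hUmax (U ⊔ F ∙ (w : V)) le_sup_left (by
      intro x hx
      obtain ⟨u, hu, y, hy, rfl⟩ := Submodule.mem_sup.1 hx
      obtain ⟨a, rfl⟩ := Submodule.mem_span_singleton.1 hy
      by_cases ha : a = 0
      · simpa [ha] using hU u hu
      · have h3 : u + a • (w : V) = a • ((w : V) + a⁻¹ • u) := by
          rw [smul_add, smul_smul, mul_inv_cancel₀ ha, one_smul, add_comm]
        rw [h3, QuadraticMap.map_smul, hw0 _ (U.smul_mem _ hu), smul_zero])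
    change (w : V) ∈ U
    rw [← h2]
    exact Submodule.mem_sup_right (Submodule.mem_span_singleton_self _)
  have hrange : LinearMap.range φ ≤ (W.comap U.subtype).dualAnnihilator := by
    rintro _ ⟨w, rfl⟩
    rw [Submodule.mem_dualAnnihilator]
    intro u hu
    have hu' : (u : V) ∈ W := hu
    rw [hφ, hW _ (W.add_mem w.2 hu'), hW _ w.2, hW _ hu']
    simp
  have e1 := LinearMap.finrank_range_add_finrank_ker φ
  have e2 := Submodule.finrank_mono hker
  have e3 := Submodule.finrank_mono hrange
  have e4 := Subspace.finrank_add_finrank_dualAnnihilator_eq (W.comap U.subtype)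
  have e5 : Module.finrank F (U.comap W.subtype) = Module.finrank F (W.comap U.subtype) := by
    rw [← Submodule.finrank_map_subtype_eq W, ← Submodule.finrank_map_subtype_eq U,
      Submodule.map_comap_subtype, Submodule.map_comap_subtype, inf_comm]
  omega

/-- In a finite-dimensional vector space `V` over a field `F` equipped with a (possibly
degenerate) quadratic form `Q`, any two subspaces that are maximal with respect to
inclusion among the totally isotropic subspaces of `Q` have the same dimension. -/
theorem maximal_isotropic_same_dim (F : Type) [Field F]
    (V : Type) [AddCommGroup V] [Module F V] [FiniteDimensional F V]
    (Q : QuadraticForm F V) (U W : Submodule F V)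
    (hU : ∀ u ∈ U, Q u = 0) (hW : ∀ w ∈ W, Q w = 0)
    (hUmax : ∀ U' : Submodule F V, U ≤ U' → (∀ u ∈ U', Q u = 0) → U' = U)
    (hWmax : ∀ W' : Submodule F V, W ≤ W' → (∀ w ∈ W', Q w = 0) → W' = W) :
    Module.finrank F ↥U = Module.finrank F ↥W := by
  exact le_antisymm (iso_dim_le_aux Q W U hW hU hWmax) (iso_dim_le_aux Q U W hU hW hUmax)
end
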